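/- arXiv:2407.09830 — 3 statements merged into one kernel-verified Lean document; each statement's English description precedes it below -/
import Mathlib

section
/- Let a∈ℝ\{0}, b>0, n∈ℕ, α≥0 with n>α+1. Then for every f∈C_α^n([b,∞)) the limit I_{a,b}(f) := lim_{ε→0⁺} ∫_b^∞ e^{−ε(y−y₀)²} e^{iay²} f(y) dy exists and its value is independent of y₀∈ℝ. Moreover, there exists a constant D_{a,b,n,α}≥0, depending continuously on a and b and satisfying D_{a,b,n,α} = O(1/|a|) as |a|→∞, such that for every 0<ε≤1 and y₀∈ℝ one has |I_{a,b}^{ε,y₀}(f)| ≤ D_{a,b,n,α}·‖f‖_{C_α^n([b,∞))} and |I_{a,b}(f)| ≤ D_{a,b,n,α}·‖f‖_{C_α^n([b,∞))}. -/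
open Set Filter MeasureTheory Topology

noncomputable section

/-- Membership in the space `C_α^n([b,∞))`: `f` is `n`-times continuously differentiable
on `[b,∞)` and its `n`-th derivative satisfies a polynomial bound `M·y^α`. -/
def MemCnAlpha (b : ℝ) (n : ℕ) (α : ℝ) (f : ℝ → ℂ) : Prop :=
  ContDiffOn ℝ n f (Set.Ici b) ∧
    ∃ M : ℝ, 0 ≤ M ∧ ∀ y ∈ Set.Ici b, ‖iteratedDerivWithin n f (Set.Ici b) y‖ ≤ M * y ^ α

/-- The norm on the space `C_α^n([b,∞))`. -/
def CnAlphaNorm (b : ℝ) (n : ℕ) (α : ℝ) (f : ℝ → ℂ) : ℝ :=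
  (∑ k ∈ Finset.range n, ‖iteratedDerivWithin k f (Set.Ici b) b‖ / b ^ ((n : ℝ) - k + α)) +
    ⨆ y : Set.Ici b, ‖iteratedDerivWithin n f (Set.Ici b) y‖ / (y : ℝ) ^ α


/-- The regularized integral `I_{a,b}^{ε,y₀}(f) = ∫_b^∞ e^{-ε(y-y₀)²} e^{iay²} f(y) dy`. -/
def Iab (a b ε y₀ : ℝ) (f : ℝ → ℂ) : ℂ :=
  ∫ y in Set.Ioi b,
    Complex.exp (-(ε : ℂ) * (y - y₀) ^ 2) * Complex.exp (Complex.I * a * y ^ 2) * f y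

/-!
Write `e^{-ε(y-y₀)²} e^{iay²} = e^{ψ(y)}` and `I_{m,k} = ∫_b^∞ e^ψ (ψ')^{-m} f^{(k)}`, so that
`I_{a,b}^{ε,y₀}(f) = I_{0,0}`. Since `ψ''` is constant, one integration by parts gives
`I_{m,k} = -[e^ψ (ψ')^{-m-1} f^{(k)}](b) - I_{m+1,k+1} + (m + 1) ψ'' I_{m+2,k}`,
which raises `m + k` by two. As `|ψ'(y)| ≥ 2|a|y` and `|f^{(k)}(y)| ≤ ‖f‖ y^{n-k+α}`, the integrals
with `m + k ≥ 2n` converge absolutely, uniformly in `ε` and `y₀`; dominated convergence and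
the recursion carry this back to `I_{0,0}`.
-/

section Weight

/-- The complex phase `ψ(y) = -ε(y-y₀)² + iay²` of the regularized oscillatory integral. -/
def quadPhase (a ε y₀ y : ℝ) : ℂ := -(ε : ℂ) * (y - y₀) ^ 2 + Complex.I * a * y ^ 2

/-- The derivative `ψ'(y) = -2ε(y-y₀) + 2iay` of `quadPhase`. -/
def quadPhaseDeriv (a ε y₀ y : ℝ) : ℂ := -2 * (ε : ℂ) * (y - y₀) + 2 * Complex.I * a * y

/-- The weights `e^ψ / (ψ')^m`, which repeated integration by parts against `e^ψ` produces. -/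
def oscWeight (m : ℕ) (a ε y₀ y : ℝ) : ℂ :=
  Complex.exp (quadPhase a ε y₀ y) / quadPhaseDeriv a ε y₀ y ^ m

variable {a ε y₀ y : ℝ}

theorem quadPhase_re (a ε y₀ y : ℝ) : (quadPhase a ε y₀ y).re = -ε * (y - y₀) ^ 2 := by
  simp [quadPhase, pow_two]

theorem hasDerivAt_quadPhase (a ε y₀ y : ℝ) :
    HasDerivAt (quadPhase a ε y₀) (quadPhaseDeriv a ε y₀ y) y := by
  have hid : HasDerivAt (fun y : ℝ => (y : ℂ)) 1 y := Complex.ofRealCLM.hasDerivAt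
  refine ((((hid.sub_const (y₀ : ℂ)).pow 2).const_mul (-(ε : ℂ))).add
    ((hid.pow 2).const_mul (Complex.I * a))).congr_deriv ?_
  simp only [quadPhaseDeriv]
  ring

theorem hasDerivAt_quadPhaseDeriv (a ε y₀ y : ℝ) :
    HasDerivAt (quadPhaseDeriv a ε y₀) (-2 * (ε : ℂ) + 2 * Complex.I * a) y := by
  have hid : HasDerivAt (fun y : ℝ => (y : ℂ)) 1 y := Complex.ofRealCLM.hasDerivAt
  refine (((hid.sub_const (y₀ : ℂ)).const_mul (-2 * (ε : ℂ))).add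
    (hid.const_mul (2 * Complex.I * a))).congr_deriv ?_
  ring

theorem two_mul_abs_mul_abs_le_norm_quadPhaseDeriv (a ε y₀ y : ℝ) :
    2 * |a| * |y| ≤ ‖quadPhaseDeriv a ε y₀ y‖ := by
  have him : (quadPhaseDeriv a ε y₀ y).im = 2 * a * y := by simp [quadPhaseDeriv]
  simpa [him, abs_mul] using Complex.abs_im_le_norm (quadPhaseDeriv a ε y₀ y)

theorem quadPhaseDeriv_ne_zero (ha : a ≠ 0) (hy : y ≠ 0) : quadPhaseDeriv a ε y₀ y ≠ 0 :=
  norm_pos_iff.1 <| (by positivity : 0 < 2 * |a| * |y|).trans_le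
    (two_mul_abs_mul_abs_le_norm_quadPhaseDeriv a ε y₀ y)

theorem norm_oscWeight_le_exp_mul (m : ℕ) (ha : a ≠ 0) (hy : y ≠ 0) :
    ‖oscWeight m a ε y₀ y‖ ≤ Real.exp (-ε * (y - y₀) ^ 2) / (|a| * |y|) ^ m := by
  have hψ' : |a| * |y| ≤ ‖quadPhaseDeriv a ε y₀ y‖ := by
    have := two_mul_abs_mul_abs_le_norm_quadPhaseDeriv a ε y₀ y
    have : 0 < |a| * |y| := by positivity
    linarith
  rw [oscWeight, norm_div, norm_pow, Complex.norm_exp, quadPhase_re]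
  gcongr

theorem norm_oscWeight_le (m : ℕ) (ha : a ≠ 0) (hε : 0 ≤ ε) (hy : 0 < y) :
    ‖oscWeight m a ε y₀ y‖ ≤ |a| ^ (-m : ℤ) * y ^ (-m : ℝ) := by
  have hexp : Real.exp (-ε * (y - y₀) ^ 2) ≤ 1 := by
    rw [Real.exp_le_one_iff, neg_mul, neg_nonpos]
    positivity
  calc ‖oscWeight m a ε y₀ y‖ ≤ Real.exp (-ε * (y - y₀) ^ 2) / (|a| * |y|) ^ m :=
        norm_oscWeight_le_exp_mul m ha hy.ne'
    _ ≤ 1 / (|a| * |y|) ^ m := by gcongr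
    _ = |a| ^ (-m : ℤ) * y ^ (-m : ℝ) := by
        rw [abs_of_pos hy, Real.rpow_neg hy.le, Real.rpow_natCast, zpow_neg, zpow_natCast,
          mul_pow, one_div, mul_inv]

theorem oscWeight_isBigO_exp_neg_mul_sq (m : ℕ) (ha : a ≠ 0) (hε : 0 < ε) (y₀ : ℝ) :
    oscWeight m a ε y₀ =O[atTop] fun y => Real.exp (-(ε / 2) * y ^ 2) := by
  refine Asymptotics.IsBigO.of_bound (Real.exp (ε * y₀ ^ 2) / |a| ^ m) ?_
  filter_upwards [eventually_ge_atTop 1] with y hy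
  have hy₀ : 0 < y := one_pos.trans_le hy
  have hexp : Real.exp (-ε * (y - y₀) ^ 2) ≤
      Real.exp (ε * y₀ ^ 2) * Real.exp (-(ε / 2) * y ^ 2) := by
    rw [← Real.exp_add, Real.exp_le_exp]
    nlinarith [mul_nonneg hε.le (sq_nonneg (y - 2 * y₀))]
  calc ‖oscWeight m a ε y₀ y‖ ≤ Real.exp (-ε * (y - y₀) ^ 2) / (|a| * |y|) ^ m :=
        norm_oscWeight_le_exp_mul m ha hy₀.ne'
    _ ≤ Real.exp (ε * y₀ ^ 2) * Real.exp (-(ε / 2) * y ^ 2) / (|a| * 1) ^ m := by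
        rw [abs_of_pos hy₀]
        gcongr
    _ = Real.exp (ε * y₀ ^ 2) / |a| ^ m * ‖Real.exp (-(ε / 2) * y ^ 2)‖ := by
        rw [Real.norm_of_nonneg (Real.exp_nonneg _), mul_one]
        ring

theorem hasDerivAt_oscWeight_succ (m : ℕ) (hψ' : quadPhaseDeriv a ε y₀ y ≠ 0) :
    HasDerivAt (oscWeight (m + 1) a ε y₀)
      (oscWeight m a ε y₀ y
        - (m + 1) * (-2 * (ε : ℂ) + 2 * Complex.I * a) * oscWeight (m + 2) a ε y₀ y) y := by
  refine ((hasDerivAt_quadPhase a ε y₀ y).cexp.div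
    ((hasDerivAt_quadPhaseDeriv a ε y₀ y).pow (m + 1)) (pow_ne_zero _ hψ')).congr_deriv ?_
  simp only [oscWeight, Pi.pow_apply, Nat.add_sub_cancel, Nat.cast_add, Nat.cast_one]
  field_simp
  ring

theorem continuousOn_oscWeight (m : ℕ) (ha : a ≠ 0) :
    ContinuousOn (oscWeight m a ε y₀) {0}ᶜ := by
  refine ContinuousOn.div ?_ ?_ fun y hy => pow_ne_zero _ (quadPhaseDeriv_ne_zero ha hy)
  · unfold quadPhase
    fun_prop
  · unfold quadPhaseDeriv
    fun_prop

theorem tendsto_oscWeight (m : ℕ) (ha : a ≠ 0) (y₀ : ℝ) (hy : y ≠ 0) :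
    Tendsto (fun ε => oscWeight m a ε y₀ y) (𝓝[>] 0) (𝓝 (oscWeight m a 0 0 y)) := by
  have hcont : ContinuousAt (fun ε => oscWeight m a ε y₀ y) 0 := by
    refine ContinuousAt.div ?_ ?_ (pow_ne_zero _ (quadPhaseDeriv_ne_zero ha hy))
    · unfold quadPhase
      fun_prop
    · unfold quadPhaseDeriv
      fun_prop
  have hzero : oscWeight m a 0 y₀ y = oscWeight m a 0 0 y := by
    simp [oscWeight, quadPhase, quadPhaseDeriv]
  exact hzero ▸ hcont.tendsto.mono_left nhdsWithin_le_nhds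

end Weight

section OscIntegral

variable {E : Type*} [NormedAddCommGroup E] [NormedSpace ℂ E]

/-- The regularized integral of `g` over `[b, ∞)` against the weight `e^ψ / (ψ')^m`; for `m = 0` it
is `Iab a b ε y₀ g`. -/
def oscIntegral (m : ℕ) (a b ε y₀ : ℝ) (g : ℝ → E) : E :=
  ∫ y in Ioi b, oscWeight m a ε y₀ y • g y

/-- The integrals `oscIntegral m a b ε y₀ g` converge as `ε → 0⁺`, to a limit that does not depend
on the centre `y₀` of the regularization. -/
def HasRegularizedLimit (m : ℕ) (a b : ℝ) (g : ℝ → E) : Prop :=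
  ∃ L : E, ∀ y₀ : ℝ, Tendsto (fun ε => oscIntegral m a b ε y₀ g) (𝓝[>] 0) (𝓝 L)

/-- Continuous functions on `[b, ∞)` of at most polynomial growth, a class on which every
regularized integral converges absolutely. -/
structure HasPolynomialGrowth (b : ℝ) (g : ℝ → E) : Prop where
  continuousOn : ContinuousOn g (Ici b)
  exists_isBigO : ∃ β : ℝ, g =O[atTop] fun y => y ^ β

variable {a b ε y₀ β C : ℝ} {g g' : ℝ → E}

theorem Iab_eq_oscIntegral (a b ε y₀ : ℝ) (f : ℝ → ℂ) :
    Iab a b ε y₀ f = oscIntegral 0 a b ε y₀ f := by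
  simp only [Iab, oscIntegral, oscWeight, quadPhase, Complex.exp_add, pow_zero, div_one,
    smul_eq_mul]

theorem HasPolynomialGrowth.continuousOn_oscWeight_smul (hg : HasPolynomialGrowth b g) (m : ℕ)
    (ha : a ≠ 0) (hb : 0 < b) : ContinuousOn (fun y => oscWeight m a ε y₀ y • g y) (Ici b) :=
  ((continuousOn_oscWeight m ha).mono fun _ hy => (hb.trans_le hy).ne').smul hg.continuousOn

theorem HasPolynomialGrowth.integrableOn_oscWeight_smul (hg : HasPolynomialGrowth b g) (m : ℕ)
    (ha : a ≠ 0) (hb : 0 < b) (hε : 0 < ε) :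
    IntegrableOn (fun y => oscWeight m a ε y₀ y • g y) (Ioi b) := by
  obtain ⟨β, hβ⟩ := hg.exists_isBigO
  have hdecay : (fun y => oscWeight m a ε y₀ y • g y) =O[atTop] fun y =>
      Real.exp (-(1 / 2) * y) := by
    refine ((oscWeight_isBigO_exp_neg_mul_sq m ha hε y₀).smul hβ).trans ?_
    simpa only [smul_eq_mul, mul_comm] using
      (rpow_mul_exp_neg_mul_sq_isLittleO_exp_neg (half_pos hε) β).isBigO
  exact (((hg.continuousOn_oscWeight_smul m ha hb).locallyIntegrableOn
    measurableSet_Ici).integrableOn_of_isBigO_atTop hdecay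
      ⟨Ioi 0, Ioi_mem_atTop 0, exp_neg_integrableOn_Ioi 0 one_half_pos⟩).mono_set
    Ioi_subset_Ici_self

theorem norm_oscWeight_smul_le (m : ℕ) (ha : a ≠ 0) (hε : 0 ≤ ε) {y : ℝ} (hy : 0 < y)
    (hg : ‖g y‖ ≤ C * y ^ β) :
    ‖oscWeight m a ε y₀ y • g y‖ ≤ |a| ^ (-m : ℤ) * y ^ (β - m) * C :=
  calc ‖oscWeight m a ε y₀ y • g y‖ ≤ |a| ^ (-m : ℤ) * y ^ (-m : ℝ) * (C * y ^ β) := by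
        rw [norm_smul]
        gcongr
        exact norm_oscWeight_le m ha hε hy
    _ = |a| ^ (-m : ℤ) * y ^ (β - m) * C := by
        rw [sub_eq_add_neg, Real.rpow_add hy]
        ring

theorem norm_oscIntegral_le {m : ℕ} (ha : a ≠ 0) (hb : 0 < b) (hε : 0 ≤ ε) (hβ : β + 1 < m)
    (hg : ∀ y ∈ Ioi b, ‖g y‖ ≤ C * y ^ β) :
    ‖oscIntegral m a b ε y₀ g‖ ≤ (m - (β + 1))⁻¹ * |a| ^ (-m : ℤ) * b ^ (β + 1 - m) * C := by
  have hexp : β - m < -1 := by linarith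
  have hint : IntegrableOn (fun y => |a| ^ (-m : ℤ) * y ^ (β - m) * C) (Ioi b) :=
    ((integrableOn_Ioi_rpow_of_lt hexp hb).const_mul _).mul_const C
  calc ‖oscIntegral m a b ε y₀ g‖ ≤ ∫ y in Ioi b, |a| ^ (-m : ℤ) * y ^ (β - m) * C :=
        norm_integral_le_of_norm_le hint <| (ae_restrict_iff' measurableSet_Ioi).2 <|
          .of_forall fun y hy => norm_oscWeight_smul_le m ha hε (hb.trans hy) (hg y hy)
    _ = (m - (β + 1))⁻¹ * |a| ^ (-m : ℤ) * b ^ (β + 1 - m) * C := by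
        rw [integral_mul_const, integral_const_mul, integral_Ioi_rpow_of_lt hexp hb,
          show β - m + 1 = -(m - (β + 1)) by ring, show β + 1 - m = -(m - (β + 1)) by ring,
          neg_div_neg_eq]
        ring

theorem hasRegularizedLimit_of_norm_le {m : ℕ} (ha : a ≠ 0) (hb : 0 < b) (hβ : β + 1 < m)
    (hmeas : AEStronglyMeasurable g (volume.restrict (Ioi b)))
    (hg : ∀ y ∈ Ioi b, ‖g y‖ ≤ C * y ^ β) : HasRegularizedLimit m a b g := by
  refine ⟨oscIntegral m a b 0 0 g, fun y₀ => tendsto_integral_filter_of_dominated_convergence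
    (fun y => |a| ^ (-m : ℤ) * y ^ (β - m) * C) (.of_forall fun ε => ?_) ?_ ?_ ?_⟩
  · have hw : ContinuousOn (oscWeight m a ε y₀) (Ioi b) :=
      (continuousOn_oscWeight m ha).mono fun _ hy => (hb.trans hy).ne'
    exact (hw.aestronglyMeasurable measurableSet_Ioi).smul hmeas
  · filter_upwards [self_mem_nhdsWithin] with ε hε
    exact (ae_restrict_iff' measurableSet_Ioi).2 <| .of_forall fun y hy =>
      norm_oscWeight_smul_le m ha (le_of_lt hε) (hb.trans hy) (hg y hy)
  · exact ((integrableOn_Ioi_rpow_of_lt (by linarith) hb).const_mul _).mul_const C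
  · exact (ae_restrict_iff' measurableSet_Ioi).2 <| .of_forall fun y hy =>
      (tendsto_oscWeight m ha y₀ (hb.trans hy).ne').smul_const (g y)

variable [CompleteSpace E]

theorem oscIntegral_eq_neg_sub_add (m : ℕ) (ha : a ≠ 0) (hb : 0 < b) (hε : 0 < ε)
    (hg : HasPolynomialGrowth b g) (hg' : HasPolynomialGrowth b g')
    (hderiv : ∀ y ∈ Ioi b, HasDerivAt g (g' y) y) :
    oscIntegral m a b ε y₀ g =
      -(oscWeight (m + 1) a ε y₀ b • g b) - oscIntegral (m + 1) a b ε y₀ g'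
        + ((m + 1) * (-2 * (ε : ℂ) + 2 * Complex.I * a)) • oscIntegral (m + 2) a b ε y₀ g := by
  set c : ℂ := (m + 1) * (-2 * (ε : ℂ) + 2 * Complex.I * a)
  have hint₀ := hg.integrableOn_oscWeight_smul (y₀ := y₀) m ha hb hε
  have hint₁ := hg'.integrableOn_oscWeight_smul (y₀ := y₀) (m + 1) ha hb hε
  have hint₂ := (hg.integrableOn_oscWeight_smul (y₀ := y₀) (m + 2) ha hb hε).smul c
  have hprod : ∀ y ∈ Ioi b, HasDerivAt (fun y => oscWeight (m + 1) a ε y₀ y • g y)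
      (oscWeight m a ε y₀ y • g y + oscWeight (m + 1) a ε y₀ y • g' y
        - c • oscWeight (m + 2) a ε y₀ y • g y) y := by
    intro y hy
    refine ((hasDerivAt_oscWeight_succ m (quadPhaseDeriv_ne_zero ha (hb.trans hy).ne')).smul
      (hderiv y hy)).congr_deriv ?_
    rw [sub_smul, mul_smul]
    abel
  have hint := (hint₀.add hint₁).sub hint₂
  have hlim := tendsto_zero_of_hasDerivAt_of_integrableOn_Ioi hprod hint
    (hg.integrableOn_oscWeight_smul (m + 1) ha hb hε)
  have hFTC := integral_Ioi_of_hasDerivAt_of_tendsto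
    (hg.continuousOn_oscWeight_smul (m + 1) ha hb b self_mem_Ici) hprod hint hlim
  have hsplit : ∫ y in Ioi b, (oscWeight m a ε y₀ y • g y + oscWeight (m + 1) a ε y₀ y • g' y
        - c • oscWeight (m + 2) a ε y₀ y • g y) =
      oscIntegral m a b ε y₀ g + oscIntegral (m + 1) a b ε y₀ g'
        - c • oscIntegral (m + 2) a b ε y₀ g := by
    refine (integral_sub' (hint₀.add hint₁) hint₂).trans ?_
    rw [integral_add' hint₀ hint₁]
    exact congrArg _ (integral_smul c _)
  rw [hsplit, zero_sub, sub_eq_iff_eq_add, ← eq_sub_iff_add_eq] at hFTC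
  rw [hFTC]
  abel

theorem HasRegularizedLimit.of_hasDerivAt {m : ℕ} (ha : a ≠ 0) (hb : 0 < b)
    (hg : HasPolynomialGrowth b g) (hg' : HasPolynomialGrowth b g')
    (hderiv : ∀ y ∈ Ioi b, HasDerivAt g (g' y) y)
    (h₁ : HasRegularizedLimit (m + 1) a b g') (h₂ : HasRegularizedLimit (m + 2) a b g) :
    HasRegularizedLimit m a b g := by
  obtain ⟨L₁, hL₁⟩ := h₁
  obtain ⟨L₂, hL₂⟩ := h₂
  have hcoeff : Tendsto (fun ε : ℝ => (m + 1) * (-2 * (ε : ℂ) + 2 * Complex.I * a)) (𝓝[>] 0)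
      (𝓝 ((m + 1) * (-2 * ((0 : ℝ) : ℂ) + 2 * Complex.I * a))) :=
    (Continuous.tendsto (by fun_prop) 0).mono_left nhdsWithin_le_nhds
  refine ⟨_, fun y₀ => Tendsto.congr' ?_
    (((((tendsto_oscWeight (m + 1) ha y₀ hb.ne').smul_const (g b)).neg).sub (hL₁ y₀)).add
      (hcoeff.smul (hL₂ y₀)))⟩
  filter_upwards [self_mem_nhdsWithin] with ε hε
  exact (oscIntegral_eq_neg_sub_add m ha hb hε hg hg' hderiv).symm

theorem norm_oscIntegral_le_of_hasDerivAt (m : ℕ) {A C₁ C₂ : ℝ} (ha : a ≠ 0) (hb : 0 < b)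
    (hε : 0 < ε) (hε₁ : ε ≤ 1) (hg : HasPolynomialGrowth b g) (hg' : HasPolynomialGrowth b g')
    (hderiv : ∀ y ∈ Ioi b, HasDerivAt g (g' y) y) (hA : ‖g b‖ ≤ A * b ^ β)
    (h₁ : ‖oscIntegral (m + 1) a b ε y₀ g'‖ ≤ C₁) (h₂ : ‖oscIntegral (m + 2) a b ε y₀ g‖ ≤ C₂) :
    ‖oscIntegral m a b ε y₀ g‖ ≤
      |a| ^ (-(m + 1 : ℕ) : ℤ) * b ^ (β - (m + 1 : ℕ)) * A + C₁
        + 2 * (m + 1) * (1 + |a|) * C₂ := by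
  have hcoeff : ‖(m + 1) * (-2 * (ε : ℂ) + 2 * Complex.I * a)‖ ≤ 2 * (m + 1) * (1 + |a|) :=
    calc ‖(m + 1) * (-2 * (ε : ℂ) + 2 * Complex.I * a)‖
        ≤ (m + 1) * (2 * ε + 2 * |a|) := by
          rw [norm_mul, ← Nat.cast_succ, Complex.norm_natCast, Nat.cast_succ]
          gcongr
          exact (norm_add_le _ _).trans_eq (by simp [abs_of_pos hε])
      _ ≤ (m + 1) * (2 * 1 + 2 * |a|) := by gcongr
      _ = 2 * (m + 1) * (1 + |a|) := by ring
  rw [oscIntegral_eq_neg_sub_add m ha hb hε hg hg' hderiv]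
  refine (norm_add_le _ _).trans (add_le_add ((norm_sub_le _ _).trans (add_le_add ?_ h₁)) ?_)
  · rw [norm_neg]
    exact norm_oscWeight_smul_le (m + 1) ha hε.le hb hA
  · rw [norm_smul]
    gcongr

end OscIntegral

section Growth

theorem norm_le_mul_rpow_add_one_of_norm_deriv_le {E : Type*} [NormedAddCommGroup E]
    [NormedSpace ℝ E] {b β A : ℝ} {g g' : ℝ → E} (hβ : 0 ≤ β)
    (hderiv : ∀ y ∈ Ici b, HasDerivWithinAt g (g' y) (Ici b) y) (hgb : ‖g b‖ ≤ A * b ^ (β + 1))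
    (hg' : ∀ y ∈ Ici b, ‖g' y‖ ≤ A * y ^ β) : ∀ y ∈ Ici b, ‖g y‖ ≤ A * y ^ (β + 1) := by
  intro y hy
  have hrpow : ∀ x, HasDerivAt (fun x => A * x ^ (β + 1)) (A * ((β + 1) * x ^ β)) x := fun x => by
    simpa only [add_sub_cancel_right] using
      (Real.hasDerivAt_rpow_const (x := x) (Or.inr (by linarith : 1 ≤ β + 1))).const_mul A
  refine image_norm_le_of_norm_deriv_right_le_deriv_boundary (f' := g')
    (fun x hx => (hderiv x hx.1).continuousWithinAt.mono Icc_subset_Ici_self)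
    (fun x hx => (hderiv x hx.1).mono (Ici_subset_Ici.2 hx.1)) hgb hrpow (fun x hx => ?_)
    (right_mem_Icc.2 hy)
  have hnonneg : 0 ≤ A * x ^ β := (norm_nonneg _).trans (hg' x hx.1)
  calc ‖g' x‖ ≤ A * x ^ β := hg' x hx.1
    _ ≤ A * x ^ β + β * (A * x ^ β) := le_add_of_nonneg_right (mul_nonneg hβ hnonneg)
    _ = A * ((β + 1) * x ^ β) := by ring

variable {b α : ℝ} {n k : ℕ} {f : ℝ → ℂ}

theorem norm_iteratedDerivWithin_left_le_cnAlphaNorm (hb : 0 < b) (hk : k < n) :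
    ‖iteratedDerivWithin k f (Ici b) b‖ ≤ CnAlphaNorm b n α f * b ^ ((n : ℝ) - k + α) := by
  rw [← div_le_iff₀ (Real.rpow_pos_of_pos hb _)]
  have hsup : 0 ≤ ⨆ y : Ici b, ‖iteratedDerivWithin n f (Ici b) y‖ / (y : ℝ) ^ α :=
    Real.iSup_nonneg fun y => div_nonneg (norm_nonneg _) (Real.rpow_nonneg (hb.le.trans y.2) α)
  exact (Finset.single_le_sum
    (f := fun i : ℕ => ‖iteratedDerivWithin i f (Ici b) b‖ / b ^ ((n : ℝ) - i + α))
    (fun i _ => by positivity) (Finset.mem_range.2 hk)).trans (le_add_of_nonneg_right hsup)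

theorem MemCnAlpha.norm_iteratedDerivWithin_self_le (hf : MemCnAlpha b n α f) (hb : 0 < b)
    {y : ℝ} (hy : y ∈ Ici b) :
    ‖iteratedDerivWithin n f (Ici b) y‖ ≤ CnAlphaNorm b n α f * y ^ α := by
  have hpos : ∀ x ∈ Ici b, 0 < x ^ α := fun x hx => Real.rpow_pos_of_pos (hb.trans_le hx) α
  have hbdd : BddAbove (range fun x : Ici b =>
      ‖iteratedDerivWithin n f (Ici b) x‖ / (x : ℝ) ^ α) := by
    obtain ⟨-, M, -, hM⟩ := hf
    exact ⟨M, forall_mem_range.2 fun x => (div_le_iff₀ (hpos x x.2)).2 (hM x x.2)⟩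
  rw [← div_le_iff₀ (hpos y hy)]
  exact (le_ciSup hbdd ⟨y, hy⟩).trans
    (le_add_of_nonneg_left (Finset.sum_nonneg fun i _ => by positivity))

theorem MemCnAlpha.hasDerivWithinAt (hf : MemCnAlpha b n α f) (hk : k < n) {y : ℝ}
    (hy : y ∈ Ici b) :
    HasDerivWithinAt (iteratedDerivWithin k f (Ici b))
      (iteratedDerivWithin (k + 1) f (Ici b) y) (Ici b) y := by
  rw [iteratedDerivWithin_succ]
  exact (hf.1.differentiableOn_iteratedDerivWithin (by exact_mod_cast hk)
    (uniqueDiffOn_Ici b) y hy).hasDerivWithinAt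

theorem MemCnAlpha.hasDerivAt (hf : MemCnAlpha b n α f) (hk : k < n) {y : ℝ} (hy : y ∈ Ioi b) :
    HasDerivAt (iteratedDerivWithin k f (Ici b)) (iteratedDerivWithin (k + 1) f (Ici b) y) y :=
  (hf.hasDerivWithinAt hk (mem_Ici_of_Ioi hy)).hasDerivAt (Ici_mem_nhds hy)

theorem MemCnAlpha.norm_iteratedDerivWithin_le (hf : MemCnAlpha b n α f) (hα : 0 ≤ α)
    (hb : 0 < b) (hk : k ≤ n) :
    ∀ y ∈ Ici b, ‖iteratedDerivWithin k f (Ici b) y‖ ≤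
      CnAlphaNorm b n α f * y ^ ((n : ℝ) - k + α) := by
  induction hk using Nat.decreasingInduction with
  | self =>
    intro y hy
    simpa only [sub_self, zero_add] using hf.norm_iteratedDerivWithin_self_le hb hy
  | of_succ k hk ih =>
    have hexp : (n : ℝ) - k + α = n - (k + 1 : ℕ) + α + 1 := by
      push_cast
      ring
    have hnonneg : 0 ≤ (n : ℝ) - (k + 1 : ℕ) + α :=
      add_nonneg (sub_nonneg.2 (by exact_mod_cast hk)) hα
    have hleft := norm_iteratedDerivWithin_left_le_cnAlphaNorm (α := α) (f := f) hb hk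
    rw [hexp] at hleft ⊢
    exact norm_le_mul_rpow_add_one_of_norm_deriv_le hnonneg
      (fun y hy => hf.hasDerivWithinAt hk hy) hleft ih

theorem MemCnAlpha.hasPolynomialGrowth (hf : MemCnAlpha b n α f) (hα : 0 ≤ α) (hb : 0 < b)
    (hk : k ≤ n) : HasPolynomialGrowth b (iteratedDerivWithin k f (Ici b)) where
  continuousOn := hf.1.continuousOn_iteratedDerivWithin (by exact_mod_cast hk) (uniqueDiffOn_Ici b)
  exists_isBigO := by
    refine ⟨n - k + α, .of_bound (CnAlphaNorm b n α f) ?_⟩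
    filter_upwards [eventually_ge_atTop b] with y hy
    rw [Real.norm_of_nonneg (Real.rpow_nonneg (hb.le.trans hy) _)]
    exact hf.norm_iteratedDerivWithin_le hα hb hk y hy

end Growth

section OrderBound

open Asymptotics

/-- Nonnegative functions of `(a, b)`, `a ≠ 0`, `b > 0`, that are continuous and of order
`|a| ^ r` as `|a| → ∞`: the shape of the constant `D_{a,b,n,α}`. -/
structure IsBoundOfOrder (r : ℤ) (D : ℝ → ℝ → ℝ) : Prop where
  nonneg : ∀ a b : ℝ, a ≠ 0 → 0 < b → 0 ≤ D a b
  continuousOn :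
    ContinuousOn (fun p : ℝ × ℝ => D p.1 p.2) ({a : ℝ | a ≠ 0} ×ˢ Ioi (0 : ℝ))
  isBigO : ∀ b : ℝ, 0 < b →
    (fun a => D a b) =O[comap (fun a : ℝ => |a|) atTop] fun a : ℝ => |a| ^ r

namespace IsBoundOfOrder

variable {r s : ℤ} {D D₁ D₂ : ℝ → ℝ → ℝ}

theorem add (h₁ : IsBoundOfOrder r D₁) (h₂ : IsBoundOfOrder r D₂) :
    IsBoundOfOrder r fun a b => D₁ a b + D₂ a b where
  nonneg a b ha hb := add_nonneg (h₁.nonneg a b ha hb) (h₂.nonneg a b ha hb)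
  continuousOn := h₁.continuousOn.add h₂.continuousOn
  isBigO b hb := (h₁.isBigO b hb).add (h₂.isBigO b hb)

theorem mul (h₁ : IsBoundOfOrder r D₁) (h₂ : IsBoundOfOrder s D₂) :
    IsBoundOfOrder (r + s) fun a b => D₁ a b * D₂ a b where
  nonneg a b ha hb := mul_nonneg (h₁.nonneg a b ha hb) (h₂.nonneg a b ha hb)
  continuousOn := h₁.continuousOn.mul h₂.continuousOn
  isBigO b hb := by
    refine ((h₁.isBigO b hb).mul (h₂.isBigO b hb)).congr' .rfl ?_
    filter_upwards [tendsto_comap.eventually_gt_atTop 0] with a ha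
    exact (zpow_add₀ ha.ne' r s).symm

theorem mono (h : IsBoundOfOrder r D) (hrs : r ≤ s) : IsBoundOfOrder s D where
  nonneg := h.nonneg
  continuousOn := h.continuousOn
  isBigO b hb := by
    refine (h.isBigO b hb).trans (.of_bound' ?_)
    filter_upwards [tendsto_comap.eventually_ge_atTop 1] with a ha
    rw [Real.norm_of_nonneg (by positivity), Real.norm_of_nonneg (by positivity)]
    exact zpow_le_zpow_right₀ ha hrs

theorem const {c : ℝ} (hc : 0 ≤ c) : IsBoundOfOrder 0 fun _ _ => c where
  nonneg _ _ _ _ := hc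
  continuousOn := continuousOn_const
  isBigO _ _ := by simpa only [zpow_zero] using isBigO_const_const c one_ne_zero _

theorem abs_zpow (r : ℤ) : IsBoundOfOrder r fun a _ => |a| ^ r where
  nonneg _ _ _ _ := by positivity
  continuousOn := continuousOn_fst.abs.zpow₀ r fun _ hp => Or.inl (abs_ne_zero.2 hp.1)
  isBigO _ _ := isBigO_refl _ _

theorem rpow (p : ℝ) : IsBoundOfOrder 0 fun _ b => b ^ p where
  nonneg _ _ _ hb := Real.rpow_nonneg hb.le p
  continuousOn := continuousOn_snd.rpow_const fun _ hp => Or.inl (ne_of_gt hp.2)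
  isBigO b _ := by simpa only [zpow_zero] using isBigO_const_const (b ^ p) one_ne_zero _

theorem const_mul_one_add_abs {c : ℝ} (hc : 0 ≤ c) : IsBoundOfOrder 1 fun a _ => c * (1 + |a|) := by
  simpa only [zero_add, zpow_one] using
    (const hc).mul (((const zero_le_one).mono zero_le_one).add (abs_zpow 1))

theorem abs_zpow_mul_rpow (r : ℤ) (p : ℝ) : IsBoundOfOrder r fun a b => |a| ^ r * b ^ p := by
  simpa only [add_zero] using (abs_zpow r).mul (rpow p)

end IsBoundOfOrder

end OrderBound

section Recursion

variable {n m k : ℕ} {α : ℝ}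

theorem two_step_induction {P : ℕ → ℕ → Prop} (hbase : ∀ m k, k ≤ n → 2 * n ≤ m + k → P m k)
    (hstep : ∀ m k, k < n → P (m + 1) (k + 1) → P (m + 2) k → P m k) (m k : ℕ) (hkm : k ≤ m)
    (hkn : k ≤ n) : P m k := by
  by_cases hmk : 2 * n ≤ m + k
  · exact hbase m k hkn hmk
  · exact hstep m k (by omega)
      (two_step_induction hbase hstep (m + 1) (k + 1) (by omega) (by omega))
      (two_step_induction hbase hstep (m + 2) k (by omega) hkn)
termination_by 2 * n - (m + k)

theorem sub_add_add_one_lt_of_two_mul_le (hn : α + 1 < n) (hmk : 2 * n ≤ m + k) :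
    (n : ℝ) - k + α + 1 < m := by
  have : 2 * (n : ℝ) ≤ m + k := by exact_mod_cast hmk
  linarith

theorem MemCnAlpha.hasRegularizedLimit {a b : ℝ} {f : ℝ → ℂ} (hf : MemCnAlpha b n α f)
    (hα : 0 ≤ α) (hn : α + 1 < n) (ha : a ≠ 0) (hb : 0 < b) (hkm : k ≤ m) (hkn : k ≤ n) :
    HasRegularizedLimit m a b (iteratedDerivWithin k f (Ici b)) := by
  refine two_step_induction (n := n)
    (P := fun m k => HasRegularizedLimit m a b (iteratedDerivWithin k f (Ici b)))
    (fun m k hk hmk => ?_) (fun m k hk h₁ h₂ => ?_) m k hkm hkn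
  · exact hasRegularizedLimit_of_norm_le ha hb (sub_add_add_one_lt_of_two_mul_le hn hmk)
      (((hf.hasPolynomialGrowth hα hb hk).continuousOn.mono
        Ioi_subset_Ici_self).aestronglyMeasurable measurableSet_Ioi)
      fun y hy => hf.norm_iteratedDerivWithin_le hα hb hk y (mem_Ici_of_Ioi hy)
  · exact .of_hasDerivAt ha hb (hf.hasPolynomialGrowth hα hb hk.le)
      (hf.hasPolynomialGrowth hα hb hk) (fun y hy => hf.hasDerivAt hk hy) h₁ h₂

/-- The estimate `|I_{m,k}| ≤ D a b * ‖f‖` for all `f` in `C_α^n([b,∞))` and `0 < ε ≤ 1`, with a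
constant `D` of order `|a| ^ r`. -/
def HasNormBoundOfOrder (n : ℕ) (α : ℝ) (r : ℤ) (m k : ℕ) : Prop :=
  ∃ D : ℝ → ℝ → ℝ, IsBoundOfOrder r D ∧
    ∀ a b : ℝ, a ≠ 0 → 0 < b → ∀ f : ℝ → ℂ, MemCnAlpha b n α f → ∀ ε y₀ : ℝ, 0 < ε → ε ≤ 1 →
      ‖oscIntegral m a b ε y₀ (iteratedDerivWithin k f (Ici b))‖ ≤ D a b * CnAlphaNorm b n α f

theorem hasNormBoundOfOrder_of_lt (hα : 0 ≤ α) (hk : k ≤ n) (hlt : (n : ℝ) - k + α + 1 < m) :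
    HasNormBoundOfOrder n α (-m) m k := by
  refine ⟨fun a b => (m - (n - k + α + 1))⁻¹ * |a| ^ (-m : ℤ) * b ^ (n - k + α + 1 - m), ?_,
    fun a b ha hb f hf ε y₀ hε _ => norm_oscIntegral_le ha hb hε.le hlt
      fun y hy => hf.norm_iteratedDerivWithin_le hα hb hk y (mem_Ici_of_Ioi hy)⟩
  have hc : 0 ≤ (m - (n - k + α + 1))⁻¹ := inv_nonneg.2 (sub_nonneg.2 hlt.le)
  simpa only [zero_add, mul_assoc] using (IsBoundOfOrder.const hc).mul (.abs_zpow_mul_rpow (-m) _)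

theorem HasNormBoundOfOrder.of_succ_of_add_two (hα : 0 ≤ α) (hk : k < n)
    (h₁ : HasNormBoundOfOrder n α (-(m + 1 : ℕ)) (m + 1) (k + 1))
    (h₂ : HasNormBoundOfOrder n α (-(m + 2 : ℕ)) (m + 2) k) :
    HasNormBoundOfOrder n α (-(m + 1 : ℕ)) m k := by
  obtain ⟨D₁, hD₁, hbound₁⟩ := h₁
  obtain ⟨D₂, hD₂, hbound₂⟩ := h₂
  have hD₂' : IsBoundOfOrder (-(m + 1 : ℕ)) fun a b => 2 * (m + 1) * (1 + |a|) * D₂ a b :=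
    ((IsBoundOfOrder.const_mul_one_add_abs (by positivity)).mul hD₂).mono (by push_cast; omega)
  refine ⟨_, ((IsBoundOfOrder.abs_zpow_mul_rpow _ ((n : ℝ) - k + α - (m + 1 : ℕ))).add hD₁).add
    hD₂', fun a b ha hb f hf ε y₀ hε hε₁ => ?_⟩
  have hleft := hf.norm_iteratedDerivWithin_le hα hb hk.le b self_mem_Ici
  refine (norm_oscIntegral_le_of_hasDerivAt m ha hb hε hε₁ (hf.hasPolynomialGrowth hα hb hk.le)
    (hf.hasPolynomialGrowth hα hb hk) (fun y hy => hf.hasDerivAt hk hy) hleft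
    (hbound₁ a b ha hb f hf ε y₀ hε hε₁) (hbound₂ a b ha hb f hf ε y₀ hε hε₁)).trans_eq ?_
  ring

theorem hasNormBoundOfOrder_neg (hα : 0 ≤ α) (hn : α + 1 < n) (hkm : k ≤ m) (hkn : k ≤ n) :
    HasNormBoundOfOrder n α (-m) m k := by
  refine two_step_induction (n := n) (P := fun m k => HasNormBoundOfOrder n α (-m) m k)
    (fun m k hk hmk => ?_) (fun m k hk h₁ h₂ => ?_) m k hkm hkn
  · exact hasNormBoundOfOrder_of_lt hα hk (sub_add_add_one_lt_of_two_mul_le hn hmk)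
  · obtain ⟨D, hD, hbound⟩ := HasNormBoundOfOrder.of_succ_of_add_two hα hk h₁ h₂
    exact ⟨D, hD.mono (by push_cast; omega), hbound⟩

end Recursion

open Asymptotics in
/-- for `n > α + 1`, the oscillatory integral `I_{a,b}(f)` exists as the limit
`ε → 0⁺` of the regularized integrals, independently of `y₀`, and there is a constant
`D_{a,b,n,α} ≥ 0`, continuous in `(a,b)` and `O(1/|a|)` as `|a| → ∞`, bounding both the
regularized integrals (for `0 < ε ≤ 1`) and the oscillatory integral by
`D_{a,b,n,α}·‖f‖_{C_α^n([b,∞))}`. -/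
theorem stmt12 (n : ℕ) (α : ℝ) (hα : 0 ≤ α) (hn : α + 1 < n) :
    ∃ D : ℝ → ℝ → ℝ,
      (∀ a b : ℝ, a ≠ 0 → 0 < b → 0 ≤ D a b) ∧
      ContinuousOn (fun p : ℝ × ℝ => D p.1 p.2) ({a : ℝ | a ≠ 0} ×ˢ Set.Ioi (0 : ℝ)) ∧
      (∀ b : ℝ, 0 < b →
        (fun a : ℝ => D a b) =O[Filter.comap (fun a : ℝ => |a|) Filter.atTop]
          fun a : ℝ => 1 / |a|) ∧
      ∀ a b : ℝ, a ≠ 0 → 0 < b → ∀ f : ℝ → ℂ, MemCnAlpha b n α f →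
        (∃ L : ℂ,
          (∀ y₀ : ℝ, Tendsto (fun ε : ℝ => Iab a b ε y₀ f) (𝓝[>] 0) (𝓝 L)) ∧
          ‖L‖ ≤ D a b * CnAlphaNorm b n α f) ∧
        ∀ ε y₀ : ℝ, 0 < ε → ε ≤ 1 → ‖Iab a b ε y₀ f‖ ≤ D a b * CnAlphaNorm b n α f := by
  have hn₀ : 0 < n := by
    have : (0 : ℝ) < n := by linarith
    exact_mod_cast this
  obtain ⟨D, hD, hbound⟩ := HasNormBoundOfOrder.of_succ_of_add_two (m := 0) (k := 0) hα hn₀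
    (hasNormBoundOfOrder_neg hα hn le_rfl hn₀)
    (hasNormBoundOfOrder_neg hα hn (Nat.zero_le 2) hn₀.le)
  refine ⟨D, hD.nonneg, hD.continuousOn, fun b hb => by simpa using hD.isBigO b hb,
    fun a b ha hb f hf => ?_⟩
  have hIab : ∀ ε y₀ : ℝ, 0 < ε → ε ≤ 1 → ‖Iab a b ε y₀ f‖ ≤ D a b * CnAlphaNorm b n α f := by
    simpa only [Iab_eq_oscIntegral, iteratedDerivWithin_zero] using hbound a b ha hb f hf
  obtain ⟨L, hL⟩ : ∃ L : ℂ, ∀ y₀ : ℝ,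
      Tendsto (fun ε => Iab a b ε y₀ f) (𝓝[>] 0) (𝓝 L) := by
    simpa only [HasRegularizedLimit, Iab_eq_oscIntegral, iteratedDerivWithin_zero] using
      hf.hasRegularizedLimit hα hn ha hb le_rfl hn₀.le
  refine ⟨⟨L, hL, le_of_tendsto (hL 0).norm ?_⟩, hIab⟩
  filter_upwards [Ioc_mem_nhdsGT one_pos] with ε hε using hIab ε 0 hε.1 hε.2
end
end

section
/- Let a∈ℝ\{0}, b>0, n∈ℕ, α≥0 with n>α+1, and assume f∈C_α^n([b,∞)) satisfies the asymptotic condition f^{(k)}(y) = o(y^{k+1}) as y→∞ for every k∈{0,…,n−1}. Then the oscillatory integral I_{a,b}(f) equals the improper Riemann integral: I_{a,b}(f) = lim_{R→∞} ∫_b^R e^{iay²} f(y) dy. -/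
open Set Filter MeasureTheory Topology

noncomputable section

/-!
Each integration by parts against `e^{iay²}` gains a factor `y⁻¹`, and the growth conditions
`f^{(k)} = o(y^{k+1})` are exactly what makes all the boundary terms vanish at infinity; after `n`
steps the remaining integrals converge absolutely, so the improper integral converges. A convergent
improper integral is in turn equal to its Gaussian Abel mean: for `φ(x) = e^{-x²}`, `δ = √ε` and
`G(R) = ∫_b^R g`, integration by parts and the substitution `x = δy` give
`∫_b^∞ φ(δy) g(y) dy = -∫_{δb}^∞ φ'(x) G(x/δ) dx`, which tends to `φ(0) G(∞)` by dominated
convergence as `δ → 0⁺`.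
-/

section ImproperIntegral

variable {E : Type*} [NormedAddCommGroup E] {F G : ℝ → E} {b c : ℝ}

lemma intervalIntegrable_of_continuousOn_Ici (hF : ContinuousOn F (Ici c)) :
    ∀ R ≥ c, IntervalIntegrable F volume c R := fun _ hR =>
  (hF.mono (uIcc_of_le hR ▸ Icc_subset_Ici_self)).intervalIntegrable

variable [NormedSpace ℝ E]

/-- Convergence of the improper Riemann integral `∫_c^∞ F`, i.e. of `∫_c^R F` as `R → ∞`.
Integrability on every bounded interval is part of the definition, so that no `∫_c^R F` is a
junk value. -/
def ImproperlyIntegrable (F : ℝ → E) (c : ℝ) : Prop :=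
  (∀ R ≥ c, IntervalIntegrable F volume c R) ∧
    ∃ L, Tendsto (fun R => ∫ y in c..R, F y) atTop (𝓝 L)

namespace ImproperlyIntegrable

lemma add (hF : ImproperlyIntegrable F c) (hG : ImproperlyIntegrable G c) :
    ImproperlyIntegrable (fun y => F y + G y) c := by
  obtain ⟨hFi, L, hL⟩ := hF
  obtain ⟨hGi, K, hK⟩ := hG
  refine ⟨fun R hR => (hFi R hR).add (hGi R hR), L + K, (hL.add hK).congr' ?_⟩
  filter_upwards [eventually_ge_atTop c] with R hR
  exact (intervalIntegral.integral_add (hFi R hR) (hGi R hR)).symm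

lemma const_smul {𝕜 : Type*} [RCLike 𝕜] [NormedSpace 𝕜 E] [SMulCommClass ℝ 𝕜 E]
    (hF : ImproperlyIntegrable F c) (r : 𝕜) : ImproperlyIntegrable (fun y => r • F y) c := by
  obtain ⟨hFi, L, hL⟩ := hF
  exact ⟨fun R hR => (hFi R hR).smul r, r • L, (hL.const_smul r).congr fun R =>
    (intervalIntegral.integral_smul r F).symm⟩

lemma congr (hF : ImproperlyIntegrable F c) (h : EqOn F G (Ici c)) :
    ImproperlyIntegrable G c := by
  obtain ⟨hFi, L, hL⟩ := hF
  have hFG {R : ℝ} (hR : c ≤ R) : EqOn F G (uIcc c R) :=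
    h.mono (uIcc_of_le hR ▸ Icc_subset_Ici_self)
  refine ⟨fun R hR => (hFi R hR).congr ((hFG hR).mono uIoc_subset_uIcc), L, hL.congr' ?_⟩
  filter_upwards [eventually_ge_atTop c] with R hR
  exact intervalIntegral.integral_congr (hFG hR)

lemma change_left (hF : ImproperlyIntegrable F c) (hint : IntervalIntegrable F volume b c) :
    ImproperlyIntegrable F b := by
  obtain ⟨hFi, L, hL⟩ := hF
  refine ⟨fun R hR => ?_, (∫ y in b..c, F y) + L, (hL.const_add _).congr' ?_⟩
  · rcases le_total c R with hcR | hRc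
    · exact hint.trans (hFi R hcR)
    · exact hint.mono_set (uIcc_subset_uIcc_left ⟨inf_le_left.trans hR, hRc.trans le_sup_right⟩)
  · filter_upwards [eventually_ge_atTop c] with R hR
    exact intervalIntegral.integral_add_adjacent_intervals hint (hFi R hR)

lemma of_hasDerivAt [CompleteSpace E] {L : E} (hcont : ContinuousOn F (Ici c))
    (hderiv : ∀ y ∈ Ioi c, HasDerivAt F (G y) y) (hG : ContinuousOn G (Ici c))
    (hL : Tendsto F atTop (𝓝 L)) : ImproperlyIntegrable G c := by
  have hGi := intervalIntegrable_of_continuousOn_Ici hG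
  refine ⟨hGi, L - F c, (hL.sub_const (F c)).congr' ?_⟩
  filter_upwards [eventually_ge_atTop c] with R hR
  exact (intervalIntegral.integral_eq_sub_of_hasDerivAt_of_le hR
    (hcont.mono Icc_subset_Ici_self) (fun y hy => hderiv y hy.1) (hGi R hR)).symm

lemma of_isBigO_rpow {s : ℝ} (hs : s < -1) (hF : ContinuousOn F (Ici c))
    (hO : F =O[atTop] fun y => y ^ s) : ImproperlyIntegrable F c := by
  have hint : IntegrableOn F (Ici c) :=
    (hF.locallyIntegrableOn measurableSet_Ici).integrableOn_of_isBigO_atTop hO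
      ⟨Ioi 1, Ioi_mem_atTop 1, integrableOn_Ioi_rpow_of_lt hs one_pos⟩
  exact ⟨intervalIntegrable_of_continuousOn_Ici hF, _,
    intervalIntegral_tendsto_integral_Ioi c (hint.mono_set Ioi_subset_Ici_self) tendsto_id⟩

end ImproperlyIntegrable

end ImproperIntegral

section AbelSummation

variable {E : Type*} [NormedAddCommGroup E] {g v : ℝ → E} {b : ℝ} {L : E}

lemma exists_norm_le_of_continuousOn_of_tendsto (hv : ContinuousOn v (Ici b))
    (hL : Tendsto v atTop (𝓝 L)) : ∃ C, ∀ y ∈ Ici b, ‖v y‖ ≤ C := by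
  obtain ⟨Y, hY⟩ := eventually_atTop.1 (hL.norm.eventually_le_const (lt_add_one ‖L‖))
  obtain ⟨K, hK⟩ :=
    (isCompact_Icc (a := b) (b := Y)).exists_bound_of_continuousOn (hv.mono Icc_subset_Ici_self)
  refine ⟨max K (‖L‖ + 1), fun y hy => ?_⟩
  rcases le_total y Y with hyY | hYy
  · exact (hK y ⟨hy, hyY⟩).trans (le_max_left _ _)
  · exact (hY y hYy).trans (le_max_right _ _)

variable [NormedSpace ℝ E]

lemma continuousOn_integral_Ici (hg : ContinuousOn g (Ici b)) :
    ContinuousOn (fun R => ∫ y in b..R, g y) (Ici b) := by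
  intro R (hR : b ≤ R)
  have hint : IntervalIntegrable g volume b (R + 1) :=
    intervalIntegrable_of_continuousOn_Ici hg _ (by linarith)
  have hIcc := intervalIntegral.continuousOn_primitive_interval' hint left_mem_uIcc
  rw [uIcc_of_le (by linarith)] at hIcc
  exact (hIcc R ⟨hR, by linarith⟩).mono_of_mem_nhdsWithin
    (by rw [← Ici_inter_Iic]; exact inter_mem_nhdsWithin _ (Iic_mem_nhds (by linarith)))

lemma integrableOn_exp_neg_mul_sq_smul {s ε : ℝ} (hε : 0 < ε) (hg : ContinuousOn g (Ici b))
    (hO : g =O[atTop] fun y => y ^ s) :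
    IntegrableOn (fun y => Real.exp (-ε * y ^ 2) • g y) (Ioi b) := by
  have hcont : ContinuousOn (fun y => Real.exp (-ε * y ^ 2) • g y) (Ici b) := by fun_prop
  have hdecay : (fun y => Real.exp (-ε * y ^ 2) • g y) =O[atTop]
      fun y => Real.exp (-(1 / 2) * y) :=
    (((Asymptotics.isBigO_refl (fun y => Real.exp (-ε * y ^ 2)) atTop).smul hO).congr_right
      fun y => mul_comm _ _).trans (rpow_mul_exp_neg_mul_sq_isLittleO_exp_neg hε s).isBigO
  exact ((hcont.locallyIntegrableOn measurableSet_Ici).integrableOn_of_isBigO_atTop hdecay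
    ⟨Ioi 0, Ioi_mem_atTop 0, exp_neg_integrableOn_Ioi 0 one_half_pos⟩).mono_set Ioi_subset_Ici_self

variable [CompleteSpace E]

lemma hasDerivAt_integral_Ici (hg : ContinuousOn g (Ici b)) :
    ∀ y ∈ Ioi b, HasDerivAt (fun R => ∫ t in b..R, g t) (g y) y := fun y (hy : b < y) =>
  intervalIntegral.integral_hasDerivAt_right (intervalIntegrable_of_continuousOn_Ici hg y hy.le)
    ((hg.mono Ioi_subset_Ici_self).stronglyMeasurableAtFilter isOpen_Ioi y hy)
    (hg.continuousAt (Ici_mem_nhds hy))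

variable {φ φ' : ℝ → ℝ} {δ : ℝ}

lemma integral_comp_mul_smul_eq_neg_integral_deriv_smul
    (hφ : ∀ x, HasDerivAt φ (φ' x) x) (hφ' : Integrable φ') (hφ_top : Tendsto φ atTop (𝓝 0))
    (hg : ContinuousOn g (Ici b)) (hL : Tendsto (fun R => ∫ y in b..R, g y) atTop (𝓝 L))
    (hδ : 0 < δ) (hint : IntegrableOn (fun y => φ (δ * y) • g y) (Ioi b)) :
    ∫ y in Ioi b, φ (δ * y) • g y = -∫ x in Ioi (δ * b), φ' x • ∫ t in b..x / δ, g t := by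
  set v : ℝ → E := fun R => ∫ t in b..R, g t
  have hv : ContinuousOn v (Ici b) := continuousOn_integral_Ici hg
  obtain ⟨C, hC⟩ := exists_norm_le_of_continuousOn_of_tendsto hv hL
  have hφδ (y : ℝ) : HasDerivAt (fun y => φ (δ * y)) (δ * φ' (δ * y)) y := by
    simpa only [Function.comp_def, mul_one, smul_eq_mul] using
      HasDerivAt.scomp y (hφ (δ * y)) ((hasDerivAt_id' y).const_mul δ)
  have hint' : IntegrableOn (fun y => (δ * φ' (δ * y)) • v y) (Ioi b) := by
    refine (((hφ'.comp_mul_left' hδ.ne').const_mul δ).integrableOn).smul_bdd C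
      ((hv.mono Ioi_subset_Ici_self).aestronglyMeasurable measurableSet_Ioi)
      ((ae_restrict_mem measurableSet_Ioi).mono fun y hy => hC y (Ioi_subset_Ici_self hy))
  have hsum : ∫ y in Ioi b, (φ (δ * y) • g y + (δ * φ' (δ * y)) • v y) = 0 := by
    have hcont : ContinuousWithinAt (fun y => φ (δ * y) • v y) (Ici b) b :=
      (hφδ b).continuousAt.continuousWithinAt.smul (hv b self_mem_Ici)
    have hlim : Tendsto (fun y => φ (δ * y) • v y) atTop (𝓝 0) := by
      simpa only [zero_smul, Function.comp_def, id] using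
        (hφ_top.comp (tendsto_id.const_mul_atTop hδ)).smul hL
    rw [integral_Ioi_of_hasDerivAt_of_tendsto hcont
      (fun y hy => (hφδ y).smul (hasDerivAt_integral_Ici hg y hy)) (hint.add hint') hlim]
    simp only [v, intervalIntegral.integral_same, smul_zero, sub_zero]
  rw [integral_add hint hint'] at hsum
  rw [eq_neg_of_add_eq_zero_left hsum, ← integral_comp_mul_left_Ioi' _ _ hδ,
    ← integral_smul]
  simp only [mul_smul, v, mul_div_cancel_left₀ _ hδ.ne']

lemma tendsto_integral_smul_comp_div (hφ' : Integrable φ')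
    (hv : ContinuousOn v (Ici b)) (hL : Tendsto v atTop (𝓝 L)) :
    Tendsto (fun δ : ℝ => ∫ x in Ioi (δ * b), φ' x • v (x / δ)) (𝓝[>] 0)
      (𝓝 ((∫ x in Ioi 0, φ' x) • L)) := by
  obtain ⟨C, hC⟩ := exists_norm_le_of_continuousOn_of_tendsto hv hL
  have hδb : Tendsto (fun δ : ℝ => δ * b) (𝓝[>] 0) (𝓝 0) :=
    Tendsto.mono_left (by simpa using (continuous_mul_const b).tendsto 0) nhdsWithin_le_nhds
  rw [← integral_smul_const, ← integral_indicator measurableSet_Ioi]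
  simp_rw [← integral_indicator measurableSet_Ioi]
  refine tendsto_integral_filter_of_dominated_convergence (fun x => ‖φ' x‖ * C) ?_ ?_
    (hφ'.norm.mul_const C) ?_
  · filter_upwards [self_mem_nhdsWithin] with δ (hδ : 0 < δ)
    have hvδ : ContinuousOn (fun x => v (x / δ)) (Ioi (δ * b)) :=
      hv.comp (by fun_prop) fun x (hx : δ * b < x) => ((lt_div_iff₀' hδ).2 hx).le
    exact (aestronglyMeasurable_indicator_iff measurableSet_Ioi).2
      (hφ'.aestronglyMeasurable.restrict.smul (hvδ.aestronglyMeasurable measurableSet_Ioi))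
  · filter_upwards [self_mem_nhdsWithin] with δ (hδ : 0 < δ)
    have hC_nonneg : 0 ≤ C := (norm_nonneg _).trans (hC b self_mem_Ici)
    refine Eventually.of_forall fun x => ?_
    rw [norm_indicator_eq_indicator_norm]
    refine indicator_apply_le' (fun (hx : δ * b < x) => ?_) fun _ => by positivity
    rw [norm_smul]
    exact mul_le_mul_of_nonneg_left (hC _ ((lt_div_iff₀' hδ).2 hx).le) (norm_nonneg _)
  · filter_upwards [compl_mem_ae_iff.2 (measure_singleton (0 : ℝ))] with x hx
    rcases lt_or_gt_of_ne hx with hx_neg | hx_pos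
    · rw [indicator_of_notMem (notMem_Ioi.2 hx_neg.le)]
      refine tendsto_const_nhds.congr' ?_
      filter_upwards [hδb.eventually_const_lt hx_neg] with δ hδ
      exact (indicator_of_notMem (notMem_Ioi.2 hδ.le) fun x => φ' x • v (x / δ)).symm
    · rw [indicator_of_mem (mem_Ioi.2 hx_pos)]
      have hdiv : Tendsto (fun δ : ℝ => x / δ) (𝓝[>] 0) atTop := by
        simpa only [div_eq_mul_inv] using tendsto_inv_nhdsGT_zero.const_mul_atTop hx_pos
      refine ((hL.comp hdiv).const_smul (φ' x)).congr' ?_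
      filter_upwards [hδb.eventually_lt_const hx_pos] with δ hδ
      exact (indicator_of_mem (mem_Ioi.2 hδ) fun x => φ' x • v (x / δ)).symm

theorem tendsto_integral_comp_mul_smul
    (hφ : ∀ x, HasDerivAt φ (φ' x) x) (hφ' : Integrable φ') (hφ_top : Tendsto φ atTop (𝓝 0))
    (hg : ContinuousOn g (Ici b)) (hL : Tendsto (fun R => ∫ y in b..R, g y) atTop (𝓝 L))
    (hint : ∀ δ > 0, IntegrableOn (fun y => φ (δ * y) • g y) (Ioi b)) :
    Tendsto (fun δ : ℝ => ∫ y in Ioi b, φ (δ * y) • g y) (𝓝[>] 0) (𝓝 (φ 0 • L)) := by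
  have hmass : ∫ x in Ioi 0, φ' x = -φ 0 := by
    rw [integral_Ioi_of_hasDerivAt_of_tendsto' (fun x _ => hφ x) hφ'.integrableOn hφ_top, zero_sub]
  have hlim := (tendsto_integral_smul_comp_div hφ' (continuousOn_integral_Ici hg) hL).neg
  rw [hmass, neg_smul, neg_neg] at hlim
  refine hlim.congr' ?_
  filter_upwards [self_mem_nhdsWithin] with δ hδ
  exact (integral_comp_mul_smul_eq_neg_integral_deriv_smul hφ hφ' hφ_top hg hL hδ (hint δ hδ)).symm

theorem tendsto_integral_exp_neg_mul_sq_smul {s : ℝ}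
    (hg : ContinuousOn g (Ici b)) (hO : g =O[atTop] fun y => y ^ s)
    (hL : Tendsto (fun R => ∫ y in b..R, g y) atTop (𝓝 L)) :
    Tendsto (fun ε : ℝ => ∫ y in Ioi b, Real.exp (-ε * y ^ 2) • g y) (𝓝[>] 0) (𝓝 L) := by
  have hφ (x : ℝ) : HasDerivAt (fun x : ℝ => Real.exp (-1 * x ^ 2))
      (-2 * (x * Real.exp (-1 * x ^ 2))) x := by
    convert! ((hasDerivAt_pow 2 x).const_mul (-1)).exp using 1
    push_cast
    ring
  have hφ_top : Tendsto (fun x : ℝ => Real.exp (-1 * x ^ 2)) atTop (𝓝 0) :=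
    Real.tendsto_exp_atBot.comp
      ((tendsto_pow_atTop two_ne_zero).const_mul_atTop_of_neg (by norm_num))
  have hscale (δ y : ℝ) : -1 * (δ * y) ^ 2 = -δ ^ 2 * y ^ 2 := by ring
  have hAbel := tendsto_integral_comp_mul_smul hφ
    ((integrable_mul_exp_neg_mul_sq one_pos).const_mul (-2)) hφ_top hg hL fun δ hδ => by
      simpa only [hscale] using integrableOn_exp_neg_mul_sq_smul (pow_pos hδ 2) hg hO
  have hsqrt : Tendsto Real.sqrt (𝓝[>] 0) (𝓝[>] 0) :=
    tendsto_nhdsWithin_iff.2 ⟨Tendsto.mono_left (by simpa using Real.continuous_sqrt.tendsto 0)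
      nhdsWithin_le_nhds, eventually_nhdsWithin_of_forall fun ε hε => Real.sqrt_pos.2 hε⟩
  have hexp_zero : Real.exp (-1 * 0 ^ 2) = 1 := by norm_num
  rw [hexp_zero, one_smul] at hAbel
  refine (hAbel.comp hsqrt).congr' ?_
  filter_upwards [self_mem_nhdsWithin] with ε (hε : 0 < ε)
  simp only [Function.comp_apply, hscale, Real.sq_sqrt hε.le]

end AbelSummation

section Chirp

/-- The Fresnel factor `e^{iay²}` damped by `y^{-m}`. Integration by parts against
`e^{iay²}` gains a factor `y⁻¹`, so these weights are closed under that operation. For `m > 0`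
the value at `y = 0` is the junk value `0`. -/
def dampedChirp (a : ℝ) (m : ℕ) (y : ℝ) : ℂ :=
  Complex.exp (Complex.I * a * y ^ 2) / (y : ℂ) ^ m

variable {a c : ℝ} {m : ℕ}

lemma dampedChirp_zero (a y : ℝ) : dampedChirp a 0 y = Complex.exp (Complex.I * a * y ^ 2) := by
  rw [dampedChirp, pow_zero, div_one]

lemma norm_dampedChirp (a : ℝ) (m : ℕ) (y : ℝ) : ‖dampedChirp a m y‖ = (|y| ^ m)⁻¹ := by
  have hphase : Complex.I * a * y ^ 2 = ((a * y ^ 2 : ℝ) : ℂ) * Complex.I := by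
    push_cast
    ring
  rw [dampedChirp, hphase, norm_div, Complex.norm_exp_ofReal_mul_I, norm_pow, Complex.norm_real,
    Real.norm_eq_abs, one_div]

lemma continuousOn_dampedChirp (hc : 0 < c) : ContinuousOn (dampedChirp a m) (Ici c) := by
  refine ContinuousOn.div (by fun_prop) (by fun_prop) fun y hy => pow_ne_zero _ ?_
  exact Complex.ofReal_ne_zero.2 (hc.trans_le hy).ne'

lemma hasDerivAt_dampedChirp_succ {y : ℝ} (hy : y ≠ 0) :
    HasDerivAt (dampedChirp a (m + 1))
      (2 * (Complex.I * a) * dampedChirp a m y - (m + 1) * dampedChirp a (m + 2) y) y := by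
  have hy' : (y : ℂ) ≠ 0 := Complex.ofReal_ne_zero.2 hy
  have hexp := (((hasDerivAt_id y).ofReal_comp.pow 2).const_mul (Complex.I * a)).cexp
  have hpow := (hasDerivAt_id y).ofReal_comp.pow (m + 1)
  convert! hexp.div hpow (pow_ne_zero _ hy') using 1
  simp only [dampedChirp, id_eq, Pi.pow_apply, Nat.cast_ofNat, Nat.add_one_sub_one, pow_one,
    Complex.ofReal_one, mul_one, Nat.cast_add, Nat.cast_one, add_tsub_cancel_right]
  field_simp
  ring

variable {E : Type*} [NormedAddCommGroup E] [NormedSpace ℂ E] {f h h' : ℝ → E}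

lemma isBigO_dampedChirp_smul {s : ℝ} (hh : h =O[atTop] fun y => y ^ s) :
    (fun y => dampedChirp a m y • h y) =O[atTop] fun y => y ^ (s - m) := by
  have hchirp : dampedChirp a m =O[atTop] fun y : ℝ => (y ^ m)⁻¹ :=
    Asymptotics.isBigO_of_le _ fun y => by simp [norm_dampedChirp]
  refine (hchirp.smul hh).congr' EventuallyEq.rfl ?_
  filter_upwards [eventually_gt_atTop 0] with y hy
  rw [Real.rpow_sub hy, Real.rpow_natCast, smul_eq_mul, inv_mul_eq_div]

lemma tendsto_dampedChirp_smul_zero (hh : h =o[atTop] fun y => y ^ m) :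
    Tendsto (fun y => dampedChirp a m y • h y) atTop (𝓝 0) := by
  refine squeeze_zero_norm' ?_ hh.norm_left.tendsto_div_nhds_zero
  filter_upwards [eventually_ge_atTop 0] with y hy
  rw [norm_smul, norm_dampedChirp, abs_of_nonneg hy, inv_mul_eq_div]

lemma improperlyIntegrable_dampedChirp_smul_of_isBigO {s : ℝ} (hc : 0 < c)
    (hcont : ContinuousOn h (Ici c)) (hh : h =O[atTop] fun y => y ^ s) (hs : s + 1 < m) :
    ImproperlyIntegrable (fun y => dampedChirp a m y • h y) c :=
  .of_isBigO_rpow (by linarith) ((continuousOn_dampedChirp hc).smul hcont)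
    (isBigO_dampedChirp_smul hh)

lemma exists_isBigO_rpow_of_iteratedDerivWithin {b α : ℝ} {n : ℕ}
    (hbound : iteratedDerivWithin n f (Ici b) =O[atTop] fun y => y ^ α)
    (hlo : ∀ k < n, iteratedDerivWithin k f (Ici b) =o[atTop] fun y => y ^ (k + 1)) :
    ∃ s : ℝ, f =O[atTop] fun y => y ^ s := by
  rcases n.eq_zero_or_pos with rfl | hn
  · exact ⟨α, by simpa only [iteratedDerivWithin_zero] using hbound⟩
  · exact ⟨1, by
      simpa only [iteratedDerivWithin_zero, zero_add, pow_one, Real.rpow_one]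
        using (hlo 0 hn).isBigO⟩

variable [CompleteSpace E]

lemma improperlyIntegrable_dampedChirp_smul_of_deriv (ha : a ≠ 0) (hc : 0 < c)
    (hcont : ContinuousOn h (Ici c)) (hcont' : ContinuousOn h' (Ici c))
    (hderiv : ∀ y ∈ Ioi c, HasDerivAt h (h' y) y) (hh : h =o[atTop] fun y => y ^ (m + 1))
    (hint' : ImproperlyIntegrable (fun y => dampedChirp a (m + 1) y • h' y) c)
    (hint : ImproperlyIntegrable (fun y => dampedChirp a (m + 2) y • h y) c) :
    ImproperlyIntegrable (fun y => dampedChirp a m y • h y) c := by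
  have hw (k : ℕ) : ContinuousOn (dampedChirp a k) (Ici c) := continuousOn_dampedChirp hc
  have hboundary := ImproperlyIntegrable.of_hasDerivAt ((hw (m + 1)).smul hcont)
    (fun y hy => (hasDerivAt_dampedChirp_succ (hc.trans hy).ne').smul (hderiv y hy))
    (by fun_prop) (tendsto_dampedChirp_smul_zero hh)
  have hIa : 2 * (Complex.I * a) ≠ 0 := by simp [ha]
  refine (((hboundary.add (hint'.const_smul (-1 : ℂ))).add
    (hint.const_smul (m + 1 : ℂ))).const_smul (2 * (Complex.I * a))⁻¹).congr fun y _ => ?_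
  beta_reduce
  rw [inv_smul_eq_iff₀ hIa]
  module

theorem improperlyIntegrable_dampedChirp_smul {b α : ℝ} {n d : ℕ} (ha : a ≠ 0) (hc : 0 < c)
    (hbc : b ≤ c) (hn : α + 1 < n + d) (hf : ContDiffOn ℝ n f (Ici b))
    (hbound : iteratedDerivWithin n f (Ici b) =O[atTop] fun y => y ^ α)
    (hlo : ∀ k < n, iteratedDerivWithin k f (Ici b) =o[atTop] fun y => y ^ (k + d + 1)) :
    ∀ m ≥ d, ImproperlyIntegrable (fun y => dampedChirp a m y • f y) c := by
  have hfc : ContinuousOn f (Ici c) := hf.continuousOn.mono (Ici_subset_Ici.2 hbc)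
  induction n generalizing f d with
  | zero =>
    intro m hm
    have hdm : (d : ℝ) ≤ m := by exact_mod_cast hm
    exact improperlyIntegrable_dampedChirp_smul_of_isBigO hc hfc
      (by simpa only [iteratedDerivWithin_zero] using hbound) (by push_cast at hn; linarith)
  | succ n ih =>
    have hf' : ContDiffOn ℝ n (derivWithin f (Ici b)) (Ici b) :=
      hf.derivWithin (uniqueDiffOn_Ici b) (by norm_cast)
    have hf'c : ContinuousOn (derivWithin f (Ici b)) (Ici c) :=
      hf'.continuousOn.mono (Ici_subset_Ici.2 hbc)
    have hderiv (y : ℝ) (hy : y ∈ Ioi c) : HasDerivAt f (derivWithin f (Ici b) y) y :=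
      ((hf.differentiableOn (by simp) y (hbc.trans hy.le)).hasDerivWithinAt).hasDerivAt
        (Ici_mem_nhds (hbc.trans_lt hy))
    have hint' : ∀ m ≥ d + 1,
        ImproperlyIntegrable (fun y => dampedChirp a m y • derivWithin f (Ici b) y) c := by
      refine ih (by push_cast at hn ⊢; linarith) hf'
        (by simpa only [iteratedDerivWithin_succ'] using hbound) (fun k hk => ?_) hf'c
      simpa only [iteratedDerivWithin_succ', add_right_comm k 1 d, ← add_assoc]
        using hlo (k + 1) (by omega)
    have hf_lo : f =o[atTop] fun y => y ^ (d + 1) := by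
      simpa only [iteratedDerivWithin_zero, zero_add] using hlo 0 n.succ_pos
    -- Weight `m + 2` alone need not give absolute convergence, as `f` may grow almost like
    -- `y ^ (d + 1)`; weight `m + 4` does, hence two integrations by parts.
    have hparts (m : ℕ) (hm : d ≤ m)
        (hint : ImproperlyIntegrable (fun y => dampedChirp a (m + 2) y • f y) c) :
        ImproperlyIntegrable (fun y => dampedChirp a m y • f y) c :=
      improperlyIntegrable_dampedChirp_smul_of_deriv ha hc hfc hf'c hderiv
        (hf_lo.trans_isBigO ((Asymptotics.isBigO_pow_pow_cobounded_of_le (by omega)).mono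
          IsOrderBornology.atTop_le_cobounded))
        (hint' (m + 1) (by omega)) hint
    have habs (m : ℕ) (hm : d ≤ m) :
        ImproperlyIntegrable (fun y => dampedChirp a (m + 4) y • f y) c := by
      refine improperlyIntegrable_dampedChirp_smul_of_isBigO hc hfc (s := (d + 1 : ℕ)) ?_ ?_
      · simpa only [Real.rpow_natCast] using hf_lo.isBigO
      · exact_mod_cast (by omega : d + 1 + 1 < m + 4)
    exact fun m hm => hparts m hm (hparts (m + 2) (by omega) (habs m hm))

theorem improperlyIntegrable_cexp_mul_sq_smul {b α : ℝ} {n : ℕ} (ha : a ≠ 0) (hn : α + 1 < n)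
    (hf : ContDiffOn ℝ n f (Ici b))
    (hbound : iteratedDerivWithin n f (Ici b) =O[atTop] fun y => y ^ α)
    (hlo : ∀ k < n, iteratedDerivWithin k f (Ici b) =o[atTop] fun y => y ^ (k + 1)) :
    ImproperlyIntegrable (fun y : ℝ => Complex.exp (Complex.I * a * y ^ 2) • f y) b := by
  have hpos : ImproperlyIntegrable (fun y => dampedChirp a 0 y • f y) (max b 1) :=
    improperlyIntegrable_dampedChirp_smul ha (one_pos.trans_le (le_max_right b 1))
      (le_max_left b 1) (d := 0) (by simpa using hn) hf hbound hlo 0 le_rfl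
  simp only [dampedChirp_zero] at hpos
  have hFc : ContinuousOn (fun y : ℝ => Complex.exp (Complex.I * a * y ^ 2) • f y) (Ici b) :=
    ContinuousOn.smul (by fun_prop) hf.continuousOn
  exact hpos.change_left
    (intervalIntegrable_of_continuousOn_Ici hFc _ (le_max_left b 1))

end Chirp

theorem stmt13_general {E : Type*} [NormedAddCommGroup E] [NormedSpace ℂ E] [CompleteSpace E]
    {a b α : ℝ} {n : ℕ} {f : ℝ → E} (ha : a ≠ 0) (hn : α + 1 < n) (hf : ContDiffOn ℝ n f (Ici b))
    (hbound : iteratedDerivWithin n f (Ici b) =O[atTop] fun y => y ^ α)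
    (hlo : ∀ k < n, iteratedDerivWithin k f (Ici b) =o[atTop] fun y => y ^ (k + 1)) :
    ∃ L : E,
      Tendsto (fun ε : ℝ => ∫ y in Ioi b,
        (Complex.exp (-(ε : ℂ) * y ^ 2) * Complex.exp (Complex.I * a * y ^ 2)) • f y)
        (𝓝[>] 0) (𝓝 L) ∧
      Tendsto (fun R : ℝ => ∫ y in b..R, Complex.exp (Complex.I * a * y ^ 2) • f y)
        atTop (𝓝 L) := by
  have hFc : ContinuousOn (fun y : ℝ => Complex.exp (Complex.I * a * y ^ 2) • f y) (Ici b) :=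
    ContinuousOn.smul (by fun_prop) hf.continuousOn
  obtain ⟨-, L, hL⟩ := improperlyIntegrable_cexp_mul_sq_smul ha hn hf hbound hlo
  obtain ⟨s, hs⟩ := exists_isBigO_rpow_of_iteratedDerivWithin hbound hlo
  have hFO : (fun y : ℝ => Complex.exp (Complex.I * a * y ^ 2) • f y) =O[atTop]
      fun y => y ^ s := by
    simpa only [dampedChirp_zero, Nat.cast_zero, sub_zero] using
      isBigO_dampedChirp_smul (a := a) (m := 0) hs
  refine ⟨L, (tendsto_integral_exp_neg_mul_sq_smul hFc hFO hL).congr fun ε => ?_, hL⟩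
  simp only [mul_smul, ← Complex.ofReal_neg, ← Complex.ofReal_pow, ← Complex.ofReal_mul,
    ← Complex.ofReal_exp, Complex.coe_smul]

lemma MemCnAlpha.isBigO_iteratedDerivWithin {b α : ℝ} {n : ℕ} {f : ℝ → ℂ}
    (hf : MemCnAlpha b n α f) :
    iteratedDerivWithin n f (Ici b) =O[atTop] fun y => y ^ α := by
  obtain ⟨-, M, -, hM⟩ := hf
  refine Asymptotics.IsBigO.of_bound M ?_
  filter_upwards [eventually_ge_atTop b, eventually_ge_atTop 0] with y hy hy0
  rw [Real.norm_of_nonneg (Real.rpow_nonneg hy0 α)]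
  exact hM y hy

/-- if `f ∈ C_α^n([b,∞))` with `n > α + 1` satisfies
`f^{(k)}(y) = o(y^{k+1})` as `y → ∞` for all `k ∈ {0,…,n-1}`, then the oscillatory integral
(the limit `ε → 0⁺` of the Gaussian-regularized integrals) coincides with the improper
Riemann integral `lim_{R→∞} ∫_b^R e^{iay²} f(y) dy`. -/
theorem stmt13 (a : ℝ) (ha : a ≠ 0) (b : ℝ) (hb : 0 < b) (n : ℕ) (α : ℝ) (hα : 0 ≤ α)
    (hn : α + 1 < n) (f : ℝ → ℂ) (hf : MemCnAlpha b n α f)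
    (hlo : ∀ k < n, (fun y : ℝ => iteratedDerivWithin k f (Set.Ici b) y)
      =o[Filter.atTop] fun y : ℝ => y ^ (k + 1))
    (L : ℂ)
    (hL : Filter.Tendsto
      (fun ε : ℝ => ∫ y in Set.Ioi b,
        Complex.exp (-(ε : ℂ) * y ^ 2) * Complex.exp (Complex.I * a * y ^ 2) * f y)
      (𝓝[>] 0) (𝓝 L)) :
    Filter.Tendsto (fun R : ℝ => ∫ y in b..R, Complex.exp (Complex.I * a * y ^ 2) * f y)
      Filter.atTop (𝓝 L) := by
  obtain ⟨L', hreg, himp⟩ := stmt13_general ha hn hf.1 hf.isBigO_iteratedDerivWithin hlo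
  exact tendsto_nhds_unique hL hreg ▸ himp
end
end

section
/- Let I⊆ℝ be an open interval, let a,b:I→ℝ be absolutely continuous with a(s)≠0 for all s∈I and b(s)≥b₀>0 for all s∈I and some constant b₀. Let f:I×[b₀,∞)→ℂ satisfy: (i) s↦f(s,y) is absolutely continuous on I for every y∈[b₀,∞); (ii) there exist n∈ℕ, α≥0 with n>α+3 such that f(s,·)∈C_α^n([b₀,∞)) and (∂f/∂s)(s,·)∈C_{α+2}^n([b₀,∞)) for almost every s∈I, and the norms ‖f(s,·)‖_{C_α^n([b₀,∞))} and ‖(∂f/∂s)(s,·)‖_{C_{α+2}^n([b₀,∞))} are locally bounded on I. Then for every s∈I and y₀∈ℝ the limit ψ(s) := lim_{ε→0⁺} ∫_{b(s)}^∞ e^{−ε(y−y₀)²} e^{ia(s)y²} f(s,y) dy exists, is independent of y₀, ψ is absolutely continuous on I, and for almost every s∈I one has ψ'(s) = −b'(s) e^{ia(s)b(s)²} f(s,b(s)) + lim_{ε→0⁺} ∫_{b(s)}^∞ e^{−ε(y−y₀)²} (d/ds)( e^{ia(s)y²} f(s,y) ) dy. -/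
open Set Filter MeasureTheory Topology

noncomputable section

/-- Absolute continuity of `g` on a set `I ⊆ ℝ`: `g` is an indefinite integral of a locally
integrable function `h` on `I`. -/
def IsACOn {E : Type*} [NormedAddCommGroup E] [NormedSpace ℝ E] (I : Set ℝ) (g : ℝ → E) : Prop :=
  ∃ h : ℝ → E, MeasureTheory.LocallyIntegrableOn h I ∧
    ∀ s₁ ∈ I, ∀ s₂ ∈ I, s₁ < s₂ → g s₂ - g s₁ = ∫ s in s₁..s₂, h s

/- Since `e^{iay²} = (2iay)⁻¹ d/dy e^{iay²}`, one integration by parts trades a factor `y` for a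
derivative of the amplitude.  For an amplitude whose `k`-th derivative is `O(y^{γ - k})`, as the
elements of `C_α^n` with `γ = n + α`, the order drops by `2`, so after `n` steps the regularised
integral has an absolutely convergent integrand, uniformly in `ε`, as soon as `γ < 2n - 1`.  This is
where `n > α + 3` enters: the parameter derivative of the amplitude has order `γ + 2`.

For fixed `ε > 0` the regularised integral is differentiated by the classical Leibniz rule.  Its
derivative converges pointwise and is dominated by a locally integrable function of `s`, so `ε → 0`
may be taken in the integrated form of the rule.  The amplitude is only assumed regular for almost
every `s`; at an exceptional `s` the limit exists because the difference to a regular parameter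
converges. -/

section Symbol

variable {E : Type*} [NormedAddCommGroup E] [NormedSpace ℝ E]

/-- Symbols of order `γ` with `m` controlled derivatives on `[b, ∞)`, in the sense of
pseudodifferential calculus: each derivative lowers the growth order by one. One constant `C`
serves for all derivatives. -/
structure IsSymbol (b : ℝ) (m : ℕ) (γ C : ℝ) (F : ℝ → E) : Prop where
  contDiffOn : ContDiffOn ℝ m F (Ici b)
  norm_iteratedDerivWithin_le : ∀ k ≤ m, ∀ y ∈ Ici b,
    ‖iteratedDerivWithin k F (Ici b) y‖ ≤ C * y ^ (γ - k)

namespace IsSymbol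

variable {b γ C C' : ℝ} {m m' : ℕ} {F G : ℝ → E}

lemma continuousOn (hF : IsSymbol b m γ C F) : ContinuousOn F (Ici b) := hF.contDiffOn.continuousOn

lemma norm_le (hF : IsSymbol b m γ C F) {y : ℝ} (hy : y ∈ Ici b) : ‖F y‖ ≤ C * y ^ γ := by
  simpa using hF.norm_iteratedDerivWithin_le 0 m.zero_le y hy

lemma const_nonneg (hF : IsSymbol b m γ C F) (hb : 0 < b) : 0 ≤ C :=
  nonneg_of_mul_nonneg_left ((norm_nonneg _).trans (hF.norm_le self_mem_Ici))
    (Real.rpow_pos_of_pos hb γ)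

lemma mono_const (hF : IsSymbol b m γ C F) (hb : 0 < b) (hC : C ≤ C') : IsSymbol b m γ C' F where
  contDiffOn := hF.contDiffOn
  norm_iteratedDerivWithin_le k hk y hy := by
    have hy₀ : 0 < y := hb.trans_le hy
    exact (hF.norm_iteratedDerivWithin_le k hk y hy).trans (by gcongr)

lemma of_le (hF : IsSymbol b m γ C F) (hm : m' ≤ m) : IsSymbol b m' γ C F where
  contDiffOn := hF.contDiffOn.of_le (mod_cast hm)
  norm_iteratedDerivWithin_le k hk := hF.norm_iteratedDerivWithin_le k (hk.trans hm)

lemma mono_left {t : ℝ} (hF : IsSymbol b m γ C F) (ht : t ∈ Ici b) : IsSymbol t m γ C F where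
  contDiffOn := hF.contDiffOn.mono (Ici_subset_Ici.2 ht)
  norm_iteratedDerivWithin_le k hk y hy := by
    rw [iteratedDerivWithin, iteratedFDerivWithin_subset (Ici_subset_Ici.2 ht) (uniqueDiffOn_Ici t)
      (uniqueDiffOn_Ici b) (hF.contDiffOn.of_le (mod_cast hk)) hy]
    exact hF.norm_iteratedDerivWithin_le k hk y (Ici_subset_Ici.2 ht hy)

lemma congr (hF : IsSymbol b m γ C F) (hG : EqOn G F (Ici b)) : IsSymbol b m γ C G where
  contDiffOn := hF.contDiffOn.congr hG
  norm_iteratedDerivWithin_le k hk y hy := by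
    rw [iteratedDerivWithin_congr hG hy]
    exact hF.norm_iteratedDerivWithin_le k hk y hy

lemma add (hF : IsSymbol b m γ C F) (hG : IsSymbol b m γ C' G) :
    IsSymbol b m γ (C + C') (F + G) where
  contDiffOn := hF.contDiffOn.add hG.contDiffOn
  norm_iteratedDerivWithin_le k hk y hy := by
    have hk' : (k : WithTop ℕ∞) ≤ m := mod_cast hk
    rw [iteratedDerivWithin_add hy (uniqueDiffOn_Ici b) ((hF.contDiffOn y hy).of_le hk')
      ((hG.contDiffOn y hy).of_le hk'), add_mul]
    exact (norm_add_le _ _).trans (add_le_add (hF.norm_iteratedDerivWithin_le k hk y hy)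
      (hG.norm_iteratedDerivWithin_le k hk y hy))

lemma const_smul {R : Type*} [NormedField R] [NormedSpace R E] [SMulCommClass ℝ R E]
    (hF : IsSymbol b m γ C F) (c : R) : IsSymbol b m γ (‖c‖ * C) (c • F) where
  contDiffOn := hF.contDiffOn.const_smul c
  norm_iteratedDerivWithin_le k hk y hy := by
    rw [iteratedDerivWithin_const_smul hy (uniqueDiffOn_Ici b) c
      ((hF.contDiffOn y hy).of_le (mod_cast hk)), norm_smul, mul_assoc]
    gcongr
    exact hF.norm_iteratedDerivWithin_le k hk y hy

end IsSymbol

variable {b γ C : ℝ} {m : ℕ} {F : ℝ → E}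

lemma isSymbol_zero_iff :
    IsSymbol b 0 γ C F ↔ ContinuousOn F (Ici b) ∧ ∀ y ∈ Ici b, ‖F y‖ ≤ C * y ^ γ := by
  refine ⟨fun h ↦ ⟨h.continuousOn, fun y hy ↦ h.norm_le hy⟩, fun h ↦ ⟨by simpa using h.1, ?_⟩⟩
  intro k hk y hy
  simpa [Nat.le_zero.1 hk] using h.2 y hy

lemma isSymbol_succ_iff :
    IsSymbol b (m + 1) γ C F ↔ DifferentiableOn ℝ F (Ici b) ∧
      (∀ y ∈ Ici b, ‖F y‖ ≤ C * y ^ γ) ∧ IsSymbol b m (γ - 1) C (derivWithin F (Ici b)) := by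
  have exponent (k : ℕ) : γ - 1 - k = γ - (k + 1 : ℕ) := by push_cast; ring
  constructor
  · refine fun h ↦ ⟨h.contDiffOn.differentiableOn (by simp), fun y hy ↦ h.norm_le hy,
      h.contDiffOn.derivWithin (uniqueDiffOn_Ici b) (by simp), fun k hk y hy ↦ ?_⟩
    rw [← iteratedDerivWithin_succ', exponent]
    exact h.norm_iteratedDerivWithin_le (k + 1) (by omega) y hy
  · rintro ⟨hdiff, hbound, hderiv⟩
    refine ⟨?_, fun k hk y hy ↦ ?_⟩
    · rw [Nat.cast_succ, contDiffOn_succ_iff_derivWithin (uniqueDiffOn_Ici b)]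
      exact ⟨hdiff, by simp, hderiv.contDiffOn⟩
    · cases k with
      | zero => simpa using hbound y hy
      | succ k =>
        rw [iteratedDerivWithin_succ', ← exponent]
        exact hderiv.norm_iteratedDerivWithin_le k (by omega) y hy

protected lemma IsSymbol.derivWithin (hF : IsSymbol b (m + 1) γ C F) :
    IsSymbol b m (γ - 1) C (derivWithin F (Ici b)) :=
  (isSymbol_succ_iff.1 hF).2.2

lemma hasDerivWithinAt_rpow_smul (hb : 0 < b) (p : ℝ) (hF : DifferentiableOn ℝ F (Ici b)) {y : ℝ}
    (hy : y ∈ Ici b) : HasDerivWithinAt (fun x ↦ x ^ p • F x)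
      (y ^ p • derivWithin F (Ici b) y + (p * y ^ (p - 1)) • F y) (Ici b) y :=
  (Real.hasDerivAt_rpow_const (.inl (hb.trans_le hy).ne')).hasDerivWithinAt.smul
    (hF y hy).hasDerivWithinAt

lemma IsSymbol.norm_rpow_smul_le (hF : IsSymbol b m γ C F) (hb : 0 < b) (p : ℝ) {y : ℝ}
    (hy : y ∈ Ici b) : ‖y ^ p • F y‖ ≤ C * y ^ (γ + p) := by
  have hy₀ : 0 < y := hb.trans_le hy
  rw [norm_smul, Real.norm_of_nonneg (by positivity), Real.rpow_add hy₀, ← mul_assoc, mul_comm]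
  gcongr
  exact hF.norm_le hy

lemma exists_isSymbol_rpow_smul (hb : 0 < b) (m : ℕ) (p : ℝ) : ∃ K, 0 ≤ K ∧
    ∀ (γ C : ℝ) (F : ℝ → E), IsSymbol b m γ C F →
      IsSymbol b m (γ + p) (K * C) fun y ↦ y ^ p • F y := by
  induction m generalizing p with
  | zero =>
    refine ⟨1, zero_le_one, fun γ C F hF ↦ isSymbol_zero_iff.2 ⟨?_, fun y hy ↦ ?_⟩⟩
    · exact (continuousOn_id.rpow_const fun y hy ↦ .inl (hb.trans_le hy).ne').smul hF.continuousOn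
    · simpa only [one_mul] using hF.norm_rpow_smul_le hb p hy
  | succ m ih =>
    obtain ⟨K₀, -, h₀⟩ := ih p
    obtain ⟨K₁, -, h₁⟩ := ih (p - 1)
    refine ⟨max 1 (K₀ + |p| * K₁), by positivity, fun γ C F hF ↦ ?_⟩
    have hC := hF.const_nonneg hb
    have hdiff := (isSymbol_succ_iff.1 hF).1
    refine isSymbol_succ_iff.2 ⟨fun y hy ↦
      (hasDerivWithinAt_rpow_smul hb p hdiff hy).differentiableWithinAt, fun y hy ↦ ?_, ?_⟩
    · have hy₀ : 0 < y := hb.trans_le hy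
      refine (hF.norm_rpow_smul_le hb p hy).trans ?_
      gcongr
      exact le_mul_of_one_le_left hC (le_max_left _ _)
    · have hsum := (h₀ (γ - 1) C _ hF.derivWithin).add (γ := γ - 1 + p) <| by
        simpa only [show γ + (p - 1) = γ - 1 + p by ring] using
          (h₁ γ C F (hF.of_le m.le_succ)).const_smul p
      rw [show γ + p - 1 = γ - 1 + p by ring]
      refine (hsum.congr fun y hy ↦ ?_).mono_const hb ?_
      · rw [(hasDerivWithinAt_rpow_smul hb p hdiff hy).derivWithin (uniqueDiffOn_Ici b y hy)]
        simp only [Pi.add_apply, Pi.smul_apply, mul_smul]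
      · rw [← mul_assoc, ← add_mul]
        gcongr
        exact le_max_right _ _

lemma norm_le_rpow_succ_of_norm_derivWithin_le (hb : 0 < b) {β M N : ℝ} (hβ : 0 ≤ β)
    (hF : DifferentiableOn ℝ F (Ici b)) (hleft : ‖F b‖ ≤ M * b ^ (β + 1)) (hM : 0 ≤ M)
    (hderiv : ∀ y ∈ Ici b, ‖derivWithin F (Ici b) y‖ ≤ N * y ^ β) (hN : 0 ≤ N) {y : ℝ}
    (hy : y ∈ Ici b) : ‖F y‖ ≤ (M + N) * y ^ (β + 1) := by
  have hy₀ : 0 < y := hb.trans_le hy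
  have hby : b ≤ y := hy
  have hincr : ‖F y - F b‖ ≤ N * y ^ β * ‖y - b‖ := by
    refine (convex_Icc b y).norm_image_sub_le_of_norm_hasDerivWithin_le
      (fun x hx ↦ (hF x hx.1).hasDerivWithinAt.mono Icc_subset_Ici_self) (fun x hx ↦ ?_)
      (left_mem_Icc.2 hy) (right_mem_Icc.2 hy)
    have hx₀ : 0 < x := hb.trans_le hx.1
    exact (hderiv x hx.1).trans (by gcongr; exact hx.2)
  calc ‖F y‖ ≤ ‖F b‖ + ‖F y - F b‖ := norm_le_norm_add_norm_sub' _ _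
    _ ≤ M * b ^ (β + 1) + N * y ^ β * ‖y - b‖ := add_le_add hleft hincr
    _ ≤ M * y ^ (β + 1) + N * y ^ β * y := by
      gcongr
      rw [Real.norm_of_nonneg (sub_nonneg.2 hby)]
      linarith
    _ = (M + N) * y ^ (β + 1) := by rw [Real.rpow_add_one hy₀.ne']; ring

end Symbol

lemma norm_iteratedDerivWithin_left_le {b α M : ℝ} {n : ℕ} {f : ℝ → ℂ} (hb : 0 < b)
    (hM : CnAlphaNorm b n α f ≤ M) {k : ℕ} (hk : k < n) :
    ‖iteratedDerivWithin k f (Ici b) b‖ ≤ M * b ^ ((n : ℝ) - k + α) := by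
  have hsup : 0 ≤ ⨆ y : Ici b, ‖iteratedDerivWithin n f (Ici b) y‖ / (y : ℝ) ^ α :=
    Real.iSup_nonneg fun y ↦ have := hb.trans_le y.2; by positivity
  rw [← div_le_iff₀ (by positivity)]
  calc ‖iteratedDerivWithin k f (Ici b) b‖ / b ^ ((n : ℝ) - k + α)
      ≤ ∑ j ∈ Finset.range n, ‖iteratedDerivWithin j f (Ici b) b‖ / b ^ ((n : ℝ) - j + α) :=
        Finset.single_le_sum
          (f := fun j : ℕ ↦ ‖iteratedDerivWithin j f (Ici b) b‖ / b ^ ((n : ℝ) - j + α))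
          (fun _ _ ↦ by positivity) (Finset.mem_range.2 hk)
    _ ≤ M := (le_add_of_nonneg_right hsup).trans hM

namespace MemCnAlpha

variable {b α M : ℝ} {n : ℕ} {f : ℝ → ℂ}

lemma norm_iteratedDerivWithin_top_le (hb : 0 < b) (hf : MemCnAlpha b n α f)
    (hM : CnAlphaNorm b n α f ≤ M) {y : ℝ} (hy : y ∈ Ici b) :
    ‖iteratedDerivWithin n f (Ici b) y‖ ≤ M * y ^ α := by
  obtain ⟨-, M', -, hM'⟩ := hf
  have hpos (z : Ici b) : 0 < (z : ℝ) ^ α := Real.rpow_pos_of_pos (hb.trans_le z.2) α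
  have hbdd : BddAbove
      (range fun z : Ici b ↦ ‖iteratedDerivWithin n f (Ici b) z‖ / (z : ℝ) ^ α) := by
    refine ⟨M', ?_⟩
    rintro _ ⟨z, rfl⟩
    exact (div_le_iff₀ (hpos z)).2 (hM' z z.2)
  have hsum : 0 ≤ ∑ k ∈ Finset.range n,
      ‖iteratedDerivWithin k f (Ici b) b‖ / b ^ ((n : ℝ) - k + α) :=
    Finset.sum_nonneg fun _ _ ↦ by positivity
  rw [← div_le_iff₀ (hpos ⟨y, hy⟩)]
  exact (le_ciSup hbdd ⟨y, hy⟩).trans ((le_add_of_nonneg_left hsum).trans hM)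

lemma bound_nonneg (hb : 0 < b) (hf : MemCnAlpha b n α f) (hM : CnAlphaNorm b n α f ≤ M) :
    0 ≤ M :=
  nonneg_of_mul_nonneg_left ((norm_nonneg _).trans
    (hf.norm_iteratedDerivWithin_top_le hb hM self_mem_Ici)) (Real.rpow_pos_of_pos hb α)

lemma norm_iteratedDerivWithin_sub_le (hb : 0 < b) (hα : 0 ≤ α) (hf : MemCnAlpha b n α f)
    (hM : CnAlphaNorm b n α f ≤ M) {j : ℕ} (hj : j ≤ n) :
    ∀ y ∈ Ici b, ‖iteratedDerivWithin (n - j) f (Ici b) y‖ ≤ (j + 1) * M * y ^ (j + α) := by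
  have hM₀ : 0 ≤ M := hf.bound_nonneg hb hM
  induction j with
  | zero => simpa using fun y hy ↦ hf.norm_iteratedDerivWithin_top_le hb hM hy
  | succ j ih =>
    intro y hy
    have hleft := norm_iteratedDerivWithin_left_le hb hM (k := n - (j + 1)) (by omega)
    have hderiv := ih (by omega)
    rw [show n - j = n - (j + 1) + 1 by omega, iteratedDerivWithin_succ] at hderiv
    rw [show (n : ℝ) - (n - (j + 1) : ℕ) + α = j + α + 1 by
      rw [Nat.cast_sub hj]; push_cast; ring] at hleft
    have hdiff : DifferentiableOn ℝ (iteratedDerivWithin (n - (j + 1)) f (Ici b)) (Ici b) :=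
      hf.1.differentiableOn_iteratedDerivWithin (mod_cast (by omega)) (uniqueDiffOn_Ici b)
    convert norm_le_rpow_succ_of_norm_derivWithin_le hb (by positivity) hdiff hleft hM₀ hderiv
      (by positivity) hy using 2
    · push_cast; ring
    · push_cast; ring_nf

lemma isSymbol (hb : 0 < b) (hα : 0 ≤ α) (hf : MemCnAlpha b n α f)
    (hM : CnAlphaNorm b n α f ≤ M) : IsSymbol b n (n + α) ((n + 1) * M) f where
  contDiffOn := hf.1
  norm_iteratedDerivWithin_le k hk y hy := by
    have hy₀ : 0 < y := hb.trans_le hy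
    have hM₀ : 0 ≤ M := hf.bound_nonneg hb hM
    have h := hf.norm_iteratedDerivWithin_sub_le hb hα hM (j := n - k) (by omega) y hy
    rw [Nat.sub_sub_self hk, Nat.cast_sub hk, sub_add_eq_add_sub (n : ℝ) k α] at h
    refine h.trans ?_
    gcongr
    exact sub_le_self (n : ℝ) k.cast_nonneg

end MemCnAlpha

section Gaussian

open Asymptotics

/-- The Gaussian convergence factor centred at `y₀`. -/
def gauss (y₀ ε y : ℝ) : ℂ := Complex.exp (-(ε : ℂ) * (y - y₀) ^ 2)

/-- The quadratic oscillation with frequency `a`. -/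
def fresnel (a y : ℝ) : ℂ := Complex.exp (Complex.I * a * y ^ 2)

/-- The integral of `Φ` over `(t, ∞)` with the Gaussian convergence factor inserted. -/
def gaussIntegral (y₀ t : ℝ) (Φ : ℝ → ℂ) (ε : ℝ) : ℂ := ∫ y in Ioi t, gauss y₀ ε y * Φ y

/-- The Gaussian-regularised integral of `Φ` over `(t, ∞)` has value `L`, whatever the centre of
the Gaussian. -/
def HasGaussIntegral (t : ℝ) (Φ : ℝ → ℂ) (L : ℂ) : Prop :=
  ∀ y₀ : ℝ, Tendsto (gaussIntegral y₀ t Φ) (𝓝[>] 0) (𝓝 L)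

variable {b t a γ C y₀ ε y : ℝ} {Φ : ℝ → ℂ}

lemma norm_gauss (y₀ ε y : ℝ) : ‖gauss y₀ ε y‖ = Real.exp (-ε * (y - y₀) ^ 2) := by
  rw [gauss, show -(ε : ℂ) * (y - y₀) ^ 2 = ((-ε * (y - y₀) ^ 2 : ℝ) : ℂ) by push_cast; ring,
    Complex.norm_exp_ofReal]

lemma norm_gauss_mul_le_norm (hε : 0 ≤ ε) (z : ℂ) : ‖gauss y₀ ε y * z‖ ≤ ‖z‖ := by
  rw [norm_mul, norm_gauss]
  refine mul_le_of_le_one_left (norm_nonneg z) (Real.exp_le_one_iff.2 ?_)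
  rw [neg_mul, neg_nonpos]
  positivity

@[fun_prop]
lemma continuous_gauss (y₀ ε : ℝ) : Continuous (gauss y₀ ε) := by
  unfold gauss
  fun_prop

lemma tendsto_gauss_one (y₀ y : ℝ) : Tendsto (gauss y₀ · y) (𝓝[>] 0) (𝓝 1) := by
  have hcont : Continuous (gauss y₀ · y) := by
    unfold gauss
    fun_prop
  simpa [gauss] using (hcont.tendsto 0).mono_left nhdsWithin_le_nhds

lemma norm_fresnel (a y : ℝ) : ‖fresnel a y‖ = 1 := by
  rw [fresnel, show Complex.I * a * y ^ 2 = ((a * y ^ 2 : ℝ) : ℂ) * Complex.I by push_cast; ring,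
    Complex.norm_exp_ofReal_mul_I]

@[fun_prop]
lemma continuous_fresnel (a : ℝ) : Continuous (fresnel a) := by
  unfold fresnel
  fun_prop

lemma hasDerivAt_gauss_mul_fresnel (y₀ ε a y : ℝ) :
    HasDerivAt (fun x ↦ gauss y₀ ε x * fresnel a x)
      (2 * ((Complex.I * a - ε) * y + ε * y₀) * (gauss y₀ ε y * fresnel a y)) y := by
  have hid : HasDerivAt (fun x : ℝ ↦ (x : ℂ)) 1 y := Complex.ofRealCLM.hasDerivAt
  have hg := ((((hid.sub_const (y₀ : ℂ)).pow 2).const_mul (-(ε : ℂ))).cexp)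
  have hf := (((hid.pow 2).const_mul (Complex.I * a)).cexp)
  refine (hg.mul hf).congr_deriv ?_
  simp only [gauss, fresnel, Pi.pow_apply]
  push_cast
  ring

lemma rpow_mul_exp_isBigO (γ y₀ : ℝ) (hε : 0 < ε) :
    (fun y ↦ y ^ γ * Real.exp (-ε * (y - y₀) ^ 2)) =O[atTop] fun y ↦ Real.exp (-(1 / 2) * y) := by
  refine IsBigO.trans (.of_bound (Real.exp (ε * y₀ ^ 2)) ?_)
    (rpow_mul_exp_neg_mul_sq_isLittleO_exp_neg (half_pos hε) γ).isBigO
  filter_upwards [eventually_gt_atTop 0] with y hy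
  rw [Real.norm_of_nonneg (by positivity), Real.norm_of_nonneg (by positivity), mul_left_comm,
    ← Real.exp_add]
  gcongr
  nlinarith [mul_nonneg hε.le (sq_nonneg (y - 2 * y₀))]

lemma continuousOn_rpow_mul_exp (hb : 0 < b) (γ ε y₀ : ℝ) :
    ContinuousOn (fun y ↦ y ^ γ * Real.exp (-ε * (y - y₀) ^ 2)) (Ici b) :=
  (continuousOn_id.rpow_const fun y hy ↦ .inl (hb.trans_le hy).ne').mul (by fun_prop)

lemma integrableOn_rpow_mul_exp (hb : 0 < b) (γ y₀ : ℝ) (hε : 0 < ε) :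
    IntegrableOn (fun y ↦ y ^ γ * Real.exp (-ε * (y - y₀) ^ 2)) (Ioi b) :=
  integrable_of_isBigO_exp_neg one_half_pos (continuousOn_rpow_mul_exp hb γ ε y₀)
    (rpow_mul_exp_isBigO γ y₀ hε)

lemma IsSymbol.norm_gauss_mul_le (hΦ : IsSymbol b 0 γ C Φ) (hy : y ∈ Ici b) :
    ‖gauss y₀ ε y * Φ y‖ ≤ C * (y ^ γ * Real.exp (-ε * (y - y₀) ^ 2)) := by
  rw [norm_mul, norm_gauss, ← mul_assoc, mul_comm]
  gcongr
  exact hΦ.norm_le hy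

lemma IsSymbol.continuousOn_gauss_mul (hΦ : IsSymbol b 0 γ C Φ) :
    ContinuousOn (fun y ↦ gauss y₀ ε y * Φ y) (Ici b) :=
  (continuous_gauss y₀ ε).continuousOn.mul hΦ.continuousOn

lemma IsSymbol.integrableOn_gauss_mul (hb : 0 < b) (hΦ : IsSymbol b 0 γ C Φ) (hε : 0 < ε) :
    IntegrableOn (fun y ↦ gauss y₀ ε y * Φ y) (Ioi b) := by
  refine ((integrableOn_rpow_mul_exp hb γ y₀ hε).const_mul C).mono'
    ((hΦ.continuousOn_gauss_mul.mono Ioi_subset_Ici_self).aestronglyMeasurable measurableSet_Ioi) ?_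
  filter_upwards [ae_restrict_mem measurableSet_Ioi] with y hy
  simpa only [norm_mul] using hΦ.norm_gauss_mul_le (y₀ := y₀) (ε := ε) (mem_Ici_of_Ioi hy)

lemma IsSymbol.tendsto_gauss_mul_atTop (hΦ : IsSymbol b 0 γ C Φ) (hε : 0 < ε) :
    Tendsto (fun y ↦ gauss y₀ ε y * Φ y) atTop (𝓝 0) := by
  have hexp : Tendsto (fun y : ℝ ↦ Real.exp (-(1 / 2) * y)) atTop (𝓝 0) :=
    Real.tendsto_exp_atBot.comp (tendsto_id.const_mul_atTop_of_neg (by norm_num))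
  refine squeeze_zero_norm' (a := fun y ↦ C * (y ^ γ * Real.exp (-ε * (y - y₀) ^ 2))) ?_ (by
    simpa using ((rpow_mul_exp_isBigO γ y₀ hε).trans_tendsto hexp).const_mul C)
  filter_upwards [mem_atTop b] with y hy using hΦ.norm_gauss_mul_le hy

lemma IsSymbol.fresnel_mul (hΦ : IsSymbol b 0 γ C Φ) (a : ℝ) :
    IsSymbol b 0 γ C fun y ↦ fresnel a y * Φ y := by
  refine isSymbol_zero_iff.2 ⟨(continuous_fresnel a).continuousOn.mul hΦ.continuousOn,
    fun y hy ↦ ?_⟩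
  rw [norm_mul, norm_fresnel, one_mul]
  exact hΦ.norm_le hy

lemma IsSymbol.norm_gauss_mul_fresnel_mul_le {m : ℕ} (hΦ : IsSymbol b m γ C Φ) (hε : 0 ≤ ε)
    (hy : y ∈ Ici b) : ‖gauss y₀ ε y * (fresnel a y * Φ y)‖ ≤ C * y ^ γ :=
  (norm_gauss_mul_le_norm hε _).trans (((hΦ.of_le m.zero_le).fresnel_mul a).norm_le hy)

lemma IsSymbol.norm_gaussIntegral_le (hb : 0 < b) (hγ : γ < -1) (hΦ : IsSymbol b 0 γ C Φ)
    (ht : t ∈ Ici b) (hε : 0 ≤ ε) :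
    ‖gaussIntegral y₀ t Φ ε‖ ≤ (∫ y in Ioi b, y ^ γ) * C := by
  have hint : IntegrableOn (fun y ↦ y ^ γ * C) (Ioi b) :=
    (integrableOn_Ioi_rpow_of_lt hγ hb).mul_const C
  have hC := hΦ.const_nonneg hb
  calc ‖gaussIntegral y₀ t Φ ε‖ ≤ ∫ y in Ioi t, y ^ γ * C := by
        refine norm_integral_le_of_norm_le (hint.mono_set (Ioi_subset_Ioi ht)) ?_
        filter_upwards [ae_restrict_mem measurableSet_Ioi] with y hy
        rw [mul_comm (y ^ γ)]
        exact (norm_gauss_mul_le_norm hε _).trans ((hΦ.mono_left ht).norm_le (mem_Ici_of_Ioi hy))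
    _ ≤ ∫ y in Ioi b, y ^ γ * C := by
        refine setIntegral_mono_set hint ?_ (Ioi_subset_Ioi ht).eventuallyLE
        filter_upwards [ae_restrict_mem measurableSet_Ioi] with y hy
        have hy₀ : 0 < y := hb.trans hy
        positivity
    _ = (∫ y in Ioi b, y ^ γ) * C := integral_mul_const C _

lemma IsSymbol.hasGaussIntegral (hb : 0 < b) (hγ : γ < -1) (hΦ : IsSymbol b 0 γ C Φ) :
    HasGaussIntegral b Φ (∫ y in Ioi b, Φ y) := by
  intro y₀
  refine tendsto_integral_filter_of_dominated_convergence (fun y ↦ C * y ^ γ)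
    (.of_forall fun ε ↦ ?_) ?_ ((integrableOn_Ioi_rpow_of_lt hγ hb).const_mul C)
    (.of_forall fun y ↦ by simpa using (tendsto_gauss_one y₀ y).mul_const (Φ y))
  · exact (hΦ.continuousOn_gauss_mul.mono Ioi_subset_Ici_self).aestronglyMeasurable
      measurableSet_Ioi
  · filter_upwards [self_mem_nhdsWithin] with ε hε
    filter_upwards [ae_restrict_mem measurableSet_Ioi] with y hy
    exact (norm_gauss_mul_le_norm (mem_Ioi.1 hε).le _).trans (hΦ.norm_le (mem_Ici_of_Ioi hy))

lemma IsSymbol.hasDerivAt_gauss_mul_fresnel_mul {G : ℝ → ℂ} (hG : IsSymbol b 1 γ C G)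
    (hy : b < y) :
    HasDerivAt (fun y ↦ gauss y₀ ε y * fresnel a y * G y)
      (2 * (Complex.I * a - ε) * (gauss y₀ ε y * (fresnel a y * (y * G y)))
        + gauss y₀ ε y * (fresnel a y * derivWithin G (Ici b) y)
        + 2 * ε * y₀ * (gauss y₀ ε y * (fresnel a y * G y))) y := by
  have hGy : HasDerivAt G (derivWithin G (Ici b) y) y :=
    ((isSymbol_succ_iff.1 hG).1 y hy.le).hasDerivWithinAt.hasDerivAt (Ici_mem_nhds hy)
  refine ((hasDerivAt_gauss_mul_fresnel y₀ ε a y).mul hGy).congr_deriv ?_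
  ring

lemma IsSymbol.integral_by_parts {G : ℝ → ℂ} (hb : 0 < b) (hG : IsSymbol b 1 γ C G)
    (ht : t ∈ Ici b) (hε : 0 < ε) :
    2 * (Complex.I * a - ε) * gaussIntegral y₀ t (fun y ↦ fresnel a y * (y * G y)) ε =
      -(gauss y₀ ε t * (fresnel a t * G t))
        - gaussIntegral y₀ t (fun y ↦ fresnel a y * derivWithin G (Ici b) y) ε
        - 2 * ε * y₀ * gaussIntegral y₀ t (fun y ↦ fresnel a y * G y) ε := by
  have hG₀ := hG.of_le zero_le_one
  have int {β D : ℝ} {Φ : ℝ → ℂ} (hΦ : IsSymbol b 0 β D Φ) :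
      IntegrableOn (fun y ↦ gauss y₀ ε y * (fresnel a y * Φ y)) (Ioi t) :=
    ((hΦ.fresnel_mul a).mono_left ht).integrableOn_gauss_mul (hb.trans_le ht) hε
  obtain ⟨K, -, hK⟩ := exists_isSymbol_rpow_smul (E := ℂ) hb 0 1
  have hyG : IsSymbol b 0 (γ + 1) (K * C) fun y ↦ (y : ℂ) * G y := by
    simpa only [Real.rpow_one, Complex.real_smul] using hK _ _ _ hG₀
  have hcont : ContinuousWithinAt (fun y ↦ gauss y₀ ε y * fresnel a y * G y) (Ici t) t :=
    ((by fun_prop : Continuous fun y ↦ gauss y₀ ε y * fresnel a y).continuousOn.mul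
      (hG.continuousOn.mono (Ici_subset_Ici.2 ht))) t self_mem_Ici
  have hint₁ := (int hyG).const_mul (2 * (Complex.I * a - ε))
  have hint₂ : IntegrableOn (fun y ↦ 2 * (Complex.I * a - ε) *
        (gauss y₀ ε y * (fresnel a y * (y * G y)))
      + gauss y₀ ε y * (fresnel a y * derivWithin G (Ici b) y)) (Ioi t) :=
    hint₁.add (int hG.derivWithin)
  have hint₃ := (int hG₀).const_mul (2 * ε * y₀ : ℂ)
  have key := integral_Ioi_of_hasDerivAt_of_tendsto hcont
    (fun y hy ↦ hG.hasDerivAt_gauss_mul_fresnel_mul (ht.trans_lt hy)) (hint₂.add hint₃)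
    (by simpa only [mul_assoc] using (hG₀.fresnel_mul a).tendsto_gauss_mul_atTop hε)
  rw [integral_add hint₂ hint₃, integral_add hint₁ (int hG.derivWithin), integral_const_mul,
    integral_const_mul] at key
  simp only [gaussIntegral]
  linear_combination key

end Gaussian

section Oscillatory

variable {b t a γ C : ℝ} {m : ℕ} {F : ℝ → ℂ}

/- Since `d/dy (gauss y₀ ε y * fresnel a y) = 2 ((I a - ε) y + ε y₀) gauss y₀ ε y * fresnel a y`,
integrating `F = y * (F / y)` by parts trades `F` for `(F / y)'`, whose order is lower by two, and
for `ε * F / y`, whose order is lower by one and which carries the small factor `ε`. -/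
lemma exists_gaussIntegral_fresnel_mul_eq (hb : 0 < b) (m : ℕ) : ∃ K, 0 ≤ K ∧
    ∀ (γ C : ℝ) (F : ℝ → ℂ), IsSymbol b (m + 1) γ C F → ∃ G G' : ℝ → ℂ,
      IsSymbol b (m + 1) (γ - 1) (K * C) G ∧ IsSymbol b m (γ - 2) (K * C) G' ∧
      ∀ t ∈ Ici b, ∀ a y₀ ε : ℝ, 0 < ε →
        2 * (Complex.I * a - ε) * gaussIntegral y₀ t (fun y ↦ fresnel a y * F y) ε =
          -(gauss y₀ ε t * (fresnel a t * G t))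
            - gaussIntegral y₀ t (fun y ↦ fresnel a y * G' y) ε
            - 2 * ε * y₀ * gaussIntegral y₀ t (fun y ↦ fresnel a y * G y) ε := by
  obtain ⟨K, hK, hdiv⟩ := exists_isSymbol_rpow_smul (E := ℂ) hb (m + 1) (-1)
  refine ⟨K, hK, fun γ C F hF ↦ ?_⟩
  have hG : IsSymbol b (m + 1) (γ - 1) (K * C) fun y ↦ y ^ (-1 : ℝ) • F y := hdiv γ C F hF
  refine ⟨_, _, hG, by convert hG.derivWithin using 1; ring, fun t ht a y₀ ε hε ↦ ?_⟩
  rw [← (hG.of_le (by omega)).integral_by_parts hb ht hε]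
  congr 1
  refine setIntegral_congr_fun measurableSet_Ioi fun y hy ↦ ?_
  have hy₀ : (y : ℂ) ≠ 0 := mod_cast (hb.trans_le (ht.trans hy.le)).ne'
  simp only [Real.rpow_neg_one, Complex.real_smul, Complex.ofReal_inv]
  field_simp

lemma two_mul_abs_le_norm (a ε : ℝ) : 2 * |a| ≤ ‖2 * (Complex.I * a - ε)‖ := by
  rw [norm_mul, Complex.norm_ofNat]
  gcongr
  simpa using Complex.abs_im_le_norm (Complex.I * a - ε)

@[elab_as_elim]
lemma order_induction {P : ℕ → ℝ → Prop} (absolute : ∀ m γ, γ < -1 → P m γ)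
    (parts : ∀ m γ, P (m + 1) (γ - 1) → P m (γ - 2) → P (m + 1) γ) (hγ : γ < 2 * m - 1) :
    P m γ := by
  obtain ⟨k, hk⟩ := exists_nat_gt (γ + 1)
  induction k generalizing m γ with
  | zero =>
    rw [Nat.cast_zero] at hk
    exact absolute m γ (by linarith)
  | succ k ih =>
    rw [Nat.cast_succ] at hk
    cases m with
    | zero =>
      rw [Nat.cast_zero] at hγ
      exact absolute 0 γ (by linarith)
    | succ m =>
      rw [Nat.cast_succ] at hγ
      exact parts m γ (ih (by push_cast; linarith) (by linarith)) (ih (by linarith) (by linarith))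

lemma IsSymbol.exists_hasGaussIntegral (hb : 0 < b) (ha : a ≠ 0) (hγ : γ < 2 * m - 1)
    (hF : IsSymbol b m γ C F) (ht : t ∈ Ici b) :
    ∃ L, HasGaussIntegral t (fun y ↦ fresnel a y * F y) L := by
  suffices h : ∀ C F, IsSymbol b m γ C F →
      ∃ L, HasGaussIntegral t (fun y ↦ fresnel a y * F y) L from h C F hF
  refine order_induction (fun m γ hγ C F hF ↦ ?_) (fun m γ ih ih' C F hF ↦ ?_) hγ
  · exact ⟨_, (((hF.of_le m.zero_le).fresnel_mul a).mono_left ht).hasGaussIntegral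
      (hb.trans_le ht) hγ⟩
  · obtain ⟨K, -, hK⟩ := exists_gaussIntegral_fresnel_mul_eq hb m
    obtain ⟨G, G', hG, hG', hparts⟩ := hK γ C F hF
    obtain ⟨L, hL⟩ := ih _ G hG
    obtain ⟨L', hL'⟩ := ih' _ G' hG'
    refine ⟨(-(fresnel a t * G t) - L') / (2 * (Complex.I * a)), fun y₀ ↦ ?_⟩
    have hε : Tendsto (fun ε : ℝ ↦ (ε : ℂ)) (𝓝[>] 0) (𝓝 0) :=
      (Complex.continuous_ofReal.tendsto' 0 0 Complex.ofReal_zero).mono_left nhdsWithin_le_nhds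
    have hne (ε : ℝ) : 2 * (Complex.I * a - ε) ≠ 0 :=
      norm_pos_iff.1 ((by positivity : 0 < 2 * |a|).trans_le (two_mul_abs_le_norm a ε))
    have hlim := (((tendsto_gauss_one y₀ t).mul_const (fresnel a t * G t)).neg.sub
      (hL' y₀)).sub (((hε.const_mul 2).mul_const (y₀ : ℂ)).mul (hL y₀)) |>.div
      ((hε.const_sub (Complex.I * a)).const_mul 2) (by simpa using hne 0)
    simp only [one_mul, mul_zero, zero_mul, sub_zero] at hlim
    refine hlim.congr' ?_
    filter_upwards [self_mem_nhdsWithin] with ε hε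
    rw [Pi.div_apply, ← hparts t ht a y₀ ε hε, mul_div_cancel_left₀ _ (hne ε)]

lemma exists_norm_gaussIntegral_le (hb : 0 < b) {a₀ : ℝ} (ha₀ : 0 < a₀) (B y₀ : ℝ)
    (hγ : γ < 2 * m - 1) : ∃ K, 0 ≤ K ∧ ∀ (C : ℝ) (F : ℝ → ℂ), IsSymbol b m γ C F →
      ∀ a, a₀ ≤ |a| → ∀ t ∈ Icc b B, ∀ ε ∈ Ioc (0 : ℝ) 1,
        ‖gaussIntegral y₀ t (fun y ↦ fresnel a y * F y) ε‖ ≤ K * C := by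
  refine order_induction (fun m γ hγ ↦ ?_) (fun m γ ih ih' ↦ ?_) hγ
  · exact ⟨_, setIntegral_nonneg measurableSet_Ioi fun y hy ↦ Real.rpow_nonneg (hb.trans hy).le _,
      fun C F hF a _ t ht ε hε ↦
        ((hF.of_le m.zero_le).fresnel_mul a).norm_gaussIntegral_le hb hγ ht.1 hε.1.le⟩
  · obtain ⟨K, hK, hdiv⟩ := exists_gaussIntegral_fresnel_mul_eq hb m
    obtain ⟨K₁, hK₁, h₁⟩ := ih
    obtain ⟨K₂, hK₂, h₂⟩ := ih'
    obtain ⟨T, hT⟩ := isCompact_Icc.exists_bound_of_continuousOn (s := Icc b B)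
      (f := fun t ↦ t ^ (γ - 1)) <|
        continuousOn_id.rpow_const fun t ht ↦ .inl (hb.trans_le ht.1).ne'
    refine ⟨(|T| + K₂ + 2 * |y₀| * K₁) * K / (2 * a₀), by positivity,
      fun C F hF a ha t ht ε hε ↦ ?_⟩
    obtain ⟨G, G', hG, hG', hparts⟩ := hdiv γ C F hF
    have hC := hF.const_nonneg hb
    have hboundary : ‖gauss y₀ ε t * (fresnel a t * G t)‖ ≤ |T| * (K * C) := by
      rw [mul_comm |T|]
      refine (hG.norm_gauss_mul_fresnel_mul_le hε.1.le ht.1).trans ?_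
      gcongr
      exact (Real.le_norm_self _).trans ((hT t ht).trans (le_abs_self T))
    have hlower : ‖2 * ε * y₀ * gaussIntegral y₀ t (fun y ↦ fresnel a y * G y) ε‖ ≤
        2 * |y₀| * (K₁ * (K * C)) := by
      have h := h₁ _ G hG a ha t ht ε hε
      rw [norm_mul, norm_mul, norm_mul, Complex.norm_ofNat, Complex.norm_real, Complex.norm_real,
        Real.norm_of_nonneg hε.1.le, Real.norm_eq_abs]
      gcongr
      linarith [hε.2]
    rw [div_mul_eq_mul_div, le_div_iff₀' (by positivity)]
    calc 2 * a₀ * ‖gaussIntegral y₀ t (fun y ↦ fresnel a y * F y) ε‖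
        ≤ ‖2 * (Complex.I * a - ε)‖ * ‖gaussIntegral y₀ t (fun y ↦ fresnel a y * F y) ε‖ := by
          gcongr
          linarith [two_mul_abs_le_norm a ε]
      _ ≤ |T| * (K * C) + K₂ * (K * C) + 2 * |y₀| * (K₁ * (K * C)) := by
          rw [← norm_mul, hparts t ht.1 a y₀ ε hε.1]
          refine (norm_sub_le _ _).trans (add_le_add ((norm_sub_le _ _).trans ?_) hlower)
          rw [norm_neg]
          exact add_le_add hboundary (h₂ _ G' hG' a ha t ht ε hε)
      _ = (|T| + K₂ + 2 * |y₀| * K₁) * K * C := by ring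

end Oscillatory

section Primitive

variable {E : Type*} [NormedAddCommGroup E] [NormedSpace ℝ E]

/-- `g` is an indefinite integral of `h` on `J`. Unlike in `IsACOn`, both orders of the endpoints
are allowed, which makes the notion stable under restriction. -/
def IsPrimitiveOn (J : Set ℝ) (g h : ℝ → E) : Prop :=
  ∀ r ∈ J, ∀ s ∈ J, IntervalIntegrable h volume r s ∧ g s - g r = ∫ x in r..s, h x

lemma absolutelyContinuousOnInterval_of_dist_le {X Y : Type*} [PseudoMetricSpace X]
    [PseudoMetricSpace Y] {f : ℝ → X} {g : ℝ → Y} {r s K : ℝ}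
    (hg : AbsolutelyContinuousOnInterval g r s)
    (hfg : ∀ x ∈ uIcc r s, ∀ y ∈ uIcc r s, dist (f x) (f y) ≤ K * dist (g x) (g y)) :
    AbsolutelyContinuousOnInterval f r s := by
  refine squeeze_zero' (.of_forall fun _ ↦ Finset.sum_nonneg fun _ _ ↦ dist_nonneg) ?_
    (by simpa using Tendsto.const_mul K hg)
  refine eventually_inf_principal.2 (.of_forall fun P hP ↦ ?_)
  rw [Finset.mul_sum]
  exact Finset.sum_le_sum fun i hi ↦ hfg _ (hP.1 i hi).1 _ (hP.1 i hi).2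

variable {J J' : Set ℝ} {g h g' h' : ℝ → E} {r s : ℝ}

lemma isPrimitiveOn_of_forall_le
    (hg : ∀ r ∈ J, ∀ s ∈ J, r ≤ s →
      IntervalIntegrable h volume r s ∧ g s - g r = ∫ x in r..s, h x) :
    IsPrimitiveOn J g h := by
  intro r hr s hs
  rcases le_total r s with hrs | hrs
  · exact hg r hr s hs hrs
  · obtain ⟨hint, heq⟩ := hg s hs r hr hrs
    exact ⟨hint.symm, by rw [intervalIntegral.integral_symm, ← heq, neg_sub]⟩

lemma isPrimitiveOn_of_locallyIntegrableOn (hJ : J.OrdConnected) (hh : LocallyIntegrableOn h J)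
    (hg : ∀ r ∈ J, ∀ s ∈ J, r < s → g s - g r = ∫ x in r..s, h x) : IsPrimitiveOn J g h := by
  refine isPrimitiveOn_of_forall_le fun r hr s hs hrs ↦ ⟨(hh.integrableOn_compact_subset
    (hJ.uIcc_subset hr hs) isCompact_uIcc).intervalIntegrable, ?_⟩
  rcases hrs.eq_or_lt with rfl | hrs
  · simp
  · exact hg r hr s hs hrs

namespace IsPrimitiveOn

lemma mono (hg : IsPrimitiveOn J g h) (hJ : J' ⊆ J) : IsPrimitiveOn J' g h :=
  fun r hr s hs ↦ hg r (hJ hr) s (hJ hs)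

lemma intervalIntegrable (hg : IsPrimitiveOn J g h) (hr : r ∈ J) (hs : s ∈ J) :
    IntervalIntegrable h volume r s :=
  (hg r hr s hs).1

lemma sub_eq (hg : IsPrimitiveOn J g h) (hr : r ∈ J) (hs : s ∈ J) :
    g s - g r = ∫ x in r..s, h x :=
  (hg r hr s hs).2

lemma integrableOn (hg : IsPrimitiveOn (Icc r s) g h) : IntegrableOn h (Icc r s) := by
  rcases le_or_gt r s with hrs | hrs
  · exact (intervalIntegrable_iff_integrableOn_Icc_of_le hrs).1
      (hg.intervalIntegrable (left_mem_Icc.2 hrs) (right_mem_Icc.2 hrs))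
  · simp [Icc_eq_empty_of_lt hrs]

lemma locallyIntegrableOn (hg : IsPrimitiveOn J g h) (hJ : IsOpen J) :
    LocallyIntegrableOn h J := by
  intro x hx
  obtain ⟨a, b, -, hmem, hsub⟩ := exists_Icc_mem_subset_of_mem_nhds (hJ.mem_nhds hx)
  exact ⟨Icc a b, mem_nhdsWithin_of_mem_nhds hmem, (hg.mono hsub).integrableOn⟩

lemma absolutelyContinuousOnInterval (hg : IsPrimitiveOn (uIcc r s) g h) :
    AbsolutelyContinuousOnInterval g r s := by
  have hint {x y : ℝ} (hx : x ∈ uIcc r s) (hy : y ∈ uIcc r s) :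
      IntervalIntegrable (‖h ·‖) volume x y := (hg.intervalIntegrable hx hy).norm
  refine absolutelyContinuousOnInterval_of_dist_le (K := 1) ((hint left_mem_uIcc
    right_mem_uIcc).absolutelyContinuousOnInterval_intervalIntegral left_mem_uIcc)
    fun x hx y hy ↦ ?_
  rw [one_mul, dist_comm, dist_comm _ (∫ t in r..y, ‖h t‖), dist_eq_norm, dist_eq_norm,
    hg.sub_eq hx hy, intervalIntegral.integral_interval_sub_left (hint left_mem_uIcc hy)
      (hint left_mem_uIcc hx)]
  exact intervalIntegral.norm_integral_le_abs_integral_norm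

lemma continuousOn (hg : IsPrimitiveOn (uIcc r s) g h) : ContinuousOn g (uIcc r s) :=
  hg.absolutelyContinuousOnInterval.continuousOn

lemma ae_hasDerivAt [CompleteSpace E] (hg : IsPrimitiveOn (uIcc r s) g h) :
    ∀ᵐ x, x ∈ uIcc r s → HasDerivAt g (h x) x := by
  have hint := hg.intervalIntegrable left_mem_uIcc right_mem_uIcc
  have hends : ∀ᵐ x : ℝ, x ≠ r ∧ x ≠ s := (ae_iff.2 (by simp)).and (ae_iff.2 (by simp))
  filter_upwards [hint.ae_hasDerivAt_integral, hends] with x hx ⟨hxr, hxs⟩ hxI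
  refine ((hx hxI r left_mem_uIcc).const_add (g r)).congr_of_eventuallyEq ?_
  have hnhds : uIcc r s ∈ 𝓝 x := Icc_mem_nhds
    (hxI.1.lt_of_ne (by grind)) (hxI.2.lt_of_ne (by grind))
  filter_upwards [hnhds] with y hy
  rw [← hg.sub_eq left_mem_uIcc hy, add_sub_cancel]

end IsPrimitiveOn

lemma sub_eq_integral_of_ae_hasDerivAt [CompleteSpace E] (hg : AbsolutelyContinuousOnInterval g r s)
    (hh : IntervalIntegrable h volume r s) (hderiv : ∀ᵐ x, x ∈ uIcc r s → HasDerivAt g (h x) x) :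
    g s - g r = ∫ x in r..s, h x := by
  have hprim : IsPrimitiveOn (uIcc r s) (fun x ↦ ∫ t in r..x, h t) h := fun x hx y hy ↦ by
    have hint {z : ℝ} (hz : z ∈ uIcc r s) : IntervalIntegrable h volume r z :=
      hh.mono_set (uIcc_subset_uIcc_left hz)
    exact ⟨(hint hx).symm.trans (hint hy),
      intervalIntegral.integral_interval_sub_left (hint hy) (hint hx)⟩
  obtain ⟨c, hc⟩ := (hg.sub hprim.absolutelyContinuousOnInterval).const_of_ae_hasDerivAt_zero <| by
    filter_upwards [hderiv, hprim.ae_hasDerivAt] with x hx hx' hxI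
    simpa only [sub_self] using (hx hxI).sub (hx' hxI)
  have key := (hc s right_mem_uIcc).trans (hc r left_mem_uIcc).symm
  simp only [Pi.sub_apply, intervalIntegral.integral_same, sub_zero] at key
  rw [← key, sub_sub_cancel]

lemma IsPrimitiveOn.const_mul {A : Type*} [NormedDivisionRing A] [NormedAlgebra ℝ A] {g h : ℝ → A}
    (hg : IsPrimitiveOn J g h) (c : A) :
    IsPrimitiveOn J (fun x ↦ c * g x) fun x ↦ c * h x :=
  fun r hr s hs ↦ ⟨(hg.intervalIntegrable hr hs).const_mul c, by
    rw [intervalIntegral.integral_const_mul, ← hg.sub_eq hr hs, mul_sub]⟩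

lemma IsPrimitiveOn.mul {A : Type*} [NormedRing A] [NormedAlgebra ℝ A] [NormMulClass A]
    [CompleteSpace A] {u v u' v' : ℝ → A} (hJ : J.OrdConnected) (hu : IsPrimitiveOn J u u')
    (hv : IsPrimitiveOn J v v') :
    IsPrimitiveOn J (fun x ↦ u x * v x) fun x ↦ u' x * v x + u x * v' x := by
  intro r hr s hs
  have hrs := hJ.uIcc_subset hr hs
  have hu := hu.mono hrs
  have hv := hv.mono hrs
  have hint : IntervalIntegrable (fun x ↦ u' x * v x + u x * v' x) volume r s :=
    ((hu.intervalIntegrable left_mem_uIcc right_mem_uIcc).mul_continuousOn hv.continuousOn).add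
      ((hv.intervalIntegrable left_mem_uIcc right_mem_uIcc).continuousOn_mul hu.continuousOn)
  refine ⟨hint, sub_eq_integral_of_ae_hasDerivAt
    (hu.absolutelyContinuousOnInterval.smul hv.absolutelyContinuousOnInterval) hint ?_⟩
  filter_upwards [hu.ae_hasDerivAt, hv.ae_hasDerivAt] with x hux hvx hx
    using (hux hx).mul (hvx hx)

lemma IsPrimitiveOn.comp_contDiff [CompleteSpace E] {φ : ℝ → E} {b b' : ℝ → ℝ}
    (hφ : ContDiff ℝ 1 φ) (hJ : J.OrdConnected) (hb : IsPrimitiveOn J b b') :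
    IsPrimitiveOn J (fun x ↦ φ (b x)) fun x ↦ b' x • deriv φ (b x) := by
  intro r hr s hs
  have hb := hb.mono (hJ.uIcc_subset hr hs)
  have hint : IntervalIntegrable (fun x ↦ b' x • deriv φ (b x)) volume r s :=
    (hb.intervalIntegrable left_mem_uIcc right_mem_uIcc).smul_continuousOn
      ((hφ.continuous_deriv le_rfl).comp_continuousOn hb.continuousOn)
  obtain ⟨K, hK⟩ := hφ.contDiffOn.exists_lipschitzOnWith one_ne_zero
    (convex_uIcc (sInf (b '' uIcc r s)) (sSup (b '' uIcc r s))) isCompact_uIcc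
  rw [← hb.continuousOn.image_uIcc] at hK
  refine ⟨hint, sub_eq_integral_of_ae_hasDerivAt
    (absolutelyContinuousOnInterval_of_dist_le hb.absolutelyContinuousOnInterval fun x hx y hy ↦
      hK.dist_le_mul _ (mem_image_of_mem b hx) _ (mem_image_of_mem b hy)) hint ?_⟩
  filter_upwards [hb.ae_hasDerivAt] with x hbx hx
  exact ((hφ.differentiable one_ne_zero).differentiableAt.hasDerivAt.scomp x (hbx hx))

lemma IsPrimitiveOn.integral_comp [CompleteSpace E] {G : ℝ → E} {b b' : ℝ → ℝ} {b₀ : ℝ}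
    (hG : ContinuousOn G (Ici b₀)) (hJ : J.OrdConnected) (hb : IsPrimitiveOn J b b')
    (hmem : MapsTo b J (Ici b₀)) (hr : r ∈ J) (hs : s ∈ J) :
    ∫ y in b r..b s, G y = ∫ x in r..s, b' x • G (b x) := by
  let G' : ℝ → E := fun y ↦ G (max b₀ y)
  have hG' : Continuous G' :=
    hG.comp_continuous (by fun_prop) fun y ↦ le_max_left b₀ y
  have hGG' : EqOn G' G (Ici b₀) := fun y hy ↦ by simp only [G', max_eq_right (mem_Ici.1 hy)]
  have hderiv (t : ℝ) : HasDerivAt (fun t ↦ ∫ y in b₀..t, G' y) (G' t) t :=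
    intervalIntegral.integral_hasDerivAt_right (hG'.intervalIntegrable _ _)
      hG'.stronglyMeasurable.stronglyMeasurableAtFilter hG'.continuousAt
  have hsmooth : ContDiff ℝ 1 fun t ↦ ∫ y in b₀..t, G' y := by
    rw [contDiff_one_iff_deriv]
    exact ⟨fun t ↦ (hderiv t).differentiableAt, by simpa only [funext fun t ↦ (hderiv t).deriv]⟩
  calc ∫ y in b r..b s, G y = ∫ y in b r..b s, G' y :=
        (intervalIntegral.integral_congr
          (hGG'.mono (ordConnected_Ici.uIcc_subset (hmem hr) (hmem hs)))).symm
    _ = (∫ y in b₀..b s, G' y) - ∫ y in b₀..b r, G' y :=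
        (intervalIntegral.integral_interval_sub_left (hG'.intervalIntegrable _ _)
          (hG'.intervalIntegrable _ _)).symm
    _ = ∫ x in r..s, b' x • deriv (fun t ↦ ∫ y in b₀..t, G' y) (b x) :=
        (hb.comp_contDiff hsmooth hJ).sub_eq hr hs
    _ = ∫ x in r..s, b' x • G (b x) :=
        intervalIntegral.integral_congr fun x hx ↦ by
          simp only [(hderiv _).deriv, hGG' (hmem (hJ.uIcc_subset hr hs hx))]

end Primitive

section ParametricIntegral

variable {E : Type*} [NormedAddCommGroup E]

lemma aestronglyMeasurable_comp_simpleFunc {Ω α : Type*} [MeasurableSpace Ω] {μ : Measure Ω}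
    {h : Ω → α → E} {τ : SimpleFunc Ω α} (hmeas : ∀ ω, AEStronglyMeasurable (h · (τ ω)) μ) :
    AEStronglyMeasurable (fun ω ↦ h ω (τ ω)) μ := by
  have hcover : ⋃ c : τ.range, τ ⁻¹' {c.1} = univ :=
    eq_univ_of_forall fun ω ↦ mem_iUnion.2 ⟨⟨τ ω, τ.mem_range_self ω⟩, rfl⟩
  rw [← Measure.restrict_univ (μ := μ), ← hcover, aestronglyMeasurable_iUnion_iff]
  rintro ⟨c, hc⟩
  obtain ⟨ω₀, rfl⟩ := SimpleFunc.mem_range.1 hc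
  refine (hmeas ω₀).restrict.congr ?_
  filter_upwards [ae_restrict_mem (τ.measurableSet_fiber (τ ω₀))] with ω hω
  rw [mem_singleton_iff.1 hω]

lemma aestronglyMeasurable_comp_of_ae_continuousOn {Ω : Type*} [MeasurableSpace Ω] {μ : Measure Ω}
    {S : Set ℝ} {h : Ω → ℝ → E} {τ : Ω → ℝ} (hS : S.Nonempty)
    (hmeas : ∀ y ∈ S, AEStronglyMeasurable (h · y) μ) (hcont : ∀ᵐ ω ∂μ, ContinuousOn (h ω) S)
    (hτ : AEMeasurable τ μ) (hmem : ∀ᵐ ω ∂μ, τ ω ∈ S) :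
    AEStronglyMeasurable (fun ω ↦ h ω (τ ω)) μ := by
  obtain ⟨y₀, hy₀⟩ := hS
  let τ' (k : ℕ) : SimpleFunc Ω ℝ := SimpleFunc.approxOn (hτ.mk τ) hτ.measurable_mk S y₀ hy₀ k
  have hτ' (k : ℕ) (ω : Ω) : τ' k ω ∈ S := SimpleFunc.approxOn_mem _ _ _ _
  have happrox (k : ℕ) : AEStronglyMeasurable (fun ω ↦ h ω (τ' k ω)) μ :=
    aestronglyMeasurable_comp_simpleFunc fun ω ↦ hmeas _ (hτ' k ω)
  refine aestronglyMeasurable_of_tendsto_ae atTop happrox ?_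
  filter_upwards [hcont, hmem, hτ.ae_eq_mk] with ω hω hωS hmk
  refine (hω _ hωS).tendsto.comp (tendsto_nhdsWithin_iff.2 ⟨?_, .of_forall fun k ↦ hτ' k ω⟩)
  rw [hmk]
  exact SimpleFunc.tendsto_approxOn _ _ (subset_closure (hmk ▸ hωS))

variable [NormedSpace ℝ E]

lemma intervalIntegral_triangle_swap {U : ℝ → ℝ → E} {r s : ℝ} (hrs : r ≤ s)
    (hU : Integrable (Function.uncurry U)
      ((volume.restrict (Ioc r s)).prod (volume.restrict (Ioc r s)))) :
    IntervalIntegrable (fun σ ↦ ∫ τ in r..σ, U σ τ) volume r s ∧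
      ∫ σ in r..s, ∫ τ in r..σ, U σ τ = ∫ τ in r..s, ∫ σ in τ..s, U σ τ := by
  let V : ℝ → ℝ → E := fun σ τ ↦ {p : ℝ × ℝ | p.2 ≤ p.1}.indicator (Function.uncurry U) (σ, τ)
  have hV : Integrable (Function.uncurry V)
      ((volume.restrict (Ioc r s)).prod (volume.restrict (Ioc r s))) :=
    hU.indicator (measurableSet_le measurable_snd measurable_fst)
  have hleft {σ : ℝ} (hσ : σ ∈ Ioc r s) : ∫ τ in Ioc r s, V σ τ = ∫ τ in r..σ, U σ τ := by
    have hinter : Ioc r s ∩ Iic σ = Ioc r σ := by grind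
    rw [intervalIntegral.integral_of_le hσ.1.le, ← hinter,
      ← setIntegral_indicator measurableSet_Iic]
    rfl
  have hright {τ : ℝ} (hτ : τ ∈ Ioc r s) : ∫ σ in Ioc r s, V σ τ = ∫ σ in τ..s, U σ τ := by
    have hinter : Ioc r s ∩ Ici τ = Icc τ s := by grind
    rw [intervalIntegral.integral_of_le hτ.2, ← integral_Icc_eq_integral_Ioc (x := τ), ← hinter,
      ← setIntegral_indicator measurableSet_Ici]
    rfl
  have hswap := integral_integral_swap hV
  rw [setIntegral_congr_fun measurableSet_Ioc fun σ hσ ↦ hleft hσ,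
    setIntegral_congr_fun measurableSet_Ioc fun τ hτ ↦ hright hτ] at hswap
  rw [intervalIntegral.integral_of_le hrs, intervalIntegral.integral_of_le hrs,
    intervalIntegrable_iff_integrableOn_Ioc_of_le hrs]
  exact ⟨hV.integral_prod_left.congr
    ((ae_restrict_mem measurableSet_Ioc).mono fun σ hσ ↦ hleft hσ), hswap⟩

/-- The functions `Ψ s` on `[b₀, ∞)` depend absolutely continuously on the parameter `s ∈ J`, with
density `Ψ'` continuous in the second variable and dominated by the integrable product
`k s * φ y`. -/
structure IsDominatedPrimitiveOn (J : Set ℝ) (b₀ : ℝ) (k φ : ℝ → ℝ) (Ψ Ψ' : ℝ → ℝ → E) : Prop where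
  isPrimitiveOn : ∀ y ∈ Ici b₀, IsPrimitiveOn J (Ψ · y) (Ψ' · y)
  ae_continuousOn : ∀ᵐ s ∂volume.restrict J, ContinuousOn (Ψ' s) (Ici b₀)
  ae_norm_le : ∀ᵐ s ∂volume.restrict J, ∀ y ∈ Ici b₀, ‖Ψ' s y‖ ≤ k s * φ y
  integrableOn_left : IntegrableOn k J
  continuousOn_right : ContinuousOn φ (Ici b₀)
  integrableOn_right : IntegrableOn φ (Ioi b₀)

namespace IsDominatedPrimitiveOn

variable {J J' : Set ℝ} {b₀ r s : ℝ} {k φ : ℝ → ℝ} {Ψ Ψ' : ℝ → ℝ → E}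

lemma mono (h : IsDominatedPrimitiveOn J b₀ k φ Ψ Ψ') (hJ : J' ⊆ J) :
    IsDominatedPrimitiveOn J' b₀ k φ Ψ Ψ' where
  isPrimitiveOn y hy := (h.isPrimitiveOn y hy).mono hJ
  ae_continuousOn := ae_restrict_of_ae_restrict_of_subset hJ h.ae_continuousOn
  ae_norm_le := ae_restrict_of_ae_restrict_of_subset hJ h.ae_norm_le
  integrableOn_left := h.integrableOn_left.mono_set hJ
  continuousOn_right := h.continuousOn_right
  integrableOn_right := h.integrableOn_right

lemma intervalIntegrable_left (h : IsDominatedPrimitiveOn (uIcc r s) b₀ k φ Ψ Ψ') :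
    IntervalIntegrable k volume r s :=
  h.integrableOn_left.intervalIntegrable

lemma ae_uIoc_norm_le (h : IsDominatedPrimitiveOn (uIcc r s) b₀ k φ Ψ Ψ') :
    ∀ᵐ σ ∂volume.restrict (uIoc r s), ∀ y ∈ Ici b₀, ‖Ψ' σ y‖ ≤ k σ * φ y :=
  ae_restrict_of_ae_restrict_of_subset uIoc_subset_uIcc h.ae_norm_le

lemma norm_sub_le (h : IsDominatedPrimitiveOn (uIcc r s) b₀ k φ Ψ Ψ') {y : ℝ} (hy : y ∈ Ici b₀) :
    ‖Ψ s y - Ψ r y‖ ≤ |∫ σ in r..s, k σ| * |φ y| := by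
  rw [(h.isPrimitiveOn y hy).sub_eq left_mem_uIcc right_mem_uIcc, ← abs_mul,
    ← intervalIntegral.integral_mul_const]
  exact intervalIntegral.norm_integral_le_abs_of_norm_le
    (h.ae_uIoc_norm_le.mono fun σ hσ ↦ hσ y hy) (h.intervalIntegrable_left.mul_const _)

lemma continuousOn_sub (h : IsDominatedPrimitiveOn (uIcc r s) b₀ k φ Ψ Ψ') :
    ContinuousOn (fun y ↦ Ψ s y - Ψ r y) (Ici b₀) := by
  have hcont : ContinuousOn (fun y ↦ ∫ σ in r..s, Ψ' σ y) (Ici b₀) := by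
    intro y₀ hy₀
    have hφ : ∀ᶠ y in 𝓝[Ici b₀] y₀, |φ y| < |φ y₀| + 1 :=
      (h.continuousOn_right.abs y₀ hy₀).eventually_lt_const (lt_add_one _)
    refine intervalIntegral.continuousWithinAt_of_dominated_interval
      (bound := fun σ ↦ |k σ| * (|φ y₀| + 1)) ?_ ?_ (h.intervalIntegrable_left.abs.mul_const _) ?_
    · filter_upwards [self_mem_nhdsWithin] with y hy
      exact ((h.isPrimitiveOn y hy).intervalIntegrable left_mem_uIcc
        right_mem_uIcc).def'.aestronglyMeasurable
    · filter_upwards [self_mem_nhdsWithin, hφ] with y hy hφy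
      refine (ae_restrict_iff' measurableSet_uIoc).1 (h.ae_uIoc_norm_le.mono fun σ hσ ↦ ?_)
      calc ‖Ψ' σ y‖ ≤ |k σ * φ y| := (hσ y hy).trans (le_abs_self _)
        _ ≤ |k σ| * (|φ y₀| + 1) := by rw [abs_mul]; gcongr
    · exact (ae_restrict_iff' measurableSet_uIoc).1 ((ae_restrict_of_ae_restrict_of_subset
        uIoc_subset_uIcc h.ae_continuousOn).mono fun σ hσ ↦ hσ y₀ hy₀)
  exact hcont.congr fun y hy ↦ (h.isPrimitiveOn y hy).sub_eq left_mem_uIcc right_mem_uIcc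

protected lemma continuousOn (h : IsDominatedPrimitiveOn J b₀ k φ Ψ Ψ') (hJ : J.OrdConnected)
    (hr : r ∈ J) (hΨ : ContinuousOn (Ψ r) (Ici b₀)) (hs : s ∈ J) : ContinuousOn (Ψ s) (Ici b₀) :=
  (hΨ.add (h.mono (hJ.uIcc_subset hr hs)).continuousOn_sub).congr fun y _ ↦
    (add_sub_cancel (Ψ r y) (Ψ s y)).symm

protected lemma integrableOn (h : IsDominatedPrimitiveOn J b₀ k φ Ψ Ψ') (hJ : J.OrdConnected)
    (hr : r ∈ J) (hΨ : IntegrableOn (Ψ r) (Ioi b₀)) (hs : s ∈ J) :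
    IntegrableOn (Ψ s) (Ioi b₀) := by
  have h := h.mono (hJ.uIcc_subset hr hs)
  have hsub : IntegrableOn (fun y ↦ Ψ s y - Ψ r y) (Ioi b₀) := by
    refine (h.integrableOn_right.abs.const_mul |∫ σ in r..s, k σ|).mono'
      ((h.continuousOn_sub.mono Ioi_subset_Ici_self).aestronglyMeasurable measurableSet_Ioi) ?_
    filter_upwards [ae_restrict_mem measurableSet_Ioi] with y hy
      using h.norm_sub_le (mem_Ici_of_Ioi hy)
  exact (hΨ.add hsub).congr (.of_forall fun y ↦ add_sub_cancel (Ψ r y) (Ψ s y))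

lemma continuousOn_uncurry {p q : ℝ} (h : IsDominatedPrimitiveOn (uIcc p q) b₀ k φ Ψ Ψ')
    (hΨ : ∀ s ∈ uIcc p q, ContinuousOn (Ψ s) (Ici b₀)) :
    ContinuousOn (fun z : ℝ × ℝ ↦ Ψ z.1 z.2) (uIcc p q ×ˢ Ici b₀) := by
  rintro ⟨s, y⟩ ⟨hs, hy⟩
  have hk : ContinuousOn (fun x ↦ ∫ σ in s..x, k σ) (uIcc p q) :=
    intervalIntegral.continuousOn_primitive_interval' h.intervalIntegrable_left hs
  have hfst : Tendsto Prod.fst (𝓝[uIcc p q ×ˢ Ici b₀] (s, y)) (𝓝[uIcc p q] s) := by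
    rw [nhdsWithin_prod_eq]
    exact tendsto_fst
  have hsnd : Tendsto Prod.snd (𝓝[uIcc p q ×ˢ Ici b₀] (s, y)) (𝓝[Ici b₀] y) := by
    rw [nhdsWithin_prod_eq]
    exact tendsto_snd
  have hsub : Tendsto (fun z : ℝ × ℝ ↦ Ψ z.1 z.2 - Ψ s z.2)
      (𝓝[uIcc p q ×ˢ Ici b₀] (s, y)) (𝓝 0) := by
    have hbound := ((hk s hs).tendsto.comp hfst).abs.mul
      ((h.continuousOn_right y hy).tendsto.comp hsnd).abs
    rw [intervalIntegral.integral_same, abs_zero, zero_mul] at hbound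
    refine squeeze_zero_norm' ?_ hbound
    filter_upwards [self_mem_nhdsWithin] with z hz
    exact (h.mono (uIcc_subset_uIcc hs hz.1)).norm_sub_le hz.2
  simpa [ContinuousWithinAt] using hsub.add ((hΨ s hs y hy).tendsto.comp hsnd)

end IsDominatedPrimitiveOn

end ParametricIntegral

section MovingEndpoint

variable {E : Type*} [NormedAddCommGroup E] [NormedSpace ℝ E]
  {b₀ r s : ℝ} {k φ b b' : ℝ → ℝ} {Ψ Ψ' : ℝ → ℝ → E}

namespace IsDominatedPrimitiveOn

lemma integrable_prod_smul_comp {X : Type*} [MeasurableSpace X] {ν : Measure X} [SFinite ν]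
    {τ w : X → ℝ} (h : IsDominatedPrimitiveOn (uIcc r s) b₀ k φ Ψ Ψ') (hτ : AEMeasurable τ ν)
    (hmem : ∀ᵐ x ∂ν, τ x ∈ Ici b₀) (hw : AEStronglyMeasurable w ν)
    (hint : Integrable (fun x ↦ w x * φ (τ x)) ν) :
    Integrable (fun z : ℝ × X ↦ w z.2 • Ψ' z.1 (τ z.2))
      ((volume.restrict (uIcc r s)).prod ν) := by
  have hmeas : AEStronglyMeasurable (fun z : ℝ × X ↦ Ψ' z.1 (τ z.2))
      ((volume.restrict (uIcc r s)).prod ν) :=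
    aestronglyMeasurable_comp_of_ae_continuousOn nonempty_Ici
      (fun y hy ↦ (h.isPrimitiveOn y hy).integrableOn.aestronglyMeasurable.comp_fst)
      (Measure.quasiMeasurePreserving_fst.ae h.ae_continuousOn) hτ.comp_snd
      (Measure.quasiMeasurePreserving_snd.ae hmem)
  refine (h.integrableOn_left.norm.mul_prod hint.norm).mono' (hw.comp_snd.smul hmeas) ?_
  filter_upwards [Measure.quasiMeasurePreserving_fst.ae h.ae_norm_le,
    Measure.quasiMeasurePreserving_snd.ae hmem] with z hz hzmem
  calc ‖w z.2 • Ψ' z.1 (τ z.2)‖ ≤ ‖w z.2‖ * ‖k z.1 * φ (τ z.2)‖ := by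
        rw [norm_smul]
        gcongr
        exact (hz _ hzmem).trans (le_abs_self _)
    _ = ‖k z.1‖ * ‖w z.2 * φ (τ z.2)‖ := by
        rw [norm_mul, norm_mul]
        ring

lemma ae_integrableOn {J : Set ℝ} (h : IsDominatedPrimitiveOn J b₀ k φ Ψ Ψ') :
    ∀ᵐ x ∂volume.restrict J, IntegrableOn (Ψ' x) (Ioi b₀) := by
  filter_upwards [h.ae_continuousOn, h.ae_norm_le] with x hcont hle
  exact (h.integrableOn_right.const_mul (k x)).mono'
    ((hcont.mono Ioi_subset_Ici_self).aestronglyMeasurable measurableSet_Ioi)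
    ((ae_restrict_mem measurableSet_Ioi).mono fun y hy ↦ hle y (mem_Ici_of_Ioi hy))

lemma isPrimitiveOn_integral_Ioi_const {t : ℝ} (h : IsDominatedPrimitiveOn (uIcc r s) b₀ k φ Ψ Ψ')
    (hint : ∀ x ∈ uIcc r s, IntegrableOn (Ψ x) (Ioi b₀)) (ht : t ∈ Ici b₀) :
    IsPrimitiveOn (uIcc r s) (fun x ↦ ∫ y in Ioi t, Ψ x y) fun x ↦ ∫ y in Ioi t, Ψ' x y := by
  intro x hx z hz
  have h := h.mono (uIcc_subset_uIcc hx hz)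
  have hsub : Ioi t ⊆ Ioi b₀ := Ioi_subset_Ioi ht
  have hprod : Integrable (fun w : ℝ × ℝ ↦ Ψ' w.1 w.2)
      ((volume.restrict (uIcc x z)).prod (volume.restrict (Ioi t))) := by
    simpa only [one_smul] using h.integrable_prod_smul_comp (ν := volume.restrict (Ioi t))
      (τ := fun y ↦ y) (w := fun _ ↦ 1) aemeasurable_id
      ((ae_restrict_mem measurableSet_Ioi).mono fun y hy ↦ mem_Ici_of_Ioi (hsub hy))
      aestronglyMeasurable_const
      (by simpa only [one_mul, IntegrableOn] using h.integrableOn_right.mono_set hsub)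
  refine ⟨IntegrableOn.intervalIntegrable hprod.integral_prod_left, ?_⟩
  calc (∫ y in Ioi t, Ψ z y) - ∫ y in Ioi t, Ψ x y = ∫ y in Ioi t, (Ψ z y - Ψ x y) :=
        (integral_sub ((hint z hz).mono_set hsub) ((hint x hx).mono_set hsub)).symm
    _ = ∫ y in Ioi t, ∫ σ in x..z, Ψ' σ y :=
        setIntegral_congr_fun measurableSet_Ioi fun y hy ↦
          (h.isPrimitiveOn y (mem_Ici_of_Ioi (hsub hy))).sub_eq left_mem_uIcc right_mem_uIcc
    _ = ∫ σ in x..z, ∫ y in Ioi t, Ψ' σ y :=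
        (intervalIntegral_integral_swap (hprod.mono_measure (Measure.prod_mono
          (Measure.restrict_mono uIoc_subset_uIcc le_rfl) le_rfl))).symm

lemma intervalIntegrable_smul_comp (h : IsDominatedPrimitiveOn (uIcc r s) b₀ k φ Ψ Ψ')
    (hb : IsPrimitiveOn (uIcc r s) b b') (hmem : MapsTo b (uIcc r s) (Ici b₀))
    (hcont : ∀ x ∈ uIcc r s, ContinuousOn (Ψ x) (Ici b₀)) :
    IntervalIntegrable (fun x ↦ b' x • Ψ x (b x)) volume r s :=
  (hb.intervalIntegrable left_mem_uIcc right_mem_uIcc).smul_continuousOn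
    ((h.continuousOn_uncurry hcont).comp (continuousOn_id.prodMk hb.continuousOn)
      fun _ hx ↦ ⟨hx, hmem hx⟩)

lemma integrable_prod_smul_endpoint (hrs : r ≤ s)
    (h : IsDominatedPrimitiveOn (uIcc r s) b₀ k φ Ψ Ψ') (hb : IsPrimitiveOn (uIcc r s) b b')
    (hmem : MapsTo b (uIcc r s) (Ici b₀)) :
    Integrable (Function.uncurry fun σ τ ↦ b' τ • Ψ' σ (b τ))
      ((volume.restrict (Ioc r s)).prod (volume.restrict (Ioc r s))) := by
  have hsub : Ioc r s ⊆ uIcc r s := uIoc_of_le hrs ▸ uIoc_subset_uIcc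
  have hb' := hb.intervalIntegrable left_mem_uIcc right_mem_uIcc
  exact (h.integrable_prod_smul_comp (ν := volume.restrict (Ioc r s))
    ((hb.continuousOn.mono hsub).aemeasurable measurableSet_Ioc)
    ((ae_restrict_mem measurableSet_Ioc).mono fun τ hτ ↦ hmem (hsub hτ))
    hb'.1.aestronglyMeasurable
    (hb'.mul_continuousOn (h.continuousOn_right.comp hb.continuousOn hmem)).1).mono_measure
    (Measure.prod_mono (Measure.restrict_mono hsub le_rfl) le_rfl)

lemma intervalIntegral_moving_endpoint [CompleteSpace E] (hrs : r ≤ s)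
    (h : IsDominatedPrimitiveOn (uIcc r s) b₀ k φ Ψ Ψ') (hb : IsPrimitiveOn (uIcc r s) b b')
    (hmem : MapsTo b (uIcc r s) (Ici b₀))
    (hcont : ∀ x ∈ uIcc r s, ContinuousOn (Ψ x) (Ici b₀)) :
    IntervalIntegrable (fun σ ↦ ∫ y in b r..b σ, Ψ' σ y) volume r s ∧
      ∫ y in b r..b s, Ψ s y =
        (∫ τ in r..s, b' τ • Ψ τ (b τ)) + ∫ σ in r..s, ∫ y in b r..b σ, Ψ' σ y := by
  obtain ⟨htri, hswap⟩ :=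
    intervalIntegral_triangle_swap hrs (h.integrable_prod_smul_endpoint hrs hb hmem)
  have hcomp : ∀ᵐ σ ∂volume.restrict (uIoc r s),
      ∫ τ in r..σ, b' τ • Ψ' σ (b τ) = ∫ y in b r..b σ, Ψ' σ y := by
    filter_upwards [ae_restrict_of_ae_restrict_of_subset uIoc_subset_uIcc h.ae_continuousOn,
      ae_restrict_mem measurableSet_uIoc] with σ hσ hσmem
    exact (hb.integral_comp hσ ordConnected_uIcc hmem left_mem_uIcc
      (uIoc_subset_uIcc hσmem)).symm
  have hlast : IntervalIntegrable (fun τ ↦ b' τ • Ψ s (b τ)) volume r s :=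
    (hb.intervalIntegrable left_mem_uIcc right_mem_uIcc).smul_continuousOn
      ((hcont s right_mem_uIcc).comp hb.continuousOn hmem)
  have hdiag := h.intervalIntegrable_smul_comp hb hmem hcont
  have hinner : EqOn (fun τ ↦ b' τ • Ψ s (b τ) - b' τ • Ψ τ (b τ))
      (fun τ ↦ ∫ σ in τ..s, b' τ • Ψ' σ (b τ)) (uIcc r s) := fun τ hτ ↦ by
    simp only [intervalIntegral.integral_smul, ← smul_sub,
      (h.isPrimitiveOn _ (hmem hτ)).sub_eq hτ right_mem_uIcc]
  refine ⟨htri.congr_ae hcomp, ?_⟩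
  calc ∫ y in b r..b s, Ψ s y = ∫ τ in r..s, b' τ • Ψ s (b τ) :=
        hb.integral_comp (hcont s right_mem_uIcc) ordConnected_uIcc hmem left_mem_uIcc
          right_mem_uIcc
    _ = (∫ τ in r..s, b' τ • Ψ τ (b τ)) + ∫ τ in r..s, ∫ σ in τ..s, b' τ • Ψ' σ (b τ) := by
        rw [← intervalIntegral.integral_congr hinner, intervalIntegral.integral_sub hlast hdiag,
          add_sub_cancel]
    _ = (∫ τ in r..s, b' τ • Ψ τ (b τ)) + ∫ σ in r..s, ∫ y in b r..b σ, Ψ' σ y := by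
        rw [← hswap, intervalIntegral.integral_congr_ae_restrict hcomp]

lemma ae_integral_Ioi_sub_intervalIntegral
    (h : IsDominatedPrimitiveOn (uIcc r s) b₀ k φ Ψ Ψ') (hmem : MapsTo b (uIcc r s) (Ici b₀)) :
    ∀ᵐ σ ∂volume.restrict (uIoc r s),
      (∫ y in Ioi (b r), Ψ' σ y) - ∫ y in b r..b σ, Ψ' σ y = ∫ y in Ioi (b σ), Ψ' σ y := by
  filter_upwards [ae_restrict_of_ae_restrict_of_subset uIoc_subset_uIcc h.ae_integrableOn,
    ae_restrict_mem measurableSet_uIoc] with σ hσ hσmem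
  rw [← intervalIntegral.integral_Ioi_sub_Ioi'
    (hσ.mono_set (Ioi_subset_Ioi (hmem left_mem_uIcc)))
    (hσ.mono_set (Ioi_subset_Ioi (hmem (uIoc_subset_uIcc hσmem)))), sub_sub_cancel]

theorem isPrimitiveOn_integral_Ioi [CompleteSpace E] {p q r₀ : ℝ}
    (h : IsDominatedPrimitiveOn (uIcc p q) b₀ k φ Ψ Ψ') (hb : IsPrimitiveOn (uIcc p q) b b')
    (hmem : MapsTo b (uIcc p q) (Ici b₀)) (hr₀ : r₀ ∈ uIcc p q)
    (hcont : ContinuousOn (Ψ r₀) (Ici b₀)) (hint : IntegrableOn (Ψ r₀) (Ioi b₀)) :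
    IsPrimitiveOn (uIcc p q) (fun s ↦ ∫ y in Ioi (b s), Ψ s y)
      fun s ↦ (∫ y in Ioi (b s), Ψ' s y) - b' s • Ψ s (b s) := by
  refine isPrimitiveOn_of_forall_le fun r hr s hs hrs ↦ ?_
  have hsub := uIcc_subset_uIcc hr hs
  have hcont (x : ℝ) (hx : x ∈ uIcc r s) : ContinuousOn (Ψ x) (Ici b₀) :=
    h.continuousOn ordConnected_uIcc hr₀ hcont (hsub hx)
  have hint (x : ℝ) (hx : x ∈ uIcc r s) : IntegrableOn (Ψ x) (Ioi b₀) :=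
    h.integrableOn ordConnected_uIcc hr₀ hint (hsub hx)
  have h := h.mono hsub
  have hb := hb.mono hsub
  have hmem := hmem.mono_left hsub
  have hrmem := hmem left_mem_uIcc
  have hsmem := hmem right_mem_uIcc
  have hfixed := h.isPrimitiveOn_integral_Ioi_const hint hrmem
  have hfixed_int := hfixed.intervalIntegrable left_mem_uIcc right_mem_uIcc
  obtain ⟨hmoving_int, hmoving⟩ := h.intervalIntegral_moving_endpoint hrs hb hmem hcont
  have hdiag_int := h.intervalIntegrable_smul_comp hb hmem hcont
  have hsplit : ∀ᵐ σ ∂volume.restrict (uIoc r s),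
      (∫ y in Ioi (b r), Ψ' σ y) - (∫ y in b r..b σ, Ψ' σ y) - b' σ • Ψ σ (b σ) =
        (∫ y in Ioi (b σ), Ψ' σ y) - b' σ • Ψ σ (b σ) :=
    (h.ae_integral_Ioi_sub_intervalIntegral hmem).mono fun σ hσ ↦ by rw [hσ]
  refine ⟨((hfixed_int.sub hmoving_int).sub hdiag_int).congr_ae hsplit, ?_⟩
  have hs_int := hint s right_mem_uIcc
  calc (∫ y in Ioi (b s), Ψ s y) - ∫ y in Ioi (b r), Ψ r y
      = ((∫ y in Ioi (b r), Ψ s y) - ∫ y in Ioi (b r), Ψ r y) - ∫ y in b r..b s, Ψ s y := by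
        rw [← intervalIntegral.integral_Ioi_sub_Ioi' (hs_int.mono_set (Ioi_subset_Ioi hrmem))
          (hs_int.mono_set (Ioi_subset_Ioi hsmem))]
        abel
    _ = ∫ σ in r..s, ((∫ y in Ioi (b r), Ψ' σ y) - (∫ y in b r..b σ, Ψ' σ y)
          - b' σ • Ψ σ (b σ)) := by
        rw [intervalIntegral.integral_sub (hfixed_int.sub hmoving_int) hdiag_int,
          intervalIntegral.integral_sub hfixed_int hmoving_int, hmoving,
          ← hfixed.sub_eq left_mem_uIcc right_mem_uIcc]
        abel
    _ = ∫ σ in r..s, ((∫ y in Ioi (b σ), Ψ' σ y) - b' σ • Ψ σ (b σ)) :=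
        intervalIntegral.integral_congr_ae_restrict hsplit

end IsDominatedPrimitiveOn

end MovingEndpoint

section LimitOfPrimitives

variable {E ι : Type*} [NormedAddCommGroup E] [NormedSpace ℝ E] {l : Filter ι}
  {J : Set ℝ} {r s : ℝ} {P Q : ι → ℝ → E} {Q₀ : ℝ → E} {k : ℝ → ℝ}

lemma intervalIntegrable_of_tendsto [l.NeBot] [l.IsCountablyGenerated] (hJ : J.OrdConnected)
    (hP : ∀ᶠ i in l, IsPrimitiveOn J (P i) (Q i))
    (hQ : ∀ᶠ i in l, ∀ᵐ x ∂volume.restrict J, ‖Q i x‖ ≤ k x) (hk : IntegrableOn k J)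
    (hlim : ∀ᵐ x ∂volume.restrict J, Tendsto (Q · x) l (𝓝 (Q₀ x))) (hr : r ∈ J) (hs : s ∈ J) :
    IntervalIntegrable Q₀ volume r s := by
  have hsub : uIoc r s ⊆ J := uIoc_subset_uIcc.trans (hJ.uIcc_subset hr hs)
  obtain ⟨u, hu⟩ := l.exists_seq_tendsto
  obtain ⟨N, hN⟩ := eventually_atTop.1 (hu.eventually (hP.and hQ))
  have hPQ (i : ℕ) := hN (i + N) (Nat.le_add_left N i)
  have htail : Tendsto (fun i ↦ u (i + N)) atTop l := hu.comp (tendsto_add_atTop_nat N)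
  have hlim := ae_restrict_of_ae_restrict_of_subset hsub hlim
  have hmeas : AEStronglyMeasurable Q₀ (volume.restrict (uIoc r s)) :=
    aestronglyMeasurable_of_tendsto_ae (u := atTop)
      (fun i ↦ ((hPQ i).1.intervalIntegrable hr hs).def'.aestronglyMeasurable)
      (hlim.mono fun x hx ↦ hx.comp htail)
  rw [intervalIntegrable_iff]
  refine (hk.mono_set hsub).mono' hmeas ?_
  filter_upwards [hlim, ae_restrict_of_ae_restrict_of_subset hsub
    (ae_all_iff.2 fun i ↦ (hPQ i).2)] with x hx hle
    using le_of_tendsto (hx.comp htail).norm (.of_forall hle)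

lemma tendsto_sub_of_tendsto [l.IsCountablyGenerated] (hJ : J.OrdConnected)
    (hP : ∀ᶠ i in l, IsPrimitiveOn J (P i) (Q i))
    (hQ : ∀ᶠ i in l, ∀ᵐ x ∂volume.restrict J, ‖Q i x‖ ≤ k x) (hk : IntegrableOn k J)
    (hlim : ∀ᵐ x ∂volume.restrict J, Tendsto (Q · x) l (𝓝 (Q₀ x))) (hr : r ∈ J) (hs : s ∈ J) :
    Tendsto (fun i ↦ P i s - P i r) l (𝓝 (∫ x in r..s, Q₀ x)) := by
  have hsub : uIoc r s ⊆ J := uIoc_subset_uIcc.trans (hJ.uIcc_subset hr hs)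
  have hlocal {p : ℝ → Prop} (hp : ∀ᵐ x ∂volume.restrict J, p x) : ∀ᵐ x, x ∈ uIoc r s → p x :=
    (ae_restrict_iff' measurableSet_uIoc).1 (ae_restrict_of_ae_restrict_of_subset hsub hp)
  refine (intervalIntegral.tendsto_integral_filter_of_dominated_convergence k
    (hP.mono fun i hi ↦ (hi.intervalIntegrable hr hs).def'.aestronglyMeasurable)
    (hQ.mono fun i hi ↦ hlocal hi) (intervalIntegrable_iff.2 (hk.mono_set hsub))
    (hlocal hlim)).congr' ?_
  filter_upwards [hP] with i hi using (hi.sub_eq hr hs).symm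

end LimitOfPrimitives

section LeibnizFamily

/-- The value of the Gaussian-regularised integral of `Φ` over `(t, ∞)`, defined as the limit with
the Gaussian centred at the origin; junk unless some `HasGaussIntegral t Φ L` holds. -/
def gaussLimit (t : ℝ) (Φ : ℝ → ℂ) : ℂ := limUnder (𝓝[>] 0) (gaussIntegral 0 t Φ)

lemma HasGaussIntegral.gaussLimit_eq {t : ℝ} {Φ : ℝ → ℂ} {L : ℂ} (h : HasGaussIntegral t Φ L) :
    gaussLimit t Φ = L :=
  (h 0).limUnder_eq

lemma HasGaussIntegral.hasGaussIntegral_gaussLimit {t : ℝ} {Φ : ℝ → ℂ} {L : ℂ}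
    (h : HasGaussIntegral t Φ L) : HasGaussIntegral t Φ (gaussLimit t Φ) :=
  h.gaussLimit_eq.symm ▸ h

/-- The amplitude of `∂/∂s (fresnel (a s) y * f s y)`, that is, this derivative divided by
`fresnel (a s) y`. -/
def derivAmplitude (a' : ℝ → ℝ) (f f' : ℝ → ℝ → ℂ) (s y : ℝ) : ℂ :=
  Complex.I * a' s * (y ^ 2 * f s y) + f' s y

lemma fresnel_mul_derivAmplitude (a a' : ℝ → ℝ) (f f' : ℝ → ℝ → ℂ) (s y : ℝ) :
    fresnel (a s) y * derivAmplitude a' f f' s y =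
      Complex.I * a' s * y ^ 2 * fresnel (a s) y * f s y + fresnel (a s) y * f' s y := by
  rw [derivAmplitude]
  ring

/-- The hypotheses of the Leibniz rule in the uniform form in which they hold for the parameter `s`
in a compact interval `J`: `a` stays away from zero, the left endpoint `b` of the integrals ranges
in `[b₀, B]`, and the amplitude `f` is a symbol of order `γ` whose derivative `f'` in the parameter
is a symbol of order `γ + 2`, for a fixed constant `C`. -/
structure IsLeibnizFamily (J : Set ℝ) (b₀ B a₀ γ C : ℝ) (n : ℕ) (a a' b b' : ℝ → ℝ)
    (f f' : ℝ → ℝ → ℂ) : Prop where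
  left_pos : 0 < b₀
  coeff_pos : 0 < a₀
  order_lt : γ + 2 < 2 * n - 1
  le_abs_coeff : ∀ s ∈ J, a₀ ≤ |a s|
  mapsTo_endpoint : MapsTo b J (Icc b₀ B)
  isPrimitiveOn_coeff : IsPrimitiveOn J a a'
  isPrimitiveOn_endpoint : IsPrimitiveOn J b b'
  isPrimitiveOn_amplitude : ∀ y ∈ Ici b₀, IsPrimitiveOn J (f · y) (f' · y)
  ae_isSymbol : ∀ᵐ s ∂volume.restrict J,
    IsSymbol b₀ n γ C (f s) ∧ IsSymbol b₀ n (γ + 2) C (f' s)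

/-- The value of the regularised integral of `fresnel (a s) * f s` over `(b s, ∞)`. -/
def leibnizIntegral (a b : ℝ → ℝ) (f : ℝ → ℝ → ℂ) (s : ℝ) : ℂ :=
  gaussLimit (b s) fun y ↦ fresnel (a s) y * f s y

/-- The derivative of `leibnizIntegral a b f` predicted by the Leibniz rule. -/
def leibnizDeriv (a a' b b' : ℝ → ℝ) (f f' : ℝ → ℝ → ℂ) (s : ℝ) : ℂ :=
  gaussLimit (b s) (fun y ↦ fresnel (a s) y * derivAmplitude a' f f' s y)
    - b' s * (fresnel (a s) (b s) * f s (b s))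

/-- The derivative in `s` of the integral of `fresnel (a s) * f s` over `(b s, ∞)` with Gaussian
convergence factor `gauss y₀ ε`. -/
def regLeibnizDeriv (a a' b b' : ℝ → ℝ) (f f' : ℝ → ℝ → ℂ) (y₀ ε s : ℝ) : ℂ :=
  gaussIntegral y₀ (b s) (fun y ↦ fresnel (a s) y * derivAmplitude a' f f' s y) ε
    - b' s • (gauss y₀ ε (b s) * (fresnel (a s) (b s) * f s (b s)))

lemma IsPrimitiveOn.fresnel_mul {J : Set ℝ} {a a' : ℝ → ℝ} {f f' : ℝ → ℝ → ℂ} {y : ℝ}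
    (hJ : J.OrdConnected) (ha : IsPrimitiveOn J a a') (hf : IsPrimitiveOn J (f · y) (f' · y)) :
    IsPrimitiveOn J (fun s ↦ fresnel (a s) y * f s y)
      fun s ↦ fresnel (a s) y * derivAmplitude a' f f' s y := by
  have hderiv (x : ℝ) : HasDerivAt (fresnel · y) (Complex.I * y ^ 2 * fresnel x y) x := by
    have hid : HasDerivAt (fun x : ℝ ↦ (x : ℂ)) 1 x := Complex.ofRealCLM.hasDerivAt
    refine ((hid.const_mul Complex.I).mul_const ((y : ℂ) ^ 2)).cexp.congr_deriv ?_
    rw [fresnel]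
    ring
  have hsmooth : ContDiff ℝ 1 (fresnel · y) := by
    unfold fresnel
    exact ((contDiff_const.mul Complex.ofRealCLM.contDiff).mul contDiff_const).cexp
  have hdensity (s : ℝ) : fresnel (a s) y * derivAmplitude a' f f' s y =
      a' s • deriv (fresnel · y) (a s) * f s y + fresnel (a s) y * f' s y := by
    rw [(hderiv (a s)).deriv, fresnel_mul_derivAmplitude, Complex.real_smul]
    ring
  rw [funext hdensity]
  exact (ha.comp_contDiff hsmooth hJ).mul hJ hf

namespace IsLeibnizFamily

variable {p q b₀ B a₀ γ C y₀ : ℝ} {n : ℕ} {a a' b b' : ℝ → ℝ} {f f' : ℝ → ℝ → ℂ}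

lemma exists_isSymbol_derivAmplitude {J : Set ℝ}
    (h : IsLeibnizFamily J b₀ B a₀ γ C n a a' b b' f f') :
    ∃ C', ∀ᵐ s ∂volume.restrict J,
      IsSymbol b₀ n (γ + 2) ((|a' s| + 1) * C') (derivAmplitude a' f f' s) := by
  obtain ⟨K, -, hK⟩ := exists_isSymbol_rpow_smul (E := ℂ) h.left_pos n 2
  refine ⟨max C (K * C), h.ae_isSymbol.mono fun s ⟨hf, hf'⟩ ↦ ?_⟩
  refine ((((hK _ _ _ hf).const_smul (Complex.I * a' s)).add hf').congr fun y _ ↦ ?_).mono_const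
    h.left_pos ?_
  · simp [derivAmplitude]
  · rw [add_mul, one_mul, norm_mul, Complex.norm_I, one_mul, Complex.norm_real, Real.norm_eq_abs]
    gcongr
    exacts [le_max_right _ _, le_max_left _ _]

lemma mapsTo_Ici {J : Set ℝ} (h : IsLeibnizFamily J b₀ B a₀ γ C n a a' b b' f f') :
    MapsTo b J (Ici b₀) :=
  h.mapsTo_endpoint.mono_right Icc_subset_Ici_self

lemma isDominatedPrimitiveOn (h : IsLeibnizFamily (uIcc p q) b₀ B a₀ γ C n a a' b b' f f') {C' : ℝ}
    (hC' : ∀ᵐ s ∂volume.restrict (uIcc p q),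
      IsSymbol b₀ n (γ + 2) ((|a' s| + 1) * C') (derivAmplitude a' f f' s)) {ε : ℝ} (hε : 0 < ε) :
    IsDominatedPrimitiveOn (uIcc p q) b₀ (fun s ↦ (|a' s| + 1) * C')
      (fun y ↦ y ^ (γ + 2) * Real.exp (-ε * (y - y₀) ^ 2))
      (fun s y ↦ gauss y₀ ε y * (fresnel (a s) y * f s y))
      (fun s y ↦ gauss y₀ ε y * (fresnel (a s) y * derivAmplitude a' f f' s y)) where
  isPrimitiveOn y hy := (h.isPrimitiveOn_coeff.fresnel_mul ordConnected_uIcc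
    (h.isPrimitiveOn_amplitude y hy)).const_mul _
  ae_continuousOn := hC'.mono fun s hs ↦
    ((hs.of_le n.zero_le).fresnel_mul (a s)).continuousOn_gauss_mul
  ae_norm_le := hC'.mono fun s hs y hy ↦
    ((hs.of_le n.zero_le).fresnel_mul (a s)).norm_gauss_mul_le hy
  integrableOn_left := ((h.isPrimitiveOn_coeff.integrableOn.abs).add
    (integrableOn_const (by simp))).mul_const C'
  continuousOn_right := continuousOn_rpow_mul_exp h.left_pos _ _ _
  integrableOn_right := integrableOn_rpow_mul_exp h.left_pos _ _ hε

lemma exists_isSymbol (h : IsLeibnizFamily (uIcc p q) b₀ B a₀ γ C n a a' b b' f f')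
    (hpq : p < q) : ∃ r ∈ uIcc p q, IsSymbol b₀ n γ C (f r) := by
  have hvol : volume (uIcc p q) ≠ 0 := by simp [uIcc_of_le hpq.le, hpq]
  obtain ⟨r, hr, hf, -⟩ := Measure.exists_mem_of_measure_ne_zero_of_ae hvol h.ae_isSymbol
  exact ⟨r, hr, hf⟩

lemma isPrimitiveOn_gaussIntegral (h : IsLeibnizFamily (uIcc p q) b₀ B a₀ γ C n a a' b b' f f')
    (hpq : p < q) {ε : ℝ} (hε : 0 < ε) :
    IsPrimitiveOn (uIcc p q) (fun s ↦ gaussIntegral y₀ (b s) (fun y ↦ fresnel (a s) y * f s y) ε)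
      (regLeibnizDeriv a a' b b' f f' y₀ ε) := by
  obtain ⟨C', hC'⟩ := h.exists_isSymbol_derivAmplitude
  obtain ⟨r, hr, hf⟩ := h.exists_isSymbol hpq
  have hr_symbol := (hf.of_le n.zero_le).fresnel_mul (a r)
  exact (h.isDominatedPrimitiveOn hC' hε).isPrimitiveOn_integral_Ioi h.isPrimitiveOn_endpoint
    h.mapsTo_Ici hr hr_symbol.continuousOn_gauss_mul
    (hr_symbol.integrableOn_gauss_mul h.left_pos hε)

lemma ae_hasGaussIntegral_derivAmplitude {J : Set ℝ} (hJ : MeasurableSet J)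
    (h : IsLeibnizFamily J b₀ B a₀ γ C n a a' b b' f f') :
    ∀ᵐ s ∂volume.restrict J, HasGaussIntegral (b s)
      (fun y ↦ fresnel (a s) y * derivAmplitude a' f f' s y)
      (leibnizDeriv a a' b b' f f' s + b' s * (fresnel (a s) (b s) * f s (b s))) := by
  obtain ⟨C', hC'⟩ := h.exists_isSymbol_derivAmplitude
  filter_upwards [hC', ae_restrict_mem hJ] with s hs hsJ
  have ha : a s ≠ 0 := abs_pos.1 (h.coeff_pos.trans_le (h.le_abs_coeff s hsJ))
  obtain ⟨L, hL⟩ := hs.exists_hasGaussIntegral h.left_pos ha h.order_lt (h.mapsTo_Ici hsJ)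
  rw [leibnizDeriv, sub_add_cancel]
  exact hL.hasGaussIntegral_gaussLimit

lemma ae_tendsto_regLeibnizDeriv {J : Set ℝ} (hJ : MeasurableSet J)
    (h : IsLeibnizFamily J b₀ B a₀ γ C n a a' b b' f f') (y₀ : ℝ) :
    ∀ᵐ s ∂volume.restrict J, Tendsto (regLeibnizDeriv a a' b b' f f' y₀ · s) (𝓝[>] 0)
      (𝓝 (leibnizDeriv a a' b b' f f' s)) := by
  filter_upwards [h.ae_hasGaussIntegral_derivAmplitude hJ] with s hs
  have hboundary := (((tendsto_gauss_one y₀ (b s)).mul_const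
    (fresnel (a s) (b s) * f s (b s))).const_smul (b' s))
  simpa [regLeibnizDeriv] using (hs y₀).sub hboundary

lemma exists_norm_regLeibnizDeriv_le
    (h : IsLeibnizFamily (uIcc p q) b₀ B a₀ γ C n a a' b b' f f') (y₀ : ℝ) :
    ∃ k, IntegrableOn k (uIcc p q) ∧ ∀ᶠ ε in 𝓝[>] 0, ∀ᵐ s ∂volume.restrict (uIcc p q),
      ‖regLeibnizDeriv a a' b b' f f' y₀ ε s‖ ≤ k s := by
  obtain ⟨C', hC'⟩ := h.exists_isSymbol_derivAmplitude
  obtain ⟨K, -, hK⟩ := exists_norm_gaussIntegral_le h.left_pos h.coeff_pos B y₀ h.order_lt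
  refine ⟨fun s ↦ K * ((|a' s| + 1) * C') + |b' s| * (C * b s ^ γ), ?_, ?_⟩
  · have hpow : ContinuousOn (fun s ↦ C * b s ^ γ) (uIcc p q) :=
      continuousOn_const.mul (h.isPrimitiveOn_endpoint.continuousOn.rpow_const
        fun s hs ↦ .inl (h.left_pos.trans_le (h.mapsTo_Ici hs)).ne')
    have hboundary : IntegrableOn (fun s ↦ |b' s| * (C * b s ^ γ)) (uIcc p q) :=
      IntegrableOn.mul_continuousOn h.isPrimitiveOn_endpoint.integrableOn.abs hpow isCompact_uIcc
    exact (((h.isPrimitiveOn_coeff.integrableOn.abs.add (integrableOn_const (by simp))).mul_const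
      C').const_mul K).add hboundary
  · filter_upwards [Ioc_mem_nhdsGT one_pos] with ε hε
    filter_upwards [hC', h.ae_isSymbol, ae_restrict_mem measurableSet_uIcc] with s hs hfs hsJ
    have hboundary : ‖gauss y₀ ε (b s) * (fresnel (a s) (b s) * f s (b s))‖ ≤ C * b s ^ γ :=
      hfs.1.norm_gauss_mul_fresnel_mul_le hε.1.le (h.mapsTo_Ici hsJ)
    refine (norm_sub_le _ _).trans (add_le_add
      (hK _ _ hs _ (h.le_abs_coeff s hsJ) _ (h.mapsTo_endpoint hsJ) ε hε) ?_)
    rw [norm_smul, Real.norm_eq_abs]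
    gcongr

lemma eventually_isPrimitiveOn (h : IsLeibnizFamily (uIcc p q) b₀ B a₀ γ C n a a' b b' f f')
    (hpq : p < q) (y₀ : ℝ) : ∀ᶠ ε in 𝓝[>] 0, IsPrimitiveOn (uIcc p q)
      (fun s ↦ gaussIntegral y₀ (b s) (fun y ↦ fresnel (a s) y * f s y) ε)
      (regLeibnizDeriv a a' b b' f f' y₀ ε) := by
  filter_upwards [self_mem_nhdsWithin] with ε hε using h.isPrimitiveOn_gaussIntegral hpq hε

lemma tendsto_gaussIntegral_sub (h : IsLeibnizFamily (uIcc p q) b₀ B a₀ γ C n a a' b b' f f')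
    (hpq : p < q) (y₀ : ℝ) {r s : ℝ} (hr : r ∈ uIcc p q) (hs : s ∈ uIcc p q) :
    Tendsto (fun ε ↦ gaussIntegral y₀ (b s) (fun y ↦ fresnel (a s) y * f s y) ε
        - gaussIntegral y₀ (b r) (fun y ↦ fresnel (a r) y * f r y) ε) (𝓝[>] 0)
      (𝓝 (∫ x in r..s, leibnizDeriv a a' b b' f f' x)) := by
  obtain ⟨k, hk, hle⟩ := h.exists_norm_regLeibnizDeriv_le y₀
  exact tendsto_sub_of_tendsto ordConnected_uIcc (h.eventually_isPrimitiveOn hpq y₀) hle hk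
    (h.ae_tendsto_regLeibnizDeriv measurableSet_uIcc y₀) hr hs

lemma hasGaussIntegral_leibnizIntegral
    (h : IsLeibnizFamily (uIcc p q) b₀ B a₀ γ C n a a' b b' f f') (hpq : p < q) {s : ℝ}
    (hs : s ∈ uIcc p q) :
    HasGaussIntegral (b s) (fun y ↦ fresnel (a s) y * f s y) (leibnizIntegral a b f s) := by
  obtain ⟨r, hr, hf⟩ := h.exists_isSymbol hpq
  have ha : a r ≠ 0 := abs_pos.1 (h.coeff_pos.trans_le (h.le_abs_coeff r hr))
  obtain ⟨L, hL⟩ := hf.exists_hasGaussIntegral h.left_pos ha (by linarith [h.order_lt])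
    (h.mapsTo_Ici hr)
  have hlim : HasGaussIntegral (b s) (fun y ↦ fresnel (a s) y * f s y)
      (L + ∫ x in r..s, leibnizDeriv a a' b b' f f' x) := fun y₀ ↦ by
    simpa using (hL y₀).add (h.tendsto_gaussIntegral_sub hpq y₀ hr hs)
  exact hlim.hasGaussIntegral_gaussLimit

theorem isPrimitiveOn_leibnizIntegral
    (h : IsLeibnizFamily (uIcc p q) b₀ B a₀ γ C n a a' b b' f f') (hpq : p < q) :
    IsPrimitiveOn (uIcc p q) (leibnizIntegral a b f) (leibnizDeriv a a' b b' f f') := by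
  refine fun r hr s hs ↦ ⟨?_, ?_⟩
  · obtain ⟨k, hk, hle⟩ := h.exists_norm_regLeibnizDeriv_le 0
    exact intervalIntegrable_of_tendsto ordConnected_uIcc (h.eventually_isPrimitiveOn hpq 0) hle hk
      (h.ae_tendsto_regLeibnizDeriv measurableSet_uIcc 0) hr hs
  · exact tendsto_nhds_unique ((h.hasGaussIntegral_leibnizIntegral hpq hs 0).sub
      (h.hasGaussIntegral_leibnizIntegral hpq hr 0)) (h.tendsto_gaussIntegral_sub hpq 0 hr hs)

end IsLeibnizFamily

end LeibnizFamily

section LocalData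

lemma bddAbove_image_of_eventually_le {X : Type*} [TopologicalSpace X] {N : X → ℝ} {I K : Set X}
    (hK : IsCompact K) (hKI : K ⊆ I) (hN : ∀ x ∈ I, ∃ M, ∀ᶠ u in 𝓝[I] x, N u ≤ M) :
    BddAbove (N '' K) := by
  refine hK.induction_on (p := fun S ↦ BddAbove (N '' S)) (by simp)
    (fun S T hST hT ↦ hT.mono (image_mono hST)) (fun S T hS hT ↦ ?_) fun x hx ↦ ?_
  · rw [image_union]
    exact hS.union hT
  · obtain ⟨M, hM⟩ := hN x (hKI hx)
    exact ⟨{u | N u ≤ M}, nhdsWithin_mono x hKI hM, M, forall_mem_image.2 fun u hu ↦ hu⟩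

variable {I : Set ℝ} {p q b₀ α : ℝ} {n : ℕ} {a a' b b' : ℝ → ℝ} {f f' : ℝ → ℝ → ℂ}

lemma exists_isLeibnizFamily (hI : I.OrdConnected) (hb₀ : 0 < b₀) (hα : 0 ≤ α) (hn : α + 3 < n)
    (ha : IsPrimitiveOn I a a') (ha₀ : ∀ s ∈ I, a s ≠ 0)
    (hb : IsPrimitiveOn I b b') (hbb₀ : MapsTo b I (Ici b₀))
    (hf : ∀ y ∈ Ici b₀, IsPrimitiveOn I (f · y) (f' · y))
    (hreg : ∀ᵐ s ∂volume.restrict I, MemCnAlpha b₀ n α (f s) ∧ MemCnAlpha b₀ n (α + 2) (f' s))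
    (hN : ∀ s ∈ I, ∃ M, ∀ᶠ u in 𝓝[I] s, CnAlphaNorm b₀ n α (f u) ≤ M)
    (hN' : ∀ s ∈ I, ∃ M, ∀ᶠ u in 𝓝[I] s, CnAlphaNorm b₀ n (α + 2) (f' u) ≤ M)
    (hp : p ∈ I) (hq : q ∈ I) :
    ∃ a₀ B C, IsLeibnizFamily (uIcc p q) b₀ B a₀ (n + α) C n a a' b b' f f' := by
  have hsub : uIcc p q ⊆ I := hI.uIcc_subset hp hq
  obtain ⟨r, hr, hmin⟩ :=
    isCompact_uIcc.exists_isMinOn nonempty_uIcc (ha.mono hsub).continuousOn.abs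
  obtain ⟨t, -, hmax⟩ := isCompact_uIcc.exists_isMaxOn nonempty_uIcc (hb.mono hsub).continuousOn
  obtain ⟨M, hM⟩ := bddAbove_image_of_eventually_le isCompact_uIcc hsub hN
  obtain ⟨M', hM'⟩ := bddAbove_image_of_eventually_le isCompact_uIcc hsub hN'
  refine ⟨|a r|, b t, max ((n + 1) * M) ((n + 1) * M'), hb₀, abs_pos.2 (ha₀ r (hsub hr)),
    by linarith, fun s hs ↦ hmin hs, fun s hs ↦ ⟨hbb₀ (hsub hs), hmax hs⟩, ha.mono hsub,
    hb.mono hsub, fun y hy ↦ (hf y hy).mono hsub, ?_⟩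
  filter_upwards [ae_restrict_of_ae_restrict_of_subset hsub hreg,
    ae_restrict_mem measurableSet_uIcc] with s ⟨hfs, hfs'⟩ hs
  refine ⟨(hfs.isSymbol hb₀ hα (hM (mem_image_of_mem _ hs))).mono_const hb₀ (le_max_left _ _), ?_⟩
  rw [add_assoc]
  exact (hfs'.isSymbol hb₀ (by positivity) (hM' (mem_image_of_mem _ hs))).mono_const hb₀
    (le_max_right _ _)

end LocalData

section Globalisation

variable {I : Set ℝ} {b₀ γ : ℝ} {n : ℕ} {a a' b b' : ℝ → ℝ} {f f' : ℝ → ℝ → ℂ}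

lemma hasGaussIntegral_leibnizIntegral (hI : IsOpen I)
    (hloc : ∀ p ∈ I, ∀ q ∈ I,
      ∃ a₀ B C, IsLeibnizFamily (uIcc p q) b₀ B a₀ γ C n a a' b b' f f') {s : ℝ} (hs : s ∈ I) :
    HasGaussIntegral (b s) (fun y ↦ fresnel (a s) y * f s y) (leibnizIntegral a b f s) := by
  obtain ⟨q, hsq, hq⟩ : ∃ q, s < q ∧ q ∈ I :=
    ((eventually_mem_nhdsWithin (s := Ioi s)).and
      (mem_nhdsWithin_of_mem_nhds (hI.mem_nhds hs))).exists
  obtain ⟨a₀, B, C, h⟩ := hloc s hs q hq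
  exact h.hasGaussIntegral_leibnizIntegral hsq left_mem_uIcc

lemma isPrimitiveOn_leibnizIntegral
    (hloc : ∀ p ∈ I, ∀ q ∈ I,
      ∃ a₀ B C, IsLeibnizFamily (uIcc p q) b₀ B a₀ γ C n a a' b b' f f') :
    IsPrimitiveOn I (leibnizIntegral a b f) (leibnizDeriv a a' b b' f f') := by
  refine isPrimitiveOn_of_forall_le fun r hr s hs hrs ↦ ?_
  rcases hrs.eq_or_lt with rfl | hrs
  · simp
  · obtain ⟨a₀, B, C, h⟩ := hloc r hr s hs
    exact h.isPrimitiveOn_leibnizIntegral hrs r left_mem_uIcc s right_mem_uIcc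

lemma ae_hasDerivAt_leibnizIntegral
    (hloc : ∀ p ∈ I, ∀ q ∈ I,
      ∃ a₀ B C, IsLeibnizFamily (uIcc p q) b₀ B a₀ γ C n a a' b b' f f') :
    ∀ᵐ s, s ∈ I →
      HasDerivAt (leibnizIntegral a b f) (leibnizDeriv a a' b b' f f' s) s ∧
      HasGaussIntegral (b s) (fun y ↦ fresnel (a s) y * derivAmplitude a' f f' s y)
        (leibnizDeriv a a' b b' f f' s + b' s * (fresnel (a s) (b s) * f s (b s))) := by
  refine ae_of_mem_of_ae_of_mem_inter_Ioo fun p q hp hq hpq ↦ ?_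
  obtain ⟨a₀, B, C, h⟩ := hloc p hp q hq
  filter_upwards [(h.isPrimitiveOn_leibnizIntegral hpq).ae_hasDerivAt,
    (ae_restrict_iff' measurableSet_uIcc).1
      (h.ae_hasGaussIntegral_derivAmplitude measurableSet_uIcc)] with s hderiv hlim hs
  have hs : s ∈ uIcc p q := Icc_subset_uIcc (Ioo_subset_Icc_self hs.2)
  exact ⟨hderiv hs, hlim hs⟩

end Globalisation

/-- the Leibniz rule for oscillatory integrals.  Here `a' , b'` are the a.e.
derivatives (densities) of the absolutely continuous functions `a, b`, and `f'` is the a.e.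
partial derivative `∂f/∂s`. -/
theorem stmt15 (I : Set ℝ) (hIo : IsOpen I) (hIc : I.OrdConnected)
    (a b a' b' : ℝ → ℝ) (b₀ : ℝ) (hb₀ : 0 < b₀)
    (haAC : MeasureTheory.LocallyIntegrableOn a' I ∧
      ∀ s₁ ∈ I, ∀ s₂ ∈ I, s₁ < s₂ → a s₂ - a s₁ = ∫ s in s₁..s₂, a' s)
    (hbAC : MeasureTheory.LocallyIntegrableOn b' I ∧
      ∀ s₁ ∈ I, ∀ s₂ ∈ I, s₁ < s₂ → b s₂ - b s₁ = ∫ s in s₁..s₂, b' s)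
    (hane : ∀ s ∈ I, a s ≠ 0) (hbge : ∀ s ∈ I, b₀ ≤ b s)
    (f f' : ℝ → ℝ → ℂ)
    (hfAC : ∀ y ∈ Set.Ici b₀, MeasureTheory.LocallyIntegrableOn (fun s => f' s y) I ∧
      ∀ s₁ ∈ I, ∀ s₂ ∈ I, s₁ < s₂ → f s₂ y - f s₁ y = ∫ s in s₁..s₂, f' s y)
    (n : ℕ) (α : ℝ) (hα : 0 ≤ α) (hn : α + 3 < n)
    (hreg : ∀ᵐ s ∂(MeasureTheory.volume : MeasureTheory.Measure ℝ), s ∈ I →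
      MemCnAlpha b₀ n α (f s) ∧ MemCnAlpha b₀ n (α + 2) (f' s))
    (hbd1 : ∀ s ∈ I, ∃ M : ℝ, ∀ᶠ u in 𝓝[I] s, CnAlphaNorm b₀ n α (f u) ≤ M)
    (hbd2 : ∀ s ∈ I, ∃ M : ℝ, ∀ᶠ u in 𝓝[I] s, CnAlphaNorm b₀ n (α + 2) (f' u) ≤ M) :
    ∃ ψ g : ℝ → ℂ,
      (∀ s ∈ I, ∀ y₀ : ℝ,
        Filter.Tendsto (fun ε : ℝ => ∫ y in Set.Ioi (b s),
            Complex.exp (-(ε : ℂ) * (y - y₀) ^ 2) * Complex.exp (Complex.I * a s * y ^ 2) * f s y)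
          (𝓝[>] 0) (𝓝 (ψ s))) ∧
      MeasureTheory.LocallyIntegrableOn g I ∧
      (∀ s₁ ∈ I, ∀ s₂ ∈ I, s₁ < s₂ → ψ s₂ - ψ s₁ = ∫ s in s₁..s₂, g s) ∧
      ∀ᵐ s ∂(MeasureTheory.volume : MeasureTheory.Measure ℝ), s ∈ I →
        HasDerivAt ψ (g s) s ∧
        ∀ y₀ : ℝ,
          Filter.Tendsto (fun ε : ℝ => ∫ y in Set.Ioi (b s),
              Complex.exp (-(ε : ℂ) * (y - y₀) ^ 2) *
                (Complex.I * a' s * y ^ 2 * Complex.exp (Complex.I * a s * y ^ 2) * f s y +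
                  Complex.exp (Complex.I * a s * y ^ 2) * f' s y))
            (𝓝[>] 0)
            (𝓝 (g s + b' s * Complex.exp (Complex.I * a s * (b s) ^ 2) * f s (b s))) := by
  have hloc (p : ℝ) (hp : p ∈ I) (q : ℝ) (hq : q ∈ I) :
      ∃ a₀ B C, IsLeibnizFamily (uIcc p q) b₀ B a₀ (n + α) C n a a' b b' f f' :=
    exists_isLeibnizFamily hIc hb₀ hα hn (isPrimitiveOn_of_locallyIntegrableOn hIc haAC.1 haAC.2)
      hane (isPrimitiveOn_of_locallyIntegrableOn hIc hbAC.1 hbAC.2) hbge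
      (fun y hy ↦ isPrimitiveOn_of_locallyIntegrableOn hIc (hfAC y hy).1 (hfAC y hy).2)
      ((ae_restrict_iff' hIo.measurableSet).2 hreg) hbd1 hbd2 hp hq
  have hprim := isPrimitiveOn_leibnizIntegral hloc
  refine ⟨leibnizIntegral a b f, leibnizDeriv a a' b b' f f', fun s hs y₀ ↦ ?_,
    hprim.locallyIntegrableOn hIo, fun r hr s hs _ ↦ hprim.sub_eq hr hs, ?_⟩
  · exact (hasGaussIntegral_leibnizIntegral hIo hloc hs y₀).congr fun ε ↦ by
      simp only [gaussIntegral, gauss, fresnel, mul_assoc]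
  · filter_upwards [ae_hasDerivAt_leibnizIntegral hloc] with s hs hsI
    refine ⟨(hs hsI).1, fun y₀ ↦ ?_⟩
    rw [mul_assoc (b' s : ℂ)]
    exact ((hs hsI).2 y₀).congr fun ε ↦ by
      simp only [gaussIntegral, fresnel_mul_derivAmplitude]
      rfl
end
end
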